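/- arXiv:0809.2918 — 4 statements merged into one kernel-verified Lean document; each statement's English description precedes it below -/
import Mathlib

section
/- Let F be an algebraically closed field and suppose q = 1, r ≥ 2, n ≥ 1, and Q_1 = Q_2 = ⋯ = Q_r = 1. Then the Ariki–Koike algebra H_{n,r}(1, 1, …, 1) is of finite representation type if and only if n = 1. -/
/-!
For `q = Q₁ = ⋯ = Q_r = 1` the algebra `H` is the wreath product of `F[x]/(x ^ r)` with `S_n`, where
`x₀ = T₀ - 1` and `x_i = T_i x_{i-1} T_i`.

If `n = 1`, then `H` is the quotient `F[X]/((X - 1) ^ r)` of a principal ideal domain, and by the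
structure theorem every finite indecomposable module is `F[X]/((X - 1) ^ k)` with `k ≤ r`
(`finiteRepType_of_surjective`).

If `n ≥ 2`, consider for `lam ∈ F` the module `N_lam = U ⊕ W` (`AKMod`), where `U = W = Fⁿ` are
permutation modules for `S_n`, every `x_i` kills `W`, and `x_i : U → W` is diagonal with entry `lam`
at `i` and `1` elsewhere. All products `x_i x_j` act by zero, so this is a module as soon as
`r ≥ 2`. The element `x₁ - c x₀` acts from `U` to `W` by the diagonal matrix
`(1 - c lam, lam - c, 1 - c, …, 1 - c)`. For `lam ∉ {0, 1, -1}` and `c = lam⁻¹`, its kernel in `U` is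
the line spanned by the first basis vector, and any vector whose `U`-part is nonzero on that line
generates `N_lam` (`AKMod.eq_top_of_mem`). Hence `N_lam` is cyclic, and it is indecomposable
(`AKMod.indecomposable`), since in a direct sum decomposition one of the two components of that basis
vector is such a generator. The same diagonal matrices show that `N_lam ≅ N_mu` only if
`lam = mu` or `lam = mu⁻¹` (`AKMod.eq_or_eq_inv`), and as `F` is infinite there are infinitely many
isomorphism classes of indecomposables.
-/


open scoped TensorProduct

/-- A module is indecomposable if it is nonzero and is not the direct sum of two
nonzero submodules. -/
def IsIndecomposableModule (A : Type*) (N : Type*) [Ring A] [AddCommGroup N]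
    [Module A N] : Prop :=
  Nontrivial N ∧ ∀ P Q : Submodule A N, IsCompl P Q → P = ⊥ ∨ Q = ⊥

/-- A ring `A` is of finite representation type if there are only finitely many
isomorphism classes of finitely generated (equivalently, for a finite dimensional
algebra, finite dimensional) indecomposable right `A`-modules; right `A`-modules are
realized as left modules over `Aᵐᵒᵖ`. -/
def FiniteRepType (A : Type) [Ring A] : Prop :=
  ∃ (k : ℕ) (M : Fin k → ModuleCat.{0} Aᵐᵒᵖ),
    ∀ (N : Type) [AddCommGroup N] [Module Aᵐᵒᵖ N],
      Module.Finite Aᵐᵒᵖ N → IsIndecomposableModule Aᵐᵒᵖ N →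
        ∃ i, Nonempty (N ≃ₗ[Aᵐᵒᵖ] M i)

/-- The defining relations of the Ariki-Koike algebra `H_{n,r}(q, Q_1, ..., Q_r)`,
as a relation on the free algebra on generators `T_0, ..., T_{n-1}`. -/
inductive AKRel (F : Type) [Field F] (n r : ℕ) (q : F) (Q : Fin r → F) :
    FreeAlgebra F (Fin n) → FreeAlgebra F (Fin n) → Prop
  | cyclotomic (h : 0 < n) :
      AKRel F n r q Q
        (((List.finRange r).map (fun j =>
          FreeAlgebra.ι F (⟨0, h⟩ : Fin n)
            - algebraMap F (FreeAlgebra F (Fin n)) (Q j))).prod) 0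
  | braid01 (h : 1 < n) :
      AKRel F n r q Q
        (FreeAlgebra.ι F (⟨0, by omega⟩ : Fin n) * FreeAlgebra.ι F (⟨1, h⟩ : Fin n) *
          FreeAlgebra.ι F (⟨0, by omega⟩ : Fin n) * FreeAlgebra.ι F (⟨1, h⟩ : Fin n))
        (FreeAlgebra.ι F (⟨1, h⟩ : Fin n) * FreeAlgebra.ι F (⟨0, by omega⟩ : Fin n) *
          FreeAlgebra.ι F (⟨1, h⟩ : Fin n) * FreeAlgebra.ι F (⟨0, by omega⟩ : Fin n))
  | quadratic (i : ℕ) (h1 : 1 ≤ i) (h2 : i < n) :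
      AKRel F n r q Q
        ((FreeAlgebra.ι F (⟨i, h2⟩ : Fin n) + 1) *
          (FreeAlgebra.ι F (⟨i, h2⟩ : Fin n) - algebraMap F (FreeAlgebra F (Fin n)) q)) 0
  | braid (i : ℕ) (h1 : 1 ≤ i) (h2 : i + 1 < n) :
      AKRel F n r q Q
        (FreeAlgebra.ι F (⟨i, by omega⟩ : Fin n) * FreeAlgebra.ι F (⟨i + 1, h2⟩ : Fin n) *
          FreeAlgebra.ι F (⟨i, by omega⟩ : Fin n))
        (FreeAlgebra.ι F (⟨i + 1, h2⟩ : Fin n) * FreeAlgebra.ι F (⟨i, by omega⟩ : Fin n) *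
          FreeAlgebra.ι F (⟨i + 1, h2⟩ : Fin n))
  | comm (i j : ℕ) (hij : i + 2 ≤ j) (hj : j < n) :
      AKRel F n r q Q
        (FreeAlgebra.ι F (⟨i, by omega⟩ : Fin n) * FreeAlgebra.ι F (⟨j, hj⟩ : Fin n))
        (FreeAlgebra.ι F (⟨j, hj⟩ : Fin n) * FreeAlgebra.ι F (⟨i, by omega⟩ : Fin n))

/-- The Ariki-Koike algebra `H_{n,r}(q, Q_1, ..., Q_r)`: the quotient of the free
`F`-algebra on `T_0, ..., T_{n-1}` by the two-sided ideal generated by the defining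
relations. -/
abbrev ArikiKoike (F : Type) [Field F] (n r : ℕ) (q : F) (Q : Fin r → F) : Type :=
  RingQuot (AKRel F n r q Q)

/-- The extension of the nondecreasing rearrangement `f'_1 ≤ ... ≤ f'_r` (0-indexed)
by `f'_{r+i} = e + f'_i`. -/
noncomputable def extSeq (e r : ℕ) (f' : Fin r → ℕ) (i : ℕ) : ℕ :=
  if hr : 0 < r then e * (i / r) + f' ⟨i % r, Nat.mod_lt i hr⟩ else 0

/-- `f^{+1}(Q_1, ..., Q_r) = min { f'_{i+1} - f'_i | 1 ≤ i ≤ r }` (0-indexed here). -/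
noncomputable def fPlusOne (e r : ℕ) (f' : Fin r → ℕ) : ℕ :=
  sInf {d | ∃ i < r, d = extSeq e r f' (i + 1) - extSeq e r f' i}

/-- `f^{+2}(Q_1, ..., Q_r) = min { f'_{i+2} - f'_i | 1 ≤ i ≤ r }` (0-indexed here). -/
noncomputable def fPlusTwo (e r : ℕ) (f' : Fin r → ℕ) : ℕ :=
  sInf {d | ∃ i < r, d = extSeq e r f' (i + 2) - extSeq e r f' i}

/-- `g(Q_1, ..., Q_r) = min { g'_i + g'_j | 1 ≤ i ≠ j ≤ r }` where
`g'_i = f'_{i+1} - f'_i` (0-indexed here). -/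
noncomputable def gMin (e r : ℕ) (f' : Fin r → ℕ) : ℕ :=
  sInf {d | ∃ i < r, ∃ j < r, i ≠ j ∧
    d = (extSeq e r f' (i + 1) - extSeq e r f' i)
      + (extSeq e r f' (j + 1) - extSeq e r f' j)}

/-! ### The modules `N_lam` -/

/-- The underlying space `U ⊕ W` of the module `N_lam`, with `U = W = Fⁿ`. It is a type synonym
recording the parameter `lam`, on which only the module structure depends. -/
def AKMod (F : Type) (n : ℕ) (_lam : F) : Type := (Fin n → F) × (Fin n → F)

namespace AKMod

variable {F : Type} [Field F] {n : ℕ} {lam : F}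

instance : AddCommGroup (AKMod F n lam) :=
  inferInstanceAs (AddCommGroup ((Fin n → F) × (Fin n → F)))

instance : Module F (AKMod F n lam) :=
  inferInstanceAs (Module F ((Fin n → F) × (Fin n → F)))

/-- The diagonal entries of the action of `x₀`: `lam` at index `0`, and `1` elsewhere. -/
def wt (lam : F) (j : Fin n) : F := if j.val = 0 then lam else 1

/-- The action of `x₀ = T₀ - 1`: it maps `U` diagonally to `W` and kills `W`. -/
def opX (lam : F) : Module.End F (AKMod F n lam) where
  toFun v := (0, fun j => wt lam j * v.1 j)
  map_add' a b := by
    refine Prod.ext ?_ ?_ <;> funext j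
    · exact (add_zero (0 : F)).symm
    · exact mul_add _ _ _
  map_smul' c a := by
    refine Prod.ext ?_ ?_ <;> funext j
    · exact (mul_zero c).symm
    · exact mul_left_comm _ _ _

/-- The action of a permutation of the coordinates, on `U` and `W` simultaneously. -/
def opS (lam : F) (s : Equiv.Perm (Fin n)) : Module.End F (AKMod F n lam) where
  toFun v := (v.1 ∘ s, v.2 ∘ s)
  map_add' _ _ := rfl
  map_smul' _ _ := rfl

/-- The transposition of the coordinates `i - 1` and `i`. -/
def tr (i : Fin n) : Equiv.Perm (Fin n) := Equiv.swap ⟨i.val - 1, by omega⟩ i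

/-- The action of the generator `T_i`. -/
noncomputable def opT (lam : F) (i : Fin n) : Module.End F (AKMod F n lam) :=
  if i.val = 0 then 1 + opX lam else opS lam (tr i)

lemma opS_mul (s t : Equiv.Perm (Fin n)) : opS lam s * opS lam t = opS lam (t * s) := rfl

lemma opS_one : opS lam (1 : Equiv.Perm (Fin n)) = 1 := rfl

lemma opX_mul_opX : (opX lam : Module.End F (AKMod F n lam)) * opX lam = 0 := by
  refine LinearMap.ext fun v => Prod.ext rfl (funext fun j => mul_zero _)

lemma opX_mul_opS_mul_opX (s : Equiv.Perm (Fin n)) :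
    (opX lam : Module.End F (AKMod F n lam)) * opS lam s * opX lam = 0 := by
  refine LinearMap.ext fun v => Prod.ext rfl (funext fun j => mul_zero _)

lemma opX_mul_opS_comm (s : Equiv.Perm (Fin n)) (hs : ∀ j, (s j).val = 0 ↔ j.val = 0) :
    (opX lam : Module.End F (AKMod F n lam)) * opS lam s = opS lam s * opX lam := by
  refine LinearMap.ext fun v => Prod.ext rfl (funext fun j => ?_)
  change wt lam j * v.1 (s j) = wt lam (s j) * v.1 (s j)
  simp [wt, hs]

lemma tr_mul_tr (i : Fin n) : tr i * tr i = 1 := Equiv.swap_mul_self _ _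

/-- The defining relations hold for the operators `opT`, with the order of the products reversed
since right modules are wanted. -/
lemma rel_opT {r : ℕ} (hr : 2 ≤ r) (lam : F) {x y : FreeAlgebra F (Fin n)}
    (h : AKRel F n r (1 : F) (fun _ => (1 : F)) x y) :
    FreeAlgebra.lift F (fun i => MulOpposite.op (opT lam i)) x =
      FreeAlgebra.lift F (fun i => MulOpposite.op (opT lam i)) y := by
  cases h with
  | cyclotomic h =>
    simp only [map_one, List.map_const', List.length_finRange, List.prod_replicate, map_pow,
      map_sub, FreeAlgebra.lift_ι_apply, map_zero]
    have : MulOpposite.op (opT lam (⟨0, h⟩ : Fin n)) - 1 = MulOpposite.op (opX lam) := by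
      apply MulOpposite.unop_injective
      simp [opT]
    rw [this, ← MulOpposite.op_pow, pow_eq_zero_of_le hr (by rw [sq, opX_mul_opX]),
      MulOpposite.op_zero]
  | braid01 h =>
    simp only [map_mul, FreeAlgebra.lift_ι_apply, ← MulOpposite.op_mul, opT, if_true,
      one_ne_zero, if_false]
    congr 1
    set t : Equiv.Perm (Fin n) := tr ⟨1, h⟩
    have h1 : opS lam t * opS lam t = 1 := by rw [opS_mul, tr_mul_tr, opS_one]
    have h2 := opX_mul_opS_mul_opX (lam := lam) t
    simp only [mul_add, add_mul, mul_one, one_mul, ← mul_assoc, h1, h2, zero_mul]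
    rw [mul_assoc _ (opX lam) (opS lam t), mul_zero]
    abel
  | quadratic i h1 h2 =>
    simp only [map_mul, map_add, map_sub, map_one, FreeAlgebra.lift_ι_apply, map_zero]
    apply MulOpposite.unop_injective
    have h3 : opS lam (tr ⟨i, h2⟩) * opS lam (tr ⟨i, h2⟩) = 1 := by
      rw [opS_mul, tr_mul_tr, opS_one]
    simp [opT, show i ≠ 0 by omega, mul_add, sub_mul, h3]
  | braid i h1 h2 =>
    simp only [map_mul, FreeAlgebra.lift_ι_apply, ← MulOpposite.op_mul, opT,
      show i ≠ 0 by omega, Nat.succ_ne_zero, if_false, opS_mul]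
    congr 2
    ext j
    simp only [tr, Equiv.Perm.mul_apply, Equiv.swap_apply_def, Fin.ext_iff]
    grind
  | comm i j hij hj =>
    simp only [map_mul, FreeAlgebra.lift_ι_apply, ← MulOpposite.op_mul]
    congr 1
    by_cases hi : i = 0
    · simp only [opT, hi, show j ≠ 0 by omega, if_true, if_false, mul_add, add_mul, mul_one,
        one_mul]
      rw [opX_mul_opS_comm]
      intro k
      simp only [tr, Equiv.swap_apply_def, Fin.ext_iff]
      grind
    · simp only [opT, hi, show j ≠ 0 by omega, if_false, opS_mul]
      congr 1
      ext k
      simp only [tr, Equiv.Perm.mul_apply, Equiv.swap_apply_def, Fin.ext_iff]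
      grind

/-- The representation of the Ariki-Koike algebra on `N_lam`. -/
noncomputable def rep {r : ℕ} (hr : 2 ≤ r) (lam : F) :
    ArikiKoike F n r (1 : F) (fun _ => (1 : F)) →ₐ[F] (Module.End F (AKMod F n lam))ᵐᵒᵖ :=
  RingQuot.liftAlgHom F ⟨FreeAlgebra.lift F (fun i => MulOpposite.op (opT lam i)),
    fun _ _ h => rel_opT hr lam h⟩

/-- `N_lam` as a right module. -/
noncomputable instance rightModule {r : ℕ} [hr : Fact (2 ≤ r)] :
    Module (ArikiKoike F n r (1 : F) (fun _ => (1 : F)))ᵐᵒᵖ (AKMod F n lam) :=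
  Module.compHom _ (AlgHom.opComm (rep hr.out lam)).toRingHom

end AKMod

/-! ### Indecomposability and isomorphism classes of the modules `N_lam` -/

namespace AKMod

variable {F : Type} [Field F] {n : ℕ} {lam mu : F}

/-- The generator `T_i`, as an element of the opposite algebra. -/
noncomputable def gen (F : Type) [Field F] (r : ℕ) (i : Fin n) :
    (ArikiKoike F n r (1 : F) (fun _ => (1 : F)))ᵐᵒᵖ :=
  MulOpposite.op (RingQuot.mkAlgHom F _ (FreeAlgebra.ι F i))

section
variable {r : ℕ} [hr : Fact (2 ≤ r)]

lemma smul_def (a : (ArikiKoike F n r (1 : F) (fun _ => (1 : F)))ᵐᵒᵖ) (v : AKMod F n lam) :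
    a • v = (rep hr.out lam a.unop).unop v := rfl

lemma gen_smul (i : Fin n) (v : AKMod F n lam) : gen F r i • v = opT lam i v := by
  rw [smul_def, gen, MulOpposite.unop_op, rep, RingQuot.liftAlgHom_mkAlgHom_apply,
    FreeAlgebra.lift_ι_apply, MulOpposite.unop_op]

lemma algebraMap_smul' (c : F) (v : AKMod F n lam) :
    (algebraMap F (ArikiKoike F n r (1 : F) (fun _ => (1 : F)))ᵐᵒᵖ c) • v = c • v := by
  rw [smul_def, MulOpposite.algebraMap_apply, MulOpposite.unop_op, AlgHom.commutes]
  rfl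

lemma genX_smul (h : 0 < n) (v : AKMod F n lam) :
    (gen F r ⟨0, h⟩ - 1) • v = opX lam v := by
  rw [sub_smul, gen_smul, one_smul]
  simp [opT]

lemma genS_smul (i : Fin n) (h : i.val ≠ 0) (v : AKMod F n lam) :
    gen F r i • v = opS lam (tr i) v := by
  rw [gen_smul, opT, if_neg h]

/-- The action of `x₁ - c x₀`, where `x₁ = T₁ x₀ T₁`. -/
noncomputable def opK (lam : F) (h : 1 < n) (c : F) : Module.End F (AKMod F n lam) :=
  opS lam (tr ⟨1, h⟩) * opX lam * opS lam (tr ⟨1, h⟩) - c • opX lam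

/-- The element `x₁ - c x₀` of the (opposite) algebra. -/
noncomputable def elK (r : ℕ) (h : 1 < n) (c : F) :
    (ArikiKoike F n r (1 : F) (fun _ => (1 : F)))ᵐᵒᵖ :=
  gen F r ⟨1, h⟩ * (gen F r ⟨0, by omega⟩ - 1) * gen F r ⟨1, h⟩ -
    algebraMap F _ c * (gen F r ⟨0, by omega⟩ - 1)

lemma elK_smul (h : 1 < n) (c : F) (v : AKMod F n lam) :
    elK r h c • v = opK lam h c v := by
  rw [elK, sub_smul, mul_smul, mul_smul, mul_smul, algebraMap_smul', genX_smul, genX_smul,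
    genS_smul _ (by simp), genS_smul _ (by simp)]
  rfl

end

lemma opK_apply_fst (h : 1 < n) (c : F) (v : AKMod F n lam) : (opK lam h c v).1 = 0 := by
  have : (opK lam h c v).1 = 0 - c • (0 : Fin n → F) := rfl
  simpa using this

lemma opK_apply_snd (h : 1 < n) (c : F) (v : AKMod F n lam) (j : Fin n) :
    (opK lam h c v).2 j = (wt lam (tr ⟨1, h⟩ j) - c * wt lam j) * v.1 j := by
  have e : tr ⟨1, h⟩ (tr ⟨1, h⟩ j) = j := by
    rw [← Equiv.Perm.mul_apply, tr_mul_tr, Equiv.Perm.one_apply]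
  have : (opK lam h c v).2 j =
    wt lam (tr ⟨1, h⟩ j) * v.1 (tr ⟨1, h⟩ (tr ⟨1, h⟩ j)) - c * (wt lam j * v.1 j) := rfl
  rw [this, e]
  ring

lemma wt_tr_zero (h : 1 < n) : wt lam (tr ⟨1, h⟩ ⟨0, by omega⟩) = 1 := by
  simp [tr, wt]

lemma wt_tr_one (h : 1 < n) : wt lam (tr ⟨1, h⟩ ⟨1, h⟩) = lam := by
  simp [tr, wt]

lemma wt_tr_of_two_le (h : 1 < n) (j : Fin n) (hj : 2 ≤ j.val) :
    wt lam (tr ⟨1, h⟩ j) = 1 := by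
  rw [tr, Equiv.swap_apply_of_ne_of_ne, wt, if_neg (by omega)]
  · intro e; simp [Fin.ext_iff] at e; omega
  · intro e; simp [Fin.ext_iff] at e; omega

/-- Elements killed by `x₁ - c x₀`: the coordinates of their `U`-part vanish at every `j` for which
the diagonal entry of `x₁ - c x₀` is nonzero. -/
lemma coord_of_opK_eq_zero (h : 1 < n) {c : F} {v : AKMod F n lam} (hv : opK lam h c v = 0)
    (j : Fin n) : (wt lam (tr ⟨1, h⟩ j) - c * wt lam j) * v.1 j = 0 := by
  rw [← opK_apply_snd, hv]; rfl

lemma eq_single_of_opK_eq_zero (h : 1 < n) (h0 : lam ≠ 0) (h1 : lam ^ 2 ≠ 1)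
    {v : AKMod F n lam} (hv : opK lam h lam⁻¹ v = 0) (j : Fin n) (hj : j.val ≠ 0) :
    v.1 j = 0 := by
  have key := coord_of_opK_eq_zero h hv j
  refine (mul_eq_zero.mp key).resolve_left ?_
  by_cases hj1 : j.val = 1
  · obtain rfl : j = ⟨1, h⟩ := Fin.ext hj1
    rw [wt_tr_one, wt, if_neg hj, mul_one]
    intro e
    apply h1
    field_simp at e
    linear_combination e
  · rw [wt_tr_of_two_le h j (by omega), wt, if_neg hj, mul_one]
    intro e
    apply h1
    field_simp at e
    linear_combination (lam + 1) * e

/-- The `j`-th basis vector of `U`. -/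
def uvec (lam : F) (j : Fin n) : AKMod F n lam := (Pi.single j 1, 0)

/-- The `j`-th basis vector of `W`. -/
def wvec (lam : F) (j : Fin n) : AKMod F n lam := (0, Pi.single j 1)

lemma opK_uvec (h : 1 < n) (h0 : lam ≠ 0) :
    opK lam h lam⁻¹ (uvec lam ⟨0, by omega⟩) = 0 := by
  refine Prod.ext (opK_apply_fst _ _ _) (funext fun j => ?_)
  rw [opK_apply_snd]
  by_cases hj : j.val = 0
  · obtain rfl : j = ⟨0, Nat.zero_lt_of_lt h⟩ := Fin.ext hj
    rw [wt_tr_zero, wt, if_pos rfl, inv_mul_cancel₀ h0, sub_self, zero_mul]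
    rfl
  · have : (uvec lam ⟨0, by omega⟩ : AKMod F n lam).1 j = 0 :=
      Pi.single_eq_of_ne (fun e => hj (by rw [e])) _
    rw [this, mul_zero]
    rfl

lemma opX_eq (v : AKMod F n lam) (h : 0 < n) (hv : ∀ j : Fin n, j.val ≠ 0 → v.1 j = 0) :
    opX lam v = (v.1 ⟨0, h⟩ * lam) • wvec lam ⟨0, h⟩ := by
  refine Prod.ext (smul_zero (A := Fin n → F) (v.1 ⟨0, h⟩ * lam)).symm (funext fun j => ?_)
  change wt lam j * v.1 j = (v.1 ⟨0, h⟩ * lam) * (Pi.single ⟨0, h⟩ 1 : Fin n → F) j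
  by_cases hj : j.val = 0
  · obtain rfl : j = ⟨0, h⟩ := Fin.ext hj
    simp [wt, mul_comm]
  · rw [hv j hj, Pi.single_eq_of_ne (fun e => hj (by rw [e])) _]
    simp

lemma single_comp_tr (j : ℕ) (hj : j + 1 < n) :
    (Pi.single (⟨j, by omega⟩ : Fin n) (1 : F)) ∘ tr ⟨j + 1, hj⟩ =
      Pi.single (⟨j + 1, hj⟩ : Fin n) (1 : F) := by
  funext k
  simp only [Function.comp_apply, Pi.single_apply, tr, Equiv.swap_apply_def, Fin.ext_iff]
  grind

lemma opS_uvec (j : ℕ) (hj : j + 1 < n) :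
    opS lam (tr ⟨j + 1, hj⟩) (uvec lam ⟨j, by omega⟩) = uvec lam ⟨j + 1, hj⟩ :=
  Prod.ext (single_comp_tr j hj) rfl

lemma opS_wvec (j : ℕ) (hj : j + 1 < n) :
    opS lam (tr ⟨j + 1, hj⟩) (wvec lam ⟨j, by omega⟩) = wvec lam ⟨j + 1, hj⟩ :=
  Prod.ext rfl (single_comp_tr j hj)

lemma eq_sum (v : AKMod F n lam) :
    v = ∑ j, v.1 j • uvec lam j + ∑ j, v.2 j • wvec lam j := by
  have key : ∀ a : Fin n → F, ∑ j, a j • (Pi.single j (1 : F) : Fin n → F) = a := fun a => by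
    funext k
    simp [Finset.sum_apply, Pi.single_apply]
  have h1 : ∑ j, v.1 j • uvec lam j = LinearMap.inl F (Fin n → F) (Fin n → F) v.1 := by
    conv_rhs => rw [← key v.1, map_sum]
    exact Finset.sum_congr rfl fun j _ =>
      ((LinearMap.inl F (Fin n → F) (Fin n → F)).map_smul (v.1 j) (Pi.single j 1)).symm
  have h2 : ∑ j, v.2 j • wvec lam j = LinearMap.inr F (Fin n → F) (Fin n → F) v.2 := by
    conv_rhs => rw [← key v.2, map_sum]
    exact Finset.sum_congr rfl fun j _ =>
      ((LinearMap.inr F (Fin n → F) (Fin n → F)).map_smul (v.2 j) (Pi.single j 1)).symm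
  rw [h1, h2]
  exact Prod.ext (add_zero v.1).symm (zero_add v.2).symm

section
variable {r : ℕ} [hr : Fact (2 ≤ r)]

local notation "H" => ArikiKoike F n r (1 : F) (fun _ => (1 : F))

lemma smul_mem' (P : Submodule Hᵐᵒᵖ (AKMod F n lam)) (c : F) {v : AKMod F n lam} (hv : v ∈ P) :
    c • v ∈ P := by
  rw [← algebraMap_smul' (r := r)]
  exact P.smul_mem _ hv

/-- An element of `N_lam` whose `U`-part is a nonzero multiple of the first basis vector generates
`N_lam`. -/
lemma eq_top_of_mem (h : 1 < n) (h0 : lam ≠ 0) (P : Submodule Hᵐᵒᵖ (AKMod F n lam))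
    {v : AKMod F n lam} (hv : v ∈ P) (hv0 : v.1 ⟨0, by omega⟩ ≠ 0)
    (hvj : ∀ j : Fin n, j.val ≠ 0 → v.1 j = 0) : P = ⊤ := by
  have hw0 : wvec lam ⟨0, by omega⟩ ∈ P := by
    have := P.smul_mem (gen F r ⟨0, by omega⟩ - 1) hv
    rw [genX_smul, opX_eq v (by omega) hvj] at this
    have := smul_mem' P (v.1 ⟨0, by omega⟩ * lam)⁻¹ this
    rwa [smul_smul, inv_mul_cancel₀ (mul_ne_zero hv0 h0), one_smul] at this
  have hw : ∀ (j : ℕ) (hj : j < n), wvec lam ⟨j, hj⟩ ∈ P := by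
    intro j
    induction j with
    | zero => exact fun _ => hw0
    | succ j ih =>
      intro hj
      have := P.smul_mem (gen F r ⟨j + 1, hj⟩) (ih (by omega))
      rwa [genS_smul _ (by simp), opS_wvec] at this
  have hu0 : uvec lam ⟨0, by omega⟩ ∈ P := by
    have h1 : v - ∑ j, v.2 j • wvec lam j ∈ P :=
      P.sub_mem hv (P.sum_mem fun j _ => smul_mem' P _ (hw j.1 j.2))
    have h2 : v - ∑ j, v.2 j • wvec lam j = v.1 ⟨0, by omega⟩ • uvec lam ⟨0, by omega⟩ := by
      rw [sub_eq_iff_eq_add]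
      conv_lhs => rw [eq_sum v]
      congr 1
      refine Finset.sum_eq_single _ (fun j _ hj => ?_) (by simp)
      rw [hvj j (fun e => hj (Fin.ext e)), zero_smul]
    rw [h2] at h1
    have := smul_mem' P (v.1 ⟨0, by omega⟩)⁻¹ h1
    rwa [smul_smul, inv_mul_cancel₀ hv0, one_smul] at this
  have hu : ∀ (j : ℕ) (hj : j < n), uvec lam ⟨j, hj⟩ ∈ P := by
    intro j
    induction j with
    | zero => exact fun _ => hu0
    | succ j ih =>
      intro hj
      have := P.smul_mem (gen F r ⟨j + 1, hj⟩) (ih (by omega))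
      rwa [genS_smul _ (by simp), opS_uvec] at this
  refine eq_top_iff.mpr fun x _ => ?_
  rw [eq_sum x]
  exact P.add_mem (P.sum_mem fun j _ => smul_mem' P _ (hu j.1 j.2))
    (P.sum_mem fun j _ => smul_mem' P _ (hw j.1 j.2))

lemma finite (h : 1 < n) (h0 : lam ≠ 0) : Module.Finite Hᵐᵒᵖ (AKMod F n lam) := by
  refine ⟨⟨{uvec lam ⟨0, by omega⟩}, ?_⟩⟩
  refine eq_top_of_mem h h0 _ (v := uvec lam ⟨0, by omega⟩)
    (Submodule.subset_span (by simp)) ?_ ?_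
  · simp [uvec]
  · exact fun j hj => Pi.single_eq_of_ne (fun e => hj (by rw [e])) _

/-- If `N_lam = P ⊕ Q`, the components of the first basis vector of `U` in `P` and `Q` are both
killed by `x₁ - lam⁻¹ x₀`, and one of them has nonzero `U`-part, hence generates `N_lam`. -/
lemma indecomposable (h : 1 < n) (h0 : lam ≠ 0) (h1 : lam ^ 2 ≠ 1) :
    IsIndecomposableModule Hᵐᵒᵖ (AKMod F n lam) := by
  have hu : (uvec lam ⟨0, by omega⟩ : AKMod F n lam).1 ⟨0, by omega⟩ = 1 := by
    simp [uvec]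
  refine ⟨⟨uvec lam ⟨0, by omega⟩, 0, fun e => ?_⟩, fun P Q hPQ => ?_⟩
  · rw [e] at hu
    exact zero_ne_one hu
  obtain ⟨p, hp, q, hq, hpq⟩ := Submodule.mem_sup.mp
    (hPQ.sup_eq_top ▸ Submodule.mem_top :
      (uvec lam ⟨0, by omega⟩ : AKMod F n lam) ∈ P ⊔ Q)
  have hsum : elK r h lam⁻¹ • p + elK r h lam⁻¹ • q = 0 := by
    rw [← smul_add, hpq, elK_smul, opK_uvec h h0]
  have hKp : elK r h lam⁻¹ • p = 0 := by
    refine Submodule.disjoint_def.mp hPQ.disjoint _ (P.smul_mem _ hp) ?_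
    rw [eq_neg_of_add_eq_zero_left hsum]
    exact Q.neg_mem (Q.smul_mem _ hq)
  have hKq : elK r h lam⁻¹ • q = 0 := by rwa [hKp, zero_add] at hsum
  rw [elK_smul] at hKp hKq
  have hadd : p.1 ⟨0, by omega⟩ + q.1 ⟨0, by omega⟩ = 1 := by
    rw [← hu, ← hpq]; rfl
  by_cases hp0 : p.1 ⟨0, by omega⟩ = 0
  · left
    have hQ : Q = ⊤ := eq_top_of_mem h h0 Q hq
      (by rw [hp0, zero_add] at hadd; rw [hadd]; exact one_ne_zero)
      (eq_single_of_opK_eq_zero h h0 h1 hKq)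
    exact disjoint_top.mp (hQ ▸ hPQ.disjoint)
  · right
    have hP : P = ⊤ := eq_top_of_mem h h0 P hp hp0 (eq_single_of_opK_eq_zero h h0 h1 hKp)
    exact top_disjoint.mp (hP ▸ hPQ.disjoint)

/-- The parameter is determined up to inversion by the isomorphism class. -/
lemma eq_or_eq_inv (h : 1 < n) (hl0 : lam ≠ 0) (hl1 : lam ^ 2 ≠ 1)
    (e : AKMod F n lam ≃ₗ[Hᵐᵒᵖ] AKMod F n mu) : lam = mu ∨ lam = mu⁻¹ := by
  have hpos : 0 < n := Nat.zero_lt_of_lt h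
  let v : AKMod F n lam := uvec lam ⟨0, hpos⟩
  have hK : opK mu h lam⁻¹ (e v) = 0 := by
    rw [← elK_smul (r := r), ← map_smul, elK_smul, opK_uvec h hl0, map_zero]
  have hX : opX mu (e v) ≠ 0 := by
    intro h2
    rw [← genX_smul (r := r) (Nat.zero_lt_of_lt h), ← map_smul, genX_smul,
      EmbeddingLike.map_eq_zero_iff] at h2
    have h3 : (opX lam v).2 ⟨0, hpos⟩ = lam * 1 := by
      change wt lam ⟨0, hpos⟩ * (Pi.single ⟨0, hpos⟩ (1 : F) : Fin n → F) ⟨0, hpos⟩ = _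
      simp [wt]
    rw [h2, mul_one] at h3
    exact hl0 h3.symm
  have : ∃ j, (e v).1 j ≠ 0 := by
    by_contra! h2
    exact hX (Prod.ext rfl (funext fun j => by
      change wt mu j * (e v).1 j = 0
      rw [h2, mul_zero]))
  obtain ⟨j, hj⟩ := this
  have key := (mul_eq_zero.mp (coord_of_opK_eq_zero h hK j)).resolve_right hj
  by_cases hj0 : j.val = 0
  · obtain rfl : j = ⟨0, Nat.zero_lt_of_lt h⟩ := Fin.ext hj0
    rw [wt_tr_zero, wt, if_pos rfl] at key
    left
    field_simp at key
    linear_combination key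
  by_cases hj1 : j.val = 1
  · obtain rfl : j = ⟨1, h⟩ := Fin.ext hj1
    rw [wt_tr_one, wt, if_neg hj0, mul_one] at key
    right
    rw [sub_eq_zero.mp key, inv_inv]
  · rw [wt_tr_of_two_le h j (by omega), wt, if_neg hj0, mul_one] at key
    exfalso
    apply hl1
    field_simp at key
    linear_combination (lam + 1) * key

end

lemma not_finiteRepType [IsAlgClosed F] {r : ℕ} (hr : 2 ≤ r) (h : 1 < n) :
    ¬ FiniteRepType (ArikiKoike F n r (1 : F) (fun _ => (1 : F))) := by
  have : Fact (2 ≤ r) := ⟨hr⟩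
  have : Infinite F := IsAlgClosed.instInfinite
  rintro ⟨k, M, hM⟩
  let S : Set F := {0, 1, -1}ᶜ
  have hS : S.Infinite := (Set.toFinite _).infinite_compl
  have : Infinite S := hS.to_subtype
  have hS0 : ∀ s : S, (s : F) ≠ 0 := fun s e => s.2 (by simp [e])
  have hS1 : ∀ s : S, (s : F) ^ 2 ≠ 1 := fun s e => s.2 (by
    rcases eq_or_eq_neg_of_sq_eq_sq _ 1 (e.trans (one_pow 2).symm) with e | e <;> simp [e])
  choose f hf using fun s : S =>
    hM (AKMod F n (s : F)) (finite h (hS0 s)) (indecomposable h (hS0 s) (hS1 s))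
  obtain ⟨i, hi⟩ := Finite.exists_infinite_fiber f
  rw [Set.infinite_coe_iff] at hi
  obtain ⟨m, hm⟩ := hi.nonempty
  refine hi (((Set.toFinite {(m : F), (m : F)⁻¹}).preimage
    Subtype.val_injective.injOn).subset fun s hs => ?_)
  obtain ⟨e1⟩ := hf s
  obtain ⟨e2⟩ := hf m
  rw [Set.mem_preimage, Set.mem_singleton_iff] at hs hm
  rw [hs] at e1
  rw [hm] at e2
  exact eq_or_eq_inv h (hS0 s) (hS1 s) (e1.trans e2.symm)

end AKMod

/-! ### The case `n = 1` -/

section CaseOne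

open Polynomial DirectSum

/-- An indecomposable module is isomorphic to each of its nonzero retracts. -/
lemma IsIndecomposableModule.bijective_of_retract {R N C : Type*} [Ring R] [AddCommGroup N]
    [Module R N] [AddCommGroup C] [Module R C] [Nontrivial C] (hN : IsIndecomposableModule R N)
    (f : N →ₗ[R] C) (g : C →ₗ[R] N) (hfg : ∀ c, f (g c) = c) : Function.Bijective f := by
  have hc : IsCompl (LinearMap.ker f) (LinearMap.range g) := by
    refine ⟨Submodule.disjoint_def.mpr ?_, codisjoint_iff.mpr (eq_top_iff.mpr fun x _ => ?_)⟩
    · rintro _ hx ⟨c, rfl⟩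
      rw [LinearMap.mem_ker, hfg] at hx
      rw [hx, map_zero]
    · refine Submodule.mem_sup.mpr ⟨x - g (f x), ?_, g (f x), ⟨_, rfl⟩, sub_add_cancel _ _⟩
      rw [LinearMap.mem_ker, map_sub, hfg, sub_self]
  refine ⟨?_, fun c => ⟨g c, hfg c⟩⟩
  rcases hN.2 _ _ hc with h | h
  · exact LinearMap.ker_eq_bot.mp h
  · obtain ⟨c, hc⟩ := exists_ne (0 : C)
    exfalso
    apply hc
    have hg : g c ∈ (⊥ : Submodule R N) := h ▸ LinearMap.mem_range_self g c
    rw [← hfg c, (Submodule.mem_bot R).mp hg, map_zero]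

/-- Indecomposability does not change under restriction of scalars along a surjection. -/
lemma IsIndecomposableModule.of_surjective {R S N : Type*} [Ring R] [Ring S] [AddCommGroup N]
    [Module R N] [Module S N] (f : R →+* S) (hf : Function.Surjective f)
    (hs : ∀ (a : R) (x : N), a • x = f a • x) (hN : IsIndecomposableModule S N) :
    IsIndecomposableModule R N := by
  have : RingHomSurjective f := ⟨hf⟩
  let l : N →ₛₗ[f] N := { toFun := id, map_add' := fun _ _ => rfl, map_smul' := hs }
  let e := Submodule.orderIsoMapComapOfBijective l Function.bijective_id
  refine ⟨hN.1, fun P Q h => ?_⟩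
  have := hN.2 _ _ (e.isCompl h)
  simpa using this

/-- Over a principal ideal domain, an indecomposable finite module annihilated by `p ^ r` is
`R / (p ^ k)` for some `k ≤ r`. -/
lemma exists_equiv_quotient {R N : Type} [CommRing R] [IsDomain R] [IsPrincipalIdealRing R]
    [AddCommGroup N] [Module R N] [Module.Finite R N] {p : R} (hp : Irreducible p) (r : ℕ)
    (hr : ∀ x : N, p ^ r • x = 0) (hN : IsIndecomposableModule R N) :
    ∃ k : Fin (r + 1), Nonempty (N ≃ₗ[R] R ⧸ Submodule.span R {p ^ k.val}) := by
  classical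
  obtain ⟨d, k, ⟨e⟩⟩ := Module.torsion_by_prime_power_decomposition (R := R) (M := N) hp
    (fun {x} => ⟨⟨p ^ r, r, rfl⟩, hr x⟩)
  have : ∃ i, Nontrivial (R ⧸ Submodule.span R {p ^ k i}) := by
    by_contra! h
    have : Subsingleton (⨁ i : Fin d, R ⧸ Submodule.span R {p ^ k i}) :=
      ⟨fun a b => DFinsupp.ext fun i => (h i).elim _ _⟩
    have := hN.1
    exact not_subsingleton N e.toEquiv.subsingleton
  obtain ⟨i, hi⟩ := this
  have hb := hN.bijective_of_retract
    (DirectSum.component R (Fin d) _ i ∘ₗ e.toLinearMap)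
    (e.symm.toLinearMap ∘ₗ DirectSum.lof R (Fin d) (fun i => R ⧸ Submodule.span R {p ^ k i}) i)
    (fun c => by simp [DirectSum.component.lof_self])
  let E := LinearEquiv.ofBijective _ hb
  have hk : k i ≤ r := by
    have h1 : p ^ r • (Submodule.Quotient.mk 1 : R ⧸ Submodule.span R {p ^ k i}) = 0 := by
      rw [← E.apply_symm_apply (Submodule.Quotient.mk 1), ← map_smul, hr, map_zero]
    rw [← Submodule.Quotient.mk_smul, Submodule.Quotient.mk_eq_zero, smul_eq_mul, mul_one,
      Submodule.mem_span_singleton] at h1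
    obtain ⟨a, ha⟩ := h1
    exact (pow_dvd_pow_iff hp.ne_zero hp.not_isUnit).mp ⟨a, by rw [← ha, smul_eq_mul, mul_comm]⟩
  exact ⟨⟨k i, by omega⟩, ⟨E⟩⟩

/-- A ring whose opposite is a quotient of a principal ideal domain in which a power of a prime vanishes has
finite representation type. -/
lemma finiteRepType_of_surjective {A R : Type} [Ring A] [CommRing R] [IsDomain R]
    [IsPrincipalIdealRing R] (f : R →+* Aᵐᵒᵖ) (hf : Function.Surjective f) {p : R}
    (hp : Irreducible p) (r : ℕ) (hpr : f p ^ r = 0) : FiniteRepType A := by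
  classical
  -- The representative indexed by `k` is any module that becomes `R / (p ^ k)` over `R`.
  let good : Fin (r + 1) → ModuleCat.{0} Aᵐᵒᵖ → Prop := fun k M =>
    letI := Module.compHom M f
    Nonempty (M ≃ₗ[R] R ⧸ Submodule.span R {p ^ k.val})
  refine ⟨r + 1, fun k => if h : ∃ M, good k M then h.choose else ModuleCat.of _ PUnit, ?_⟩
  intro N _ _ hfin hN
  let _ := Module.compHom N f
  have hs : ∀ (a : R) (x : N), a • x = f a • x := fun _ _ => rfl
  have : RingHomSurjective f := ⟨hf⟩
  have hfin' : Module.Finite R N := by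
    obtain ⟨s, hsp⟩ := hfin.1
    refine ⟨s, eq_top_iff.mpr fun x _ => ?_⟩
    have hx : x ∈ Submodule.span Aᵐᵒᵖ (s : Set N) := hsp ▸ Submodule.mem_top
    induction hx using Submodule.span_induction with
    | mem y hy => exact Submodule.subset_span hy
    | zero => exact Submodule.zero_mem _
    | add y z _ _ h1 h2 => exact Submodule.add_mem _ (h1 trivial) (h2 trivial)
    | smul a y _ h1 =>
      obtain ⟨b, rfl⟩ := hf a
      exact Submodule.smul_mem _ b (h1 trivial)
  obtain ⟨k, ⟨e⟩⟩ := exists_equiv_quotient hp r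
    (fun x : N => by rw [hs, map_pow, hpr, zero_smul]) (hN.of_surjective f hf hs)
  have hgood : ∃ M, good k M := ⟨ModuleCat.of _ N, ⟨e⟩⟩
  refine ⟨k, ?_⟩
  beta_reduce
  rw [dif_pos hgood]
  let _ := Module.compHom hgood.choose f
  obtain ⟨e'⟩ := hgood.choose_spec
  let E := e.trans e'.symm
  exact ⟨{ E with
    map_smul' := fun a x => by
      obtain ⟨b, rfl⟩ := hf a
      exact E.map_smul b x }⟩

lemma finiteRepType_one (F : Type) [Field F] (r : ℕ) :
    FiniteRepType (ArikiKoike F 1 r (1 : F) (fun _ => (1 : F))) := by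
  let T : ArikiKoike F 1 r (1 : F) (fun _ => (1 : F)) :=
    RingQuot.mkAlgHom F _ (FreeAlgebra.ι F 0)
  have hT : (T - 1) ^ r = 0 := by
    have h := RingQuot.mkAlgHom_rel F
      (AKRel.cyclotomic (F := F) (n := 1) (r := r) (q := 1) (Q := fun _ => 1) one_pos)
    simpa using h
  refine finiteRepType_of_surjective (R := F[X]) (aeval (MulOpposite.op T)).toRingHom ?_
    (irreducible_X_sub_C (1 : F)) r ?_
  · intro a
    obtain ⟨b, hb⟩ := RingQuot.mkAlgHom_surjective F _ a.unop
    obtain rfl : a = MulOpposite.op (RingQuot.mkAlgHom F _ b) := by rw [hb, MulOpposite.op_unop]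
    clear hb
    induction b using FreeAlgebra.induction with
    | grade0 c => exact ⟨C c, by simp⟩
    | grade1 i =>
      obtain rfl : i = 0 := Subsingleton.elim _ _
      exact ⟨X, by simp [T]⟩
    | mul x y hx hy =>
      obtain ⟨p, hp⟩ := hx
      obtain ⟨q, hq⟩ := hy
      exact ⟨q * p, by rw [map_mul, hp, hq, map_mul, MulOpposite.op_mul]⟩
    | add x y hx hy =>
      obtain ⟨p, hp⟩ := hx
      obtain ⟨q, hq⟩ := hy
      exact ⟨p + q, by rw [map_add, hp, hq, map_add, MulOpposite.op_add]⟩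
  · have : (aeval (MulOpposite.op T)).toRingHom (X - C (1 : F)) = MulOpposite.op (T - 1) := by
      simp
    rw [this, ← MulOpposite.op_pow, hT, MulOpposite.op_zero]

end CaseOne

/-- If `q = 1`, `r ≥ 2`, `n ≥ 1` and `Q₁ = ⋯ = Q_r = 1`, then
`H_{n,r}(1, 1, ..., 1)` is of finite representation type iff `n = 1`. -/
theorem arikiKoike_finiteRepType_iff_q_one
    (F : Type) [Field F] [IsAlgClosed F] (n r : ℕ) (hn : 1 ≤ n) (hr : 2 ≤ r) :
    FiniteRepType (ArikiKoike F n r (1 : F) (fun _ => (1 : F))) ↔ n = 1 := by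
  refine ⟨fun h => ?_, fun h => ?_⟩
  · by_contra hn1
    exact AKMod.not_finiteRepType hr (by omega) h
  · subst h
    exact finiteRepType_one F r
end

section
/- Let F be an algebraically closed field, q, Q_1, …, Q_r ∈ F with q ≠ 0, and n ≥ 1. Let {i_1, …, i_k} be a subset of {1, …, r}. If the Ariki–Koike algebra H_{n,k}(q, Q_{i_1}, …, Q_{i_k}) is of infinite representation type, then the Ariki–Koike algebra H_{n,r}(q, Q_1, …, Q_r) is also of infinite representation type. -/
/-!
The restriction of scalars along a surjective ring homomorphism `A → B` is fully faithful and
keeps the lattice of submodules, so it sends nonisomorphic finitely generated indecomposable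
`B`-modules to nonisomorphic finitely generated indecomposable `A`-modules. Hence finite
representation type passes from `A` to `B` (`FiniteRepType.of_surjective`).

The algebra `H_{n,k}(q, Q_{i₁}, ..., Q_{i_k})` is a quotient of `H_{n,r}(q, Q₁, ..., Q_r)`
(`exists_arikiKoike_surjection`): both are generated by `T_0, ..., T_{n-1}`, all relations not
involving the parameters `Q` coincide, and `∏ j, (T_0 - Q_{i_j})` divides `∏ j, (T_0 - Q_j)`.
-/

open scoped TensorProduct

/-- A quotient of a ring of finite representation type is of finite representation type. -/
theorem FiniteRepType.of_surjective {A B : Type} [Ring A] [Ring B] (f : A →+* B)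
    (hf : Function.Surjective f) (hA : FiniteRepType A) : FiniteRepType B := by
  classical
  obtain ⟨k, M, hM⟩ := hA
  have hg : Function.Surjective f.op := fun b => by
    obtain ⟨a, ha⟩ := hf b.unop
    exact ⟨MulOpposite.op a, by simp [ha]⟩
  -- `P i N` says that the restriction of scalars of `N` along `f` is isomorphic to `M i`.
  let P : Fin k → ModuleCat.{0} Bᵐᵒᵖ → Prop := fun i N =>
    ∃ e : N ≃+ M i, ∀ (a : Aᵐᵒᵖ) (x : N), e (f.op a • x) = a • e x
  -- Where no such `N` exists, any value will do.
  refine ⟨k, fun i => if h : ∃ N, P i N then h.choose else ModuleCat.of _ PUnit, ?_⟩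
  intro N _ _ hfin hind
  let _ : Module Aᵐᵒᵖ N := Module.compHom N f.op
  have hfinA : Module.Finite Aᵐᵒᵖ N := by
    obtain ⟨s, hs⟩ := hfin.fg_top
    refine ⟨⟨s, eq_top_iff.2 fun x _ => ?_⟩⟩
    have hx : x ∈ Submodule.span Bᵐᵒᵖ (s : Set N) := hs ▸ Submodule.mem_top
    induction hx using Submodule.span_induction with
    | mem y hy => exact Submodule.subset_span hy
    | zero => exact Submodule.zero_mem _
    | add y z _ _ hy hz => exact Submodule.add_mem _ (hy trivial) (hz trivial)
    | smul b y _ hy =>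
      obtain ⟨a, rfl⟩ := hg b
      exact Submodule.smul_mem _ a (hy trivial)
  have hindA : IsIndecomposableModule Aᵐᵒᵖ N := by
    refine ⟨hind.1, fun U V hUV => ?_⟩
    -- By surjectivity of `f`, an `A`-submodule of `N` is a `B`-submodule.
    let up : Submodule Aᵐᵒᵖ N → Submodule Bᵐᵒᵖ N := fun W =>
      { W.toAddSubmonoid with
        smul_mem' := fun b x hx => by
          obtain ⟨a, rfl⟩ := hg b
          exact W.smul_mem a hx }
    have hbot : ∀ W, up W = ⊥ → W = ⊥ := fun W hW => by
      rw [Submodule.eq_bot_iff] at hW ⊢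
      exact hW
    have hc : IsCompl (up U) (up V) := by
      constructor
      · rw [Submodule.disjoint_def]
        intro x hxU hxV
        exact Submodule.disjoint_def.1 hUV.disjoint x hxU hxV
      · rw [codisjoint_iff, Submodule.eq_top_iff']
        intro x
        have hx : x ∈ U ⊔ V := hUV.sup_eq_top ▸ Submodule.mem_top
        obtain ⟨y, hy, z, hz, rfl⟩ := Submodule.mem_sup.1 hx
        exact Submodule.mem_sup.2 ⟨y, hy, z, hz, rfl⟩
    exact (hind.2 _ _ hc).imp (hbot U) (hbot V)
  obtain ⟨i, ⟨e⟩⟩ := hM N hfinA hindA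
  have hP : ∃ N, P i N := ⟨ModuleCat.of _ N, e.toAddEquiv, fun a x => e.map_smul a x⟩
  refine ⟨i, ?_⟩
  beta_reduce
  rw [dif_pos hP]
  obtain ⟨e', he'⟩ := hP.choose_spec
  refine ⟨{ e.toAddEquiv.trans e'.symm with map_smul' := fun b x => ?_ }⟩
  obtain ⟨a, rfl⟩ := hg b
  change e'.symm (e (a • x)) = f.op a • e'.symm (e x)
  rw [AddEquiv.symm_apply_eq, he', AddEquiv.apply_symm_apply, e.map_smul]

/-- If `k` of the parameters already annihilate `t`, then so do all `r` of them. -/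
theorem prod_sub_eq_zero_of_subset {F R : Type} [Field F] [Ring R] [Algebra F R] {r k : ℕ}
    (Q : Fin r → F) (ι : Fin k → Fin r) (hι : Function.Injective ι) (t : R)
    (h : ((List.finRange k).map fun j => t - algebraMap F R (Q (ι j))).prod = 0) :
    ((List.finRange r).map fun j => t - algebraMap F R (Q j)).prod = 0 := by
  classical
  -- Both products are values at `t` of polynomials, for which divisibility is commutative algebra.
  have key : ∀ (m : ℕ) (c : Fin m → F),
      ((List.finRange m).map fun j => t - algebraMap F R (c j)).prod
        = Polynomial.aeval t (∏ j, (Polynomial.X - Polynomial.C (c j))) := by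
    intro m c
    rw [← List.prod_ofFn, map_list_prod, List.ofFn_eq_map, List.map_map]
    congr 2
    funext j
    simp
  rw [key r Q]
  rw [key k (fun j => Q (ι j))] at h
  have hdvd : (∏ j, (Polynomial.X - Polynomial.C (Q (ι j))))
      ∣ ∏ j, (Polynomial.X - Polynomial.C (Q j)) := by
    rw [← Finset.prod_image (s := Finset.univ) (g := ι)
      (f := fun j => Polynomial.X - Polynomial.C (Q j)) hι.injOn]
    exact Finset.prod_dvd_prod_of_subset _ _ _ (Finset.subset_univ _)
  obtain ⟨p, hp⟩ := hdvd
  rw [hp, map_mul, h, zero_mul]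

/-- `T_i ↦ T_i` defines a surjection onto the algebra with fewer cyclotomic parameters. -/
theorem exists_arikiKoike_surjection (F : Type) [Field F] (n r k : ℕ) (q : F) (Q : Fin r → F)
    (ι : Fin k → Fin r) (hι : Function.Injective ι) :
    ∃ f : ArikiKoike F n r q Q →ₐ[F] ArikiKoike F n k q (Q ∘ ι), Function.Surjective f := by
  let π := RingQuot.mkAlgHom F (AKRel F n k q (Q ∘ ι))
  have hrel : ∀ ⦃x y⦄, AKRel F n r q Q x y → π x = π y := by
    intro x y hxy
    cases hxy with
    | cyclotomic h =>
      have h0 := RingQuot.mkAlgHom_rel F (AKRel.cyclotomic (q := q) (Q := Q ∘ ι) h)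
      change π _ = π _ at h0
      rw [map_list_prod, List.map_map, map_zero] at h0 ⊢
      have hcomp : ∀ (m : ℕ) (c : Fin m → F),
          (π ∘ fun j => FreeAlgebra.ι F (⟨0, h⟩ : Fin n)
            - algebraMap F (FreeAlgebra F (Fin n)) (c j))
          = fun j => π (FreeAlgebra.ι F (⟨0, h⟩ : Fin n)) - algebraMap F _ (c j) := by
        intro m c
        funext j
        simp
      rw [hcomp] at h0 ⊢
      exact prod_sub_eq_zero_of_subset Q ι hι _ h0
    | braid01 h => exact RingQuot.mkAlgHom_rel F (AKRel.braid01 h)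
    | quadratic i h1 h2 => exact RingQuot.mkAlgHom_rel F (AKRel.quadratic i h1 h2)
    | braid i h1 h2 => exact RingQuot.mkAlgHom_rel F (AKRel.braid i h1 h2)
    | comm i j hij hj => exact RingQuot.mkAlgHom_rel F (AKRel.comm i j hij hj)
  refine ⟨RingQuot.liftAlgHom F ⟨π, hrel⟩, fun b => ?_⟩
  obtain ⟨x, rfl⟩ := RingQuot.mkAlgHom_surjective F (AKRel F n k q (Q ∘ ι)) b
  exact ⟨RingQuot.mkAlgHom F _ x, RingQuot.liftAlgHom_mkAlgHom_apply F _ _ _⟩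

/-- If for a subset `{i₁, ..., i_k} ⊆ {1, ..., r}` (given by an
injection `ι : Fin k → Fin r`) the algebra `H_{n,k}(q, Q_{i₁}, ..., Q_{i_k})` is of
infinite representation type, then so is `H_{n,r}(q, Q₁, ..., Q_r)`. -/
theorem arikiKoike_infinite_of_subset_infinite
    (F : Type) [Field F] [IsAlgClosed F] (n r k : ℕ) (hn : 1 ≤ n)
    (q : F) (hq : q ≠ 0) (Q : Fin r → F)
    (ι : Fin k → Fin r) (hι : Function.Injective ι)
    (h : ¬ FiniteRepType (ArikiKoike F n k q (Q ∘ ι))) :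
    ¬ FiniteRepType (ArikiKoike F n r q Q) := by
  obtain ⟨f, hf⟩ := exists_arikiKoike_surjection F n r k q Q ι hι
  exact fun hfin => h (hfin.of_surjective f.toRingHom hf)
end

section
/- Let F be an algebraically closed field and assume condition (CP) holds with r = 4. If n < min{ 2·f^{+1}(Q_1,…,Q_4) + 4, f^{+2}(Q_1,…,Q_4) + 1 } and n ≥ g(Q_1,…,Q_4) + 2, then the Ariki–Koike algebra H_{n,4}(q, Q_1, Q_2, Q_3, Q_4) is of infinite representation type. -/
/-!
A one-parameter family of pairwise nonisomorphic indecomposable modules is constructed; as an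
algebraically closed field is infinite, this excludes finite representation type.

Let `F[ε]` be the dual numbers. Given variables `x_1, …, x_n` in `F[ε]` with distinct constant
terms, the affine Hecke algebra acts on functions from the set of orderings of the `n` labels to
`F[ε]`: the Jucys–Murphy element `L_k` multiplies the value at an ordering by the variable of the
`k`-th label, and the generators `T_i` act by the familiar seminormal formulas (`heckeOp`). The
functions whose value at an ordering `w` is divisible by `x_a - q x_b` for every inversion of `w`
form a submodule (`WeightDatum.carrier`). Under a condition on the first label of the orderings the
cyclotomic relation holds on this submodule, which becomes a right module over the Ariki–Koike
algebra.

If `x_b ≡ q x_a` never occurs for `a < b`, the submodule has simple socle. Indeed the Jucys–Murphy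
elements separate the orderings, so a nonzero submodule contains an `ε`-multiple of a delta
function, and sorting adjacent labels moves it to the identity ordering (`reaches_one`). Hence the
module is indecomposable (`indecomposable`). Moreover the ratio of the `ε`-parts of two variables is
an isomorphism invariant (`snd_eq_of_equiv`), since it is the ratio of the nilpotent parts of two
Jucys–Murphy elements on the weight space of the identity.

For the parameters `q ^ A, q ^ B, q ^ C, q ^ D` with `A ≤ B < C ≤ D < A + e`, the variables are
taken along two descending chains of exponents: one starts at `B` and passes `A`, the other runs
from `D` to `C`. The `ε`-part relative to the constant term jumps from `0` to a free parameter `c`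
at `A` and from `0` to `1` at `C`. This needs `n ≥ (B - A) + (D - C) + 2`, and `n ≤ f⁺²` ensures
that the constant terms satisfy the two conditions above. As the sum of two adjacent gaps is at
least `f⁺² ≥ n`, the minimum `g ≤ n - 2` is attained by two opposite gaps, and these are the
intervals `[A, B]` and `[C, D]`.
-/

open scoped TensorProduct

open Equiv

/-! ### Calibrated affine Hecke operators on functions on orderings -/

section Hecke
variable {S : Type} [CommRing S] {n : ℕ}

/-- The coefficient `(q - 1) x_k / (x_k - x_j)`. `Ring.inverse` is used since `S` is not a field;
it is an actual inverse whenever `x_k - x_j` is a unit. -/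
noncomputable def diagCoeff (q : S) (x : Fin n → S) (j k : Fin n) : S :=
  (q - 1) * x k * Ring.inverse (x k - x j)

/-- The coefficient `(x_j - q x_k) / (x_j - x_k)`, with `Ring.inverse` as in `diagCoeff`. -/
noncomputable def swapCoeff (q : S) (x : Fin n → S) (j k : Fin n) : S :=
  (x j - q * x k) * Ring.inverse (x j - x k)

/-- The Hecke operator attached to the positions `i, j`, on functions on the set of orderings `w`
of the labels `Fin n` (`w i` is the label at position `i`). It mixes the values at `w` and at the
ordering with the labels at positions `i` and `j` exchanged. For adjacent positions it plays the
role of the generator `T_j`. -/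
noncomputable def heckeOp (q : S) (x : Fin n → S) (i j : Fin n) :
    (Perm (Fin n) → S) →ₗ[S] (Perm (Fin n) → S) where
  toFun v w := diagCoeff q x (w i) (w j) * v w + swapCoeff q x (w j) (w i) * v (w * swap i j)
  map_add' u v := by ext w; simp only [Pi.add_apply]; ring
  map_smul' a v := by ext w; simp only [Pi.smul_apply, smul_eq_mul, RingHom.id_apply]; ring

/-- Multiplication by the variable of the label at position `i`; a Jucys–Murphy operator. -/
def posOp (x : Fin n → S) (i : Fin n) : (Perm (Fin n) → S) →ₗ[S] (Perm (Fin n) → S) where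
  toFun v w := x (w i) * v w
  map_add' u v := by ext w; simp only [Pi.add_apply]; ring
  map_smul' a v := by ext w; simp only [Pi.smul_apply, smul_eq_mul, RingHom.id_apply]; ring

theorem heckeOp_apply (q : S) (x : Fin n → S) (i j : Fin n) (v : Perm (Fin n) → S) (w) :
    heckeOp q x i j v w =
      diagCoeff q x (w i) (w j) * v w + swapCoeff q x (w j) (w i) * v (w * swap i j) := rfl

theorem posOp_apply (x : Fin n → S) (i : Fin n) (v : Perm (Fin n) → S) (w) :
    posOp x i v w = x (w i) * v w := rfl

variable {q : S} {x : Fin n → S}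

theorem exists_inv (hx : ∀ j k, j ≠ k → IsUnit (x j - x k)) {j k : Fin n} (h : j ≠ k) :
    ∃ u : S, Ring.inverse (x j - x k) = u ∧ Ring.inverse (x k - x j) = -u ∧
      u * (x j - x k) = 1 := by
  refine ⟨_, rfl, ?_, Ring.inverse_mul_cancel _ (hx j k h)⟩
  refine (hx k j h.symm).mul_right_cancel ?_
  rw [Ring.inverse_mul_cancel _ (hx k j h.symm)]
  linear_combination -Ring.inverse_mul_cancel _ (hx j k h)

theorem diag_add (hx : ∀ j k, j ≠ k → IsUnit (x j - x k)) {j k : Fin n} (h : j ≠ k) :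
    diagCoeff q x j k + diagCoeff q x k j = q - 1 := by
  obtain ⟨u, h1, h2, h3⟩ := exists_inv hx h
  simp only [diagCoeff, h1, h2]
  linear_combination (q - 1) * h3

theorem swap_mul_swap (hx : ∀ j k, j ≠ k → IsUnit (x j - x k)) {j k : Fin n} (h : j ≠ k) :
    swapCoeff q x j k * swapCoeff q x k j = q + diagCoeff q x j k * diagCoeff q x k j := by
  obtain ⟨u, h1, h2, h3⟩ := exists_inv hx h
  simp only [diagCoeff, swapCoeff, h1, h2]
  linear_combination q * (u * (x j - x k) + 1) * h3

theorem diag_weighted (hx : ∀ j k, j ≠ k → IsUnit (x j - x k)) {j k : Fin n} (h : j ≠ k) :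
    x j * diagCoeff q x j k + x k * diagCoeff q x k j = 0 := by
  obtain ⟨u, h1, h2, h3⟩ := exists_inv hx h
  simp only [diagCoeff, h1, h2]
  ring

/-- The identity between the three pairs of labels that makes the braid relation hold (a rational
form of the Yang–Baxter equation). -/
theorem diag_three (hx : ∀ j k, j ≠ k → IsUnit (x j - x k)) {j k l : Fin n}
    (hjk : j ≠ k) (hkl : k ≠ l) (hjl : j ≠ l) :
    diagCoeff q x j k * diagCoeff q x k l + diagCoeff q x j l * diagCoeff q x k j
      = diagCoeff q x k l * diagCoeff q x j l := by
  obtain ⟨u, h1, h2, h3⟩ := exists_inv hx hjk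
  obtain ⟨u', h1', h2', h3'⟩ := exists_inv hx hkl
  obtain ⟨u'', h1'', h2'', h3''⟩ := exists_inv hx hjl
  -- after unfolding, `key` is the partial fraction identity behind the lemma
  simp only [diagCoeff, h1, h2, h2', h2'']
  have key : u * u' * x k - u'' * u * x j - u' * u'' * x l = 0 := by grind
  linear_combination (q - 1) ^ 2 * x l * key

theorem heckeOp_quadratic (hx : ∀ j k, j ≠ k → IsUnit (x j - x k)) {i j : Fin n} (h : i ≠ j)
    (v : Perm (Fin n) → S) :
    heckeOp q x i j (heckeOp q x i j v) = (q - 1) • heckeOp q x i j v + q • v := by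
  ext w
  have hw : w i ≠ w j := w.injective.ne h
  simp only [heckeOp_apply, Pi.add_apply, Pi.smul_apply, smul_eq_mul, mul_assoc, swap_mul_self,
    mul_one, Perm.mul_apply, swap_apply_left, swap_apply_right]
  have e1 := diag_add (q := q) hx hw
  have e2 := swap_mul_swap (q := q) hx hw
  linear_combination (v w * diagCoeff q x (w i) (w j) +
    swapCoeff q x (w j) (w i) * v (w * swap i j)) * e1 + v w * e2

/-- The Bernstein-type relation `T L_i T = q L_j` of the affine Hecke algebra. -/
theorem heckeOp_posOp (hx : ∀ j k, j ≠ k → IsUnit (x j - x k)) {i j : Fin n} (h : i ≠ j)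
    (v : Perm (Fin n) → S) :
    heckeOp q x i j (posOp x i (heckeOp q x i j v)) = q • posOp x j v := by
  ext w
  have hw : w i ≠ w j := w.injective.ne h
  simp only [heckeOp_apply, posOp_apply, Pi.smul_apply, smul_eq_mul, mul_assoc, swap_mul_self,
    mul_one, Perm.mul_apply, swap_apply_left, swap_apply_right]
  have e1 := diag_weighted (q := q) hx hw
  have e2 := swap_mul_swap (q := q) hx hw
  linear_combination (v w * diagCoeff q x (w i) (w j) +
    swapCoeff q x (w j) (w i) * v (w * swap i j)) * e1 + x (w j) * v w * e2

theorem heckeOp_posOp_comm {i j k : Fin n} (hi : k ≠ i) (hj : k ≠ j)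
    (v : Perm (Fin n) → S) :
    posOp x k (heckeOp q x i j v) = heckeOp q x i j (posOp x k v) := by
  ext w
  simp only [heckeOp_apply, posOp_apply, Perm.mul_apply, swap_apply_of_ne_of_ne hi hj]
  ring

theorem posOp_comm {i j : Fin n} (v : Perm (Fin n) → S) :
    posOp x i (posOp x j v) = posOp x j (posOp x i v) := by
  ext w
  simp only [posOp_apply]
  ring

theorem heckeOp_comm {i j k l : Fin n} (hij : i ≠ j) (hkl : k ≠ l) (hik : i ≠ k)
    (hil : i ≠ l) (hjk : j ≠ k) (hjl : j ≠ l) (v : Perm (Fin n) → S) :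
    heckeOp q x i j (heckeOp q x k l v) = heckeOp q x k l (heckeOp q x i j v) := by
  ext w
  have e : w * swap k l * swap i j = w * swap i j * swap k l := by
    rw [mul_assoc, mul_assoc]
    congr 1
    exact (Perm.disjoint_swap_swap (by simp [*, hik.symm, hil.symm, hjk.symm, hjl.symm])).commute.eq
  simp only [heckeOp_apply, e, Perm.mul_apply, swap_apply_of_ne_of_ne hik hil,
    swap_apply_of_ne_of_ne hjk hjl, swap_apply_of_ne_of_ne hik.symm hjk.symm,
    swap_apply_of_ne_of_ne hil.symm hjl.symm]
  ring

theorem heckeOp_braid (hx : ∀ j k, j ≠ k → IsUnit (x j - x k)) {i j k : Fin n} (hij : i ≠ j)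
    (hjk : j ≠ k) (hik : i ≠ k) (v : Perm (Fin n) → S) :
    heckeOp q x i j (heckeOp q x j k (heckeOp q x i j v)) =
      heckeOp q x j k (heckeOp q x i j (heckeOp q x j k v)) := by
  ext w
  have e : w * swap i j * swap j k * swap i j = w * swap j k * swap i j * swap j k := by
    rw [mul_assoc, mul_assoc, mul_assoc, mul_assoc]
    congr 1
    have h1 := swap_mul_swap_mul_swap hij hik
    have h2 := swap_mul_swap_mul_swap hjk.symm hik.symm
    rw [swap_comm k j, swap_comm j i, swap_comm i k, ← h1] at h2
    simpa only [mul_assoc] using h2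
  have e1 : w * swap i j * swap i j = w := by rw [mul_assoc, swap_mul_self, mul_one]
  have e2 : w * swap j k * swap j k = w := by rw [mul_assoc, swap_mul_self, mul_one]
  simp only [heckeOp_apply, e, e1, e2, Perm.mul_apply, swap_apply_left, swap_apply_right,
    swap_apply_of_ne_of_ne hij hik, swap_apply_of_ne_of_ne hik.symm hjk.symm]
  have a := w.injective.ne hij
  have b := w.injective.ne hjk
  have c := w.injective.ne hik
  generalize w i = α at *
  generalize w j = β at *
  generalize w k = γ at *
  have s1 := diag_add (q := q) hx a
  have s2 := diag_add (q := q) hx b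
  have s3 := diag_add (q := q) hx c
  have t1 := swap_mul_swap (q := q) hx a
  have t2 := swap_mul_swap (q := q) hx b
  have d1 := diag_three (q := q) hx a b c
  generalize diagCoeff q x α β = c1 at *
  generalize diagCoeff q x β α = c1' at *
  generalize diagCoeff q x β γ = c2 at *
  generalize diagCoeff q x γ β = c2' at *
  generalize diagCoeff q x α γ = c3 at *
  generalize diagCoeff q x γ α = c3' at *
  grind
end Hecke

open DualNumber

/-! ### The right module attached to a weight datum -/

/-- Dual-number variables `x_j`, one for each label, from which a right module over the Ariki–Koike
algebra can be built. The constant terms are pairwise distinct and `x_b ≡ q x_a` never occurs for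
`a < b`. The last condition says that the polynomial of `T_0`, evaluated at the variable of the
first label of an ordering `w`, kills every scalar which is divisible by `x_a - q x_b` for each
inversion of `w`, i.e. for all labels `a < b` such that `b` stands before `a` in `w`. -/
structure WeightDatum (F : Type) [Field F] (n r : ℕ) (q : F) (Q : Fin r → F) where
  x : Fin n → F[ε]
  pos : 0 < n
  q_ne : q ≠ 0
  inj : Function.Injective fun j => (x j).fst
  no_flip : ∀ a b, a < b → (x b).fst ≠ q * (x a).fst
  cyclotomic : ∀ (w : Perm (Fin n)) (s : F[ε]),
    (∀ a b, a < b → w⁻¹ b < w⁻¹ a → x a - algebraMap F F[ε] q * x b ∣ s) →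
      (∏ j, (x (w ⟨0, pos⟩) - algebraMap F F[ε] (Q j))) * s = 0

namespace WeightDatum
variable {F : Type} [Field F] {n r : ℕ} {q : F} {Q : Fin r → F} (D : WeightDatum F n r q Q)

theorem isUnit_sub (j k : Fin n) (h : j ≠ k) : IsUnit (D.x j - D.x k) := by
  rw [TrivSqZeroExt.isUnit_iff_isUnit_fst, TrivSqZeroExt.fst_sub, isUnit_iff_ne_zero, sub_ne_zero]
  exact D.inj.ne h

/-- The functions whose value at `w` is divisible by `x_a - q x_b` for each pair of labels `a < b`
such that `b` stands before `a` in `w`. This is the underlying space of the module. -/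
def carrier : Submodule F[ε] (Perm (Fin n) → F[ε]) where
  carrier := {v | ∀ (w : Perm (Fin n)) (a b : Fin n), a < b → w⁻¹ b < w⁻¹ a →
    D.x a - algebraMap F F[ε] q * D.x b ∣ v w}
  add_mem' hu hv w a b h h' := dvd_add (hu w a b h h') (hv w a b h h')
  zero_mem' _ _ _ _ _ := dvd_zero _
  smul_mem' c _ hv w a b h h' := (hv w a b h h').mul_left c

theorem posOp_mem (i : Fin n) {v} (hv : v ∈ D.carrier) : posOp D.x i v ∈ D.carrier :=
  fun w a b h h' => (hv w a b h h').mul_left _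

/-- Exchanging adjacent labels `a < b`, so that `b` comes first, creates one new divisibility
condition, by `x_a - q x_b`, and precisely this factor occurs in the coefficient of the exchange. -/
theorem heckeOp_mem (i j : Fin n) (hij : i.val + 1 = j.val) {v} (hv : v ∈ D.carrier) :
    heckeOp (algebraMap F F[ε] q) D.x i j v ∈ D.carrier := by
  intro w a b h h'
  rw [heckeOp_apply]
  refine dvd_add ((hv w a b h h').mul_left _) ?_
  by_cases hc : w⁻¹ b = i ∧ w⁻¹ a = j
  · obtain ⟨rfl, rfl⟩ := hc
    rw [← Perm.mul_apply, ← Perm.mul_apply, mul_inv_cancel, Perm.one_apply, Perm.one_apply,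
      swapCoeff, mul_assoc]
    exact dvd_mul_right _ _
  · refine (hv _ a b h ?_).mul_left _
    rw [mul_inv_rev, swap_inv, Perm.mul_apply, Perm.mul_apply]
    generalize w⁻¹ b = y at *
    generalize w⁻¹ a = z at *
    simp only [swap_apply_def]
    simp only [Fin.lt_def, Fin.ext_iff] at *
    split_ifs <;> omega

/-- The operator of the generator `T_i` on all functions. -/
noncomputable def genOp (i : Fin n) : (Perm (Fin n) → F[ε]) →ₗ[F[ε]] (Perm (Fin n) → F[ε]) :=
  if i.val = 0 then posOp D.x i
  else heckeOp (algebraMap F F[ε] q) D.x ⟨i.val - 1, by omega⟩ i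

theorem genOp_mem (i : Fin n) {v} (hv : v ∈ D.carrier) : D.genOp i v ∈ D.carrier := by
  unfold genOp
  split_ifs with h
  · exact D.posOp_mem i hv
  · exact D.heckeOp_mem _ _ (by simp; omega) hv

/-- The operator of the generator `T_i` on the submodule `carrier`. -/
noncomputable def gen (i : Fin n) : Module.End F[ε] D.carrier :=
  (D.genOp i).restrict fun _ hv => D.genOp_mem i hv

theorem gen_apply (i : Fin n) (v : D.carrier) : ((D.gen i v : D.carrier) : Perm (Fin n) → F[ε])
    = D.genOp i v := rfl

theorem genOp_zero (h : 0 < n) : D.genOp ⟨0, h⟩ = posOp D.x ⟨0, h⟩ := by simp [genOp]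

theorem genOp_succ (i : ℕ) (h : i + 1 < n) : D.genOp ⟨i + 1, h⟩ =
    heckeOp (algebraMap F F[ε] q) D.x ⟨i, by omega⟩ ⟨i + 1, h⟩ := by simp [genOp]

/-- The right action of the free algebra, as a homomorphism to the opposite of the endomorphism
ring. -/
noncomputable def freeRep : FreeAlgebra F (Fin n) →ₐ[F] (Module.End F[ε] D.carrier)ᵐᵒᵖ :=
  FreeAlgebra.lift F fun i => MulOpposite.op (D.gen i)

/-- The action of a product of factors `T_0 - Q_j`. -/
theorem prod_apply (h : 0 < n) (l : List (Fin r)) (v : D.carrier) :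
    (((l.map fun j => D.freeRep (FreeAlgebra.ι F (⟨0, h⟩ : Fin n)
            - algebraMap F (FreeAlgebra F (Fin n)) (Q j))).prod.unop v : D.carrier) :
              Perm (Fin n) → F[ε]) =
      fun w => (l.map fun j => D.x (w ⟨0, h⟩) - algebraMap F F[ε] (Q j)).prod * v.1 w := by
  induction l generalizing v with
  | nil => simp
  | cons j l ih =>
    simp only [List.map_cons, List.prod_cons, MulOpposite.unop_mul, Module.End.mul_apply]
    rw [ih]
    ext1 w
    have : ((MulOpposite.unop (D.freeRep (FreeAlgebra.ι F (⟨0, h⟩ : Fin n)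
            - algebraMap F (FreeAlgebra F (Fin n)) (Q j))) v : D.carrier) :
              Perm (Fin n) → F[ε]) w
              = (D.x (w ⟨0, h⟩) - algebraMap F F[ε] (Q j)) * v.1 w := by
      simp [freeRep, gen_apply, genOp_zero, posOp_apply, sub_mul, Algebra.smul_def]
    rw [this]
    ring

theorem freeRep_rel ⦃a b : FreeAlgebra F (Fin n)⦄ (h : AKRel F n r q Q a b) :
    D.freeRep a = D.freeRep b := by
  apply MulOpposite.unop_injective
  ext1 v
  apply Subtype.ext
  cases h with
  | cyclotomic h =>
    rw [map_list_prod, List.map_map]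
    refine (D.prod_apply h _ v).trans ?_
    ext1 w
    rw [← Fin.prod_univ_def, D.cyclotomic w (v.1 w) (v.2 w)]
    simp
  | braid01 h =>
    simp only [freeRep, map_mul, FreeAlgebra.lift_ι_apply, MulOpposite.unop_mul,
      MulOpposite.unop_op, Module.End.mul_apply, gen_apply]
    have e := D.genOp_succ 0 h
    simp only [zero_add] at e
    rw [genOp_zero, e, heckeOp_posOp D.isUnit_sub (by simp), heckeOp_posOp D.isUnit_sub (by simp),
      map_smul, posOp_comm]
  | quadratic i h1 h2 =>
    obtain ⟨i, rfl⟩ := Nat.exists_eq_add_of_le' h1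
    simp only [freeRep, map_mul, map_add, map_sub, map_one, FreeAlgebra.lift_ι_apply,
      MulOpposite.unop_mul, AlgHom.commutes, map_zero,
      MulOpposite.unop_op, Module.End.mul_apply, gen_apply, MulOpposite.unop_add,
      MulOpposite.unop_sub, MulOpposite.unop_zero, MulOpposite.unop_one, LinearMap.add_apply,
      LinearMap.sub_apply, Module.End.one_apply, MulOpposite.algebraMap_apply,
      Module.algebraMap_end_apply, Submodule.coe_add, Submodule.coe_sub, Submodule.coe_smul_of_tower,
      LinearMap.zero_apply, Submodule.coe_zero, genOp_succ]
    have := heckeOp_quadratic (q := algebraMap F F[ε] q) D.isUnit_sub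
      (i := ⟨i, by omega⟩) (j := ⟨i + 1, h2⟩) (by simp) v.1
    rw [this, ← algebraMap_smul F[ε] q v.1, ← algebraMap_smul F[ε] q (heckeOp _ _ _ _ v.1)]
    module
  | braid i h1 h2 =>
    obtain ⟨i, rfl⟩ := Nat.exists_eq_add_of_le' h1
    simp only [freeRep, map_mul, FreeAlgebra.lift_ι_apply, MulOpposite.unop_mul,
      MulOpposite.unop_op, Module.End.mul_apply, gen_apply, genOp_succ]
    exact heckeOp_braid D.isUnit_sub (by simp) (by simp) (by simp; omega) _
  | comm i j hij hj =>
    obtain ⟨j, rfl⟩ := Nat.exists_eq_add_of_le' (show 1 ≤ j by omega)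
    simp only [freeRep, map_mul, FreeAlgebra.lift_ι_apply, MulOpposite.unop_mul,
      MulOpposite.unop_op, Module.End.mul_apply, gen_apply, genOp_succ]
    rcases Nat.eq_zero_or_pos i with rfl | hi
    · rw [genOp_zero, heckeOp_posOp_comm]
      · simp; omega
      · simp
    · obtain ⟨i, rfl⟩ := Nat.exists_eq_add_of_le' hi
      rw [genOp_succ, heckeOp_comm] <;> simp <;> omega

/-- The right action of the Ariki–Koike algebra. -/
noncomputable def rep : ArikiKoike F n r q Q →ₐ[F] (Module.End F[ε] D.carrier)ᵐᵒᵖ :=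
  RingQuot.liftAlgHom F ⟨D.freeRep, D.freeRep_rel⟩

/-- The same action as a homomorphism defined on the opposite algebra. -/
noncomputable def opRep : (ArikiKoike F n r q Q)ᵐᵒᵖ →ₐ[F] Module.End F[ε] D.carrier :=
  (AlgEquiv.opOp F (Module.End F[ε] D.carrier)).symm.toAlgHom.comp (AlgHom.op D.rep)

noncomputable instance : Module (ArikiKoike F n r q Q)ᵐᵒᵖ D.carrier :=
  Module.compHom _ (D.opRep : (ArikiKoike F n r q Q)ᵐᵒᵖ →+* Module.End F[ε] D.carrier)

theorem smul_def (a : (ArikiKoike F n r q Q)ᵐᵒᵖ) (v : D.carrier) : a • v = D.opRep a v := rfl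

instance tower : IsScalarTower F (ArikiKoike F n r q Q)ᵐᵒᵖ D.carrier where
  smul_assoc c a v := by
    rw [smul_def, smul_def, map_smul, LinearMap.smul_apply]

theorem finite : Module.Finite (ArikiKoike F n r q Q)ᵐᵒᵖ D.carrier := by
  have : Module.Finite F F[ε] := inferInstanceAs (Module.Finite F (F × F))
  have : Module.Finite F D.carrier :=
    Module.Finite.of_injective (D.carrier.subtype.restrictScalars F) D.carrier.subtype_injective
  have := D.tower
  exact Module.Finite.of_restrictScalars_finite F _ _

/-- The generator `T_i` of the algebra, as an element of the opposite algebra. -/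
noncomputable def opGen (F : Type) [Field F] {n r : ℕ} (q : F) (Q : Fin r → F) (i : Fin n) :
    (ArikiKoike F n r q Q)ᵐᵒᵖ :=
  MulOpposite.op (RingQuot.mkAlgHom F (AKRel F n r q Q) (FreeAlgebra.ι F i))

theorem opGen_smul (i : Fin n) (v : D.carrier) : opGen F q Q i • v = D.gen i v := by
  simp [opGen, smul_def, opRep, rep, freeRep]

/-- The Jucys–Murphy elements `L_0 = T_0`, `L_{k+1} = q⁻¹ T_{k+1} L_k T_{k+1}`, as elements of the
opposite algebra. -/
noncomputable def opJM (F : Type) [Field F] {n r : ℕ} (q : F) (Q : Fin r → F) :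
    (k : ℕ) → k < n → (ArikiKoike F n r q Q)ᵐᵒᵖ
  | 0, h => opGen F q Q ⟨0, h⟩
  | k + 1, h => q⁻¹ • (opGen F q Q ⟨k + 1, h⟩ * opJM F q Q k (by omega) * opGen F q Q ⟨k + 1, h⟩)

/-- `L_k` multiplies the value at `w` by the variable of the label at position `k`. -/
theorem opJM_smul (k : ℕ) (h : k < n) (v : D.carrier) :
    ((opJM F q Q k h • v : D.carrier) : Perm (Fin n) → F[ε]) = posOp D.x ⟨k, h⟩ v := by
  induction k generalizing v with
  | zero => rw [opJM, opGen_smul, gen_apply, genOp_zero]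
  | succ k ih =>
    rw [opJM, smul_assoc, mul_smul, mul_smul, Submodule.coe_smul_of_tower, opGen_smul, opGen_smul,
      gen_apply, ih, gen_apply, genOp_succ, heckeOp_posOp D.isUnit_sub (by simp),
      algebraMap_smul, inv_smul_smul₀ D.q_ne]

/-! ### Indecomposability -/

/-- A submodule is stable under `L_k - c` for every Jucys–Murphy element `L_k` and scalar `c`. -/
theorem exists_jm_sub (P : Submodule (ArikiKoike F n r q Q)ᵐᵒᵖ D.carrier) (k : Fin n) (c : F)
    {v : D.carrier} (hv : v ∈ P) :
    ∃ v' ∈ P, ∀ w, v'.1 w = (D.x (w k) - algebraMap F F[ε] c) * v.1 w := by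
  have := D.tower
  refine ⟨opJM F q Q k k.2 • v - c • v,
    P.sub_mem (P.smul_mem _ hv) ((P.restrictScalars F).smul_mem c hv), fun w => ?_⟩
  rw [Submodule.coe_sub, opJM_smul, Submodule.coe_smul_of_tower, Pi.sub_apply, posOp_apply,
    Pi.smul_apply, Algebra.smul_def, sub_mul]

theorem isUnit_fst_sub (j k : Fin n) (h : j ≠ k) :
    IsUnit (D.x j - algebraMap F F[ε] (D.x k).fst) := by
  rw [TrivSqZeroExt.isUnit_iff_isUnit_fst, TrivSqZeroExt.fst_sub, isUnit_iff_ne_zero, sub_ne_zero]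
  simpa [TrivSqZeroExt.algebraMap_eq_inl] using D.inj.ne h

theorem fst_sub_sq (k : Fin n) :
    (D.x k - algebraMap F F[ε] (D.x k).fst) * (D.x k - algebraMap F F[ε] (D.x k).fst) = 0 := by
  ext <;> simp [TrivSqZeroExt.algebraMap_eq_inl]

/-- Weights are separated by Jucys–Murphy elements: for an ordering `w'` with `w' k ≠ w k`, the
square of `L_k - (x_{w' k}).fst` kills the value at `w'` and multiplies the value at `w` by a
unit. -/
theorem exists_separate (P : Submodule (ArikiKoike F n r q Q)ᵐᵒᵖ D.carrier)
    (w : Perm (Fin n)) (s : Finset (Perm (Fin n))) (hs : w ∉ s)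
    {v : D.carrier} (hv : v ∈ P) (hvw : v.1 w ≠ 0) :
    ∃ v' ∈ P, v'.1 w ≠ 0 ∧ ∀ w' ∈ s, v'.1 w' = 0 := by
  induction s using Finset.induction_on with
  | empty => exact ⟨v, hv, hvw, by simp⟩
  | insert w' s hw' ih =>
    obtain ⟨v', h1, h2, h3⟩ := ih (fun h => hs (Finset.mem_insert_of_mem h))
    obtain ⟨k, hk⟩ : ∃ k, w k ≠ w' k := by
      by_contra! hk
      exact hs (by rw [Equiv.ext hk]; exact Finset.mem_insert_self _ _)
    obtain ⟨v₁, m₁, e₁⟩ := D.exists_jm_sub P k (D.x (w' k)).fst h1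
    obtain ⟨v₂, m₂, e₂⟩ := D.exists_jm_sub P k (D.x (w' k)).fst m₁
    refine ⟨v₂, m₂, ?_, ?_⟩
    · have hu := D.isUnit_fst_sub _ _ hk
      rw [e₂, e₁, Ne, hu.mul_right_eq_zero, hu.mul_right_eq_zero]
      exact h2
    · intro w'' hw''
      rw [e₂, e₁]
      rcases Finset.mem_insert.1 hw'' with rfl | h
      · rw [← mul_assoc, D.fst_sub_sq, zero_mul]
      · rw [h3 _ h, mul_zero, mul_zero]

/-- The submodule `P` contains a nonzero function which is supported at `w` only and has value in
the ideal `(ε)`. -/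
def Reaches (P : Submodule (ArikiKoike F n r q Q)ᵐᵒᵖ D.carrier) (w : Perm (Fin n)) : Prop :=
  ∃ v ∈ P, v.1 w ≠ 0 ∧ (v.1 w).fst = 0 ∧ ∀ t ≠ w, v.1 t = 0

/-- Every nonzero submodule contains a function supported at a single ordering; if its value is a
unit, subtracting the eigenvalue from a Jucys–Murphy element with nonzero nilpotent part moves the
value into `(ε)`. -/
theorem exists_reaches (P : Submodule (ArikiKoike F n r q Q)ᵐᵒᵖ D.carrier) (hP : P ≠ ⊥)
    (k : Fin n) (hk : (D.x k).snd ≠ 0) : ∃ w, D.Reaches P w := by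
  obtain ⟨v, hv, hv0⟩ := P.ne_bot_iff.1 hP
  obtain ⟨w, hw⟩ : ∃ w, v.1 w ≠ 0 := by
    by_contra! h
    exact hv0 (Subtype.ext (funext h))
  obtain ⟨v', h1, h2, h3⟩ := D.exists_separate P w (Finset.univ.erase w) (by simp) hv hw
  replace h3 : ∀ w' ≠ w, v'.1 w' = 0 := fun w' h => h3 w' (by simp [h])
  refine ⟨w, ?_⟩
  by_cases hf : (v'.1 w).fst = 0
  · exact ⟨v', h1, h2, hf, h3⟩
  · obtain ⟨v₁, m₁, e₁⟩ := D.exists_jm_sub P (w⁻¹ k) (D.x k).fst h1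
    have hwk : w (w⁻¹ k) = k := by rw [← Perm.mul_apply, mul_inv_cancel, Perm.one_apply]
    refine ⟨v₁, m₁, ?_, ?_, fun w' h => by rw [e₁, h3 w' h, mul_zero]⟩
    · rw [e₁, hwk]
      intro h
      have := congrArg TrivSqZeroExt.snd h
      simp [TrivSqZeroExt.algebraMap_eq_inl, hk, hf] at this
    · rw [e₁, hwk]
      simp [TrivSqZeroExt.algebraMap_eq_inl]

/-- If the labels at positions `i, i + 1` are in decreasing order, they can be sorted: `T_{i+1} - c`
moves a function supported at `w` to the ordering with these labels exchanged. The coefficient of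
the exchange is a unit by `no_flip`, and the diagonal coefficient acts on `(ε)` through its
constant term `c`. -/
theorem Reaches.swap {P : Submodule (ArikiKoike F n r q Q)ᵐᵒᵖ D.carrier} {w : Perm (Fin n)}
    (hw : D.Reaches P w) (i : ℕ) (hi : i + 1 < n) (hd : w ⟨i + 1, hi⟩ < w ⟨i, by omega⟩) :
    D.Reaches P (w * Equiv.swap ⟨i, by omega⟩ ⟨i + 1, hi⟩) := by
  obtain ⟨v, hv, h1, h2, h3⟩ := hw
  have := D.tower
  set p : Fin n := ⟨i, by omega⟩ with hp
  set p' : Fin n := ⟨i + 1, hi⟩ with hp'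
  have hpp : p ≠ p' := by simp [hp, hp']
  set t := w * Equiv.swap p p' with ht
  have htw : t ≠ w := by simp [ht, hpp]
  have htt : t * Equiv.swap p p' = w := by rw [ht, mul_assoc, swap_mul_self, mul_one]
  set c : F := (diagCoeff (algebraMap F F[ε] q) D.x (w p) (w p')).fst with hc
  have e : ∀ w', (opGen F q Q p' • v - c • v : D.carrier).1 w' =
      diagCoeff (algebraMap F F[ε] q) D.x (w' p) (w' p') * v.1 w' +
        swapCoeff (algebraMap F F[ε] q) D.x (w' p') (w' p) * v.1 (w' * Equiv.swap p p')
        - algebraMap F F[ε] c * v.1 w' := by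
    intro w'
    rw [Submodule.coe_sub, opGen_smul, gen_apply, genOp_succ, Submodule.coe_smul_of_tower,
      Pi.sub_apply, heckeOp_apply, Pi.smul_apply, Algebra.smul_def]
  have et : (opGen F q Q p' • v - c • v : D.carrier).1 t =
      swapCoeff (algebraMap F F[ε] q) D.x (w p) (w p') * v.1 w := by
    rw [e, h3 t htw, htt, ht, Perm.mul_apply, Perm.mul_apply, swap_apply_left, swap_apply_right]
    ring
  have hu : IsUnit (swapCoeff (algebraMap F F[ε] q) D.x (w p) (w p')) := by
    refine IsUnit.mul ?_ ?_
    · rw [TrivSqZeroExt.isUnit_iff_isUnit_fst, TrivSqZeroExt.fst_sub, isUnit_iff_ne_zero,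
        sub_ne_zero]
      simpa [TrivSqZeroExt.algebraMap_eq_inl] using D.no_flip _ _ hd
    · exact (D.isUnit_sub _ _ hd.ne').ringInverse
  refine ⟨_, P.sub_mem (P.smul_mem (opGen F q Q p') hv)
    ((P.restrictScalars F).smul_mem c hv), ?_, ?_, ?_⟩
  · rw [et, Ne, hu.mul_right_eq_zero]
    exact h1
  · rw [et, TrivSqZeroExt.fst_mul, h2, mul_zero]
  · intro w' hw'
    rw [e]
    by_cases hww : w' = w
    · subst hww
      rw [← ht, h3 _ htw, hc]
      ext <;> simp [TrivSqZeroExt.algebraMap_eq_inl, h2]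
    · rw [h3 _ hww, h3 (w' * Equiv.swap p p')]
      · ring
      · intro h
        exact hw' (by rw [ht, ← h, mul_assoc, swap_mul_self, mul_one])

/-- Bubble sort: the lexicographically smallest ordering that is reached is the increasing one. -/
theorem reaches_one {P : Submodule (ArikiKoike F n r q Q)ᵐᵒᵖ D.carrier} {w : Perm (Fin n)}
    (hw : D.Reaches P w) : D.Reaches P 1 := by
  obtain ⟨w, hw, hmin⟩ := Set.exists_min_image {w | D.Reaches P w}
    (fun w => toLex (w : Fin n → Fin n)) (Set.toFinite _) ⟨w, hw⟩
  suffices h : w = 1 by rwa [← h]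
  by_contra hne
  obtain ⟨i, hi, hd⟩ : ∃ (i : ℕ) (hi : i + 1 < n), w ⟨i + 1, hi⟩ < w ⟨i, by omega⟩ := by
    by_contra! h
    apply hne
    have hm : StrictMono w := by
      refine Monotone.strictMono_of_injective ?_ w.injective
      obtain ⟨m, rfl⟩ : ∃ m, n = m + 1 := ⟨n - 1, by have := D.pos; omega⟩
      rw [Fin.monotone_iff_le_succ]
      intro i
      exact h i (by omega)
    ext i
    exact congrArg Fin.val (le_antisymm hm.apply_le hm.le_apply)
  refine (hmin _ (hw.swap D i hi hd)).not_gt ?_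
  refine ⟨⟨i, by omega⟩, fun j hj => ?_, ?_⟩
  · simp only [Fin.lt_def] at hj
    change (w * _) j = w j
    rw [Perm.mul_apply, swap_apply_of_ne_of_ne] <;> simp only [Ne, Fin.ext_iff] <;> omega
  · change (w * _) _ < w _
    rw [Perm.mul_apply, swap_apply_left]
    exact hd

/-- The divisibility conditions are void at the identity, which has no inversions. -/
theorem topVec_mem : (Pi.single 1 1 : Perm (Fin n) → F[ε]) ∈ D.carrier := by
  intro w a b h h'
  by_cases hw : w = 1
  · subst hw
    exact absurd h (by simpa using h'.le)
  · rw [Pi.single_eq_of_ne hw]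
    exact dvd_zero _

/-- The line of functions supported at the identity with values in `(ε)` lies in every nonzero
submodule, so no two nonzero submodules are independent. -/
theorem indecomposable (k : Fin n) (hk : (D.x k).snd ≠ 0) :
    IsIndecomposableModule (ArikiKoike F n r q Q)ᵐᵒᵖ D.carrier := by
  have := D.tower
  refine ⟨?_, fun P P' hPP => ?_⟩
  · exact ⟨⟨Pi.single 1 1, D.topVec_mem⟩, 0, fun h => by
      simpa using congrFun (congrArg Subtype.val h) 1⟩
  · by_contra! hne
    obtain ⟨w, hw⟩ := D.exists_reaches P hne.1 k hk
    obtain ⟨w', hw'⟩ := D.exists_reaches P' hne.2 k hk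
    obtain ⟨v, hv, h1, h2, h3⟩ := D.reaches_one hw
    obtain ⟨v', hv', h1', h2', h3'⟩ := D.reaches_one hw'
    have hs : (v'.1 1).snd ≠ 0 := fun h => h1' (TrivSqZeroExt.ext h2' h)
    have : v = ((v.1 1).snd / (v'.1 1).snd) • v' := by
      apply Subtype.ext
      ext1 w
      by_cases hw : w = 1
      · subst hw
        rw [Submodule.coe_smul_of_tower, Pi.smul_apply]
        ext
        · simp [h2, h2']
        · simp [hs]
      · rw [Submodule.coe_smul_of_tower, Pi.smul_apply, h3 w hw, h3' w hw, smul_zero]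
    have hm : v ∈ P' := by
      rw [this]
      exact (P'.restrictScalars F).smul_mem _ hv'
    have := Submodule.disjoint_def.1 hPP.disjoint v hv hm
    exact h1 (by rw [this]; rfl)

/-! ### Separating isomorphism classes -/

/-- The element `L_k - a`, where `L_k` is a Jucys–Murphy element. When `a` is the eigenvalue of
`L_k` on some weight space, it acts there nilpotently. -/
noncomputable def opNil (F : Type) [Field F] {n r : ℕ} (q : F) (Q : Fin r → F) (k : Fin n)
    (a : F) : (ArikiKoike F n r q Q)ᵐᵒᵖ :=
  opJM F q Q k k.2 - algebraMap F _ a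

theorem opNil_smul (k : Fin n) (a : F) (v : D.carrier) (w : Perm (Fin n)) :
    (opNil F q Q k a • v).1 w = (D.x (w k) - algebraMap F F[ε] a) * v.1 w := by
  have := D.tower
  rw [opNil, sub_smul, algebraMap_smul, Submodule.coe_sub, opJM_smul,
    Submodule.coe_smul_of_tower, Pi.sub_apply, posOp_apply, Pi.smul_apply, Algebra.smul_def,
    sub_mul]

/-- The ratio of the nilpotent parts of two variables is an isomorphism invariant. On the generalized
weight space of the identity (a free `F[ε]`-module of rank one) the nilpotent parts of `L_k` and
`L_l` are the `ε`-parts of `x_k` and `x_l` times `ε`, so a linear relation between them is seen by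
the isomorphism class of the module. -/
theorem snd_eq_of_equiv (D' : WeightDatum F n r q Q) (hfst : ∀ k, (D'.x k).fst = (D.x k).fst)
    (E : D.carrier ≃ₗ[(ArikiKoike F n r q Q)ᵐᵒᵖ] D'.carrier) (k l : Fin n) (c : F)
    (hl : (D.x l).snd ≠ 0) (hkl : (D.x k).snd = c * (D.x l).snd) :
    (D'.x k).snd = c * (D'.x l).snd := by
  have := D.tower
  have := D'.tower
  obtain ⟨y, hy, hy'⟩ : ∃ y : Fin n → (ArikiKoike F n r q Q)ᵐᵒᵖ,
      (∀ k (v : D.carrier) w, (y k • v).1 w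
        = (D.x (w k) - algebraMap F F[ε] (D.x k).fst) * v.1 w) ∧
      (∀ k (v : D'.carrier) w, (y k • v).1 w
        = (D'.x (w k) - algebraMap F F[ε] (D'.x k).fst) * v.1 w) :=
    ⟨fun k => opNil F q Q k (D.x k).fst, fun k v w => D.opNil_smul k _ v w,
      fun k v w => by rw [hfst]; exact D'.opNil_smul k _ v w⟩
  have hEs : ∀ (a : (ArikiKoike F n r q Q)ᵐᵒᵖ) (u : D.carrier), E (a • u) = a • E u :=
    fun a u => E.map_smul a u
  have hEc : ∀ (a : F) (u : D.carrier), E (a • u) = a • E u := by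
    intro a u
    rw [← algebraMap_smul (ArikiKoike F n r q Q)ᵐᵒᵖ a u, hEs, algebraMap_smul]
  let v : D.carrier := ⟨Pi.single 1 1, D.topVec_mem⟩
  have hv : ∀ w ≠ 1, v.1 w = 0 := fun w hw => Pi.single_eq_of_ne hw _
  have hv1 : v.1 1 = 1 := Pi.single_eq_same _ _
  have hyy : ∀ k, y k • y k • v = 0 := by
    intro k
    apply Subtype.ext
    ext1 w
    rw [hy, hy]
    by_cases hw : w = 1
    · subst hw
      rw [← mul_assoc, Perm.one_apply, D.fst_sub_sq, zero_mul]
      rfl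
    · rw [hv w hw, mul_zero, mul_zero]
      rfl
  have hEv : ∀ w ≠ 1, (E v).1 w = 0 := by
    intro w hw
    obtain ⟨k, hk⟩ : ∃ k, w k ≠ k := by
      by_contra! h
      exact hw (Equiv.ext h)
    have h0 : (y k • y k • E v).1 w = 0 := by
      rw [← hEs, ← hEs, hyy, map_zero]
      rfl
    have hu := D'.isUnit_fst_sub _ _ hk
    rwa [hy', hy', hu.mul_right_eq_zero, hu.mul_right_eq_zero] at h0
  have hrel : y k • v = c • (y l • v) := by
    apply Subtype.ext
    ext1 w
    rw [Submodule.coe_smul_of_tower, Pi.smul_apply, hy, hy]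
    by_cases hw : w = 1
    · subst hw
      rw [hv1]
      ext <;> simp [TrivSqZeroExt.algebraMap_eq_inl, hkl]
    · rw [hv w hw, mul_zero, mul_zero, smul_zero]
  have hyl : y l • v ≠ 0 := by
    intro h
    have := congrArg TrivSqZeroExt.snd (congrFun (congrArg Subtype.val h) 1)
    rw [hy, hv1] at this
    simp [TrivSqZeroExt.algebraMap_eq_inl, hl] at this
  have hE1 : ((E v).1 1).fst ≠ 0 := by
    intro h
    apply hyl
    apply E.injective
    rw [hEs, map_zero]
    apply Subtype.ext
    ext1 w
    rw [hy']
    by_cases hw : w = 1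
    · subst hw
      ext <;> simp [TrivSqZeroExt.algebraMap_eq_inl, h]
    · rw [hEv w hw, mul_zero]
      rfl
  have hrel' : y k • E v = c • (y l • E v) := by
    rw [← hEs, hrel, hEc, hEs]
  have h := congrArg TrivSqZeroExt.snd (congrFun (congrArg Subtype.val hrel') 1)
  rw [Submodule.coe_smul_of_tower, Pi.smul_apply, hy', hy'] at h
  simp [TrivSqZeroExt.algebraMap_eq_inl] at h
  rw [← mul_assoc] at h
  exact mul_right_cancel₀ hE1 h

end WeightDatum

/-! ### The one-parameter family of weight data -/

section Datum
variable {F : Type} [Field F] {n r : ℕ} {q : F} {Q : Fin r → F}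

/-- The exponent of `q` in the constant term of the variable of label `j`. The first `n - (D - C + 1)`
labels form a chain of exponents `B, B - 1, …`, the remaining `D - C + 1` labels form the chain
`D, D - 1, …, C`. -/
def labelExp (n : ℕ) (B C D : ℤ) (j : ℤ) : ℤ :=
  if j < n - (D - C + 1) then B - j else D - (j - (n - (D - C + 1)))

/-- The coefficient of `ε` in the variable of label `j`, relative to its constant term: on the first
chain it is `0` above `A` and `c` from `A` downwards, on the second chain it is `0` above `C` and
`1` at `C`. -/
def labelSlope (n : ℕ) (A B C D : ℤ) (c : F) (j : ℤ) : F :=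
  if j < n - (D - C + 1) then (if A < labelExp n B C D j then 0 else c)
  else if C < labelExp n B C D j then 0 else 1

/-- The variable `q ^ E (1 + s ε)` of label `j`, with exponent `E` and slope `s`. -/
def labelValue (q : F) (n : ℕ) (A B C D : ℤ) (c : F) (j : ℤ) : F[ε] :=
  TrivSqZeroExt.inl (q ^ labelExp n B C D j) +
    TrivSqZeroExt.inr (q ^ labelExp n B C D j * labelSlope n A B C D c j)

theorem fst_value (n : ℕ) (A B C D : ℤ) (c : F) (j : ℤ) :
    (labelValue q n A B C D c j).fst = q ^ labelExp n B C D j := by simp [labelValue]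

theorem snd_value (n : ℕ) (A B C D : ℤ) (c : F) (j : ℤ) :
    (labelValue q n A B C D c j).snd = q ^ labelExp n B C D j * labelSlope n A B C D c j := by
  simp [labelValue]

/-- For `a < b` the exponent of `a` minus that of `b` is modulo `e` neither `0` nor `-1`. This gives
the conditions `inj` and `no_flip`. -/
theorem label_cases {e : ℕ} {A B C D : ℤ} (hAB : A ≤ B) (hBC : B + 2 ≤ C) (hCD : C ≤ D)
    (hDA : D + 2 ≤ A + e) (hne : n + (C - B) ≤ e + 1)
    {a b : ℤ} (ha : 0 ≤ a) (hab : a < b) (hb : b < n) :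
    (1 ≤ labelExp n B C D a - labelExp n B C D b ∧
      labelExp n B C D a - labelExp n B C D b ≤ e - 2) ∨
    (2 ≤ labelExp n B C D b - labelExp n B C D a ∧
      labelExp n B C D b - labelExp n B C D a ≤ e - 1) := by
  unfold labelExp
  split_ifs <;> omega

theorem mul_eq_zero_of_fst {a b : F[ε]} (ha : a.fst = 0) (hb : b.fst = 0) : a * b = 0 := by
  ext <;> simp [ha, hb]

/-- The cyclotomic condition at the first label `j` of an ordering. If `j` is the head of a chain,
its value is annihilated by the factors for `q ^ A, q ^ B` or `q ^ C, q ^ D`. Otherwise its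
predecessor stands later in the ordering, so `s` is divisible by `x_{j-1} - q x_j`. This difference
is `0` if the slope does not change between `j - 1` and `j`, and lies in `(ε)` if it does; the slope
changes only at the exponents `A` and `C`, where the polynomial also has value in `(ε)`. -/
theorem value_cyclotomic {A B C D : ℤ} (hq0 : q ≠ 0) (hAB : A ≤ B) (hCD : C ≤ D)
    (hn : B - A + 1 + (D - C + 1) ≤ n) (c : F) (j : ℤ) (hj : 0 ≤ j) (s : F[ε])
    (hs : 0 ≤ j - 1 → labelValue q n A B C D c (j - 1) -
      algebraMap F F[ε] q * labelValue q n A B C D c j ∣ s) :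
    ((labelValue q n A B C D c j - algebraMap F F[ε] (q ^ A)) *
      (labelValue q n A B C D c j - algebraMap F F[ε] (q ^ B)) *
      (labelValue q n A B C D c j - algebraMap F F[ε] (q ^ C)) *
      (labelValue q n A B C D c j - algebraMap F F[ε] (q ^ D))) * s = 0 := by
  set y := labelValue q n A B C D c j with hy
  have hf : ∀ E : ℤ, labelExp n B C D j = E → (y - algebraMap F F[ε] (q ^ E)).fst = 0 := by
    intro E hE
    simp [hy, fst_value, hE, TrivSqZeroExt.algebraMap_eq_inl]
  have hz : ∀ E : ℤ, labelExp n B C D j = E → labelSlope n A B C D c j = 0 →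
      y - algebraMap F F[ε] (q ^ E) = 0 := by
    intro E hE hs
    ext
    · exact hf E hE
    · simp [hy, snd_value, hs, TrivSqZeroExt.algebraMap_eq_inl]
  by_cases hhead : j = 0
  · have hl : labelExp n B C D j = B := by
      unfold labelExp; split_ifs <;> omega
    by_cases hlt : A < B
    · rw [hz B hl (by unfold labelSlope; rw [hl, if_pos (by omega), if_pos hlt])]
      ring
    · rw [mul_eq_zero_of_fst (hf A (by omega)) (hf B hl)]
      ring
  by_cases hhead' : j = n - (D - C + 1)
  · have hl : labelExp n B C D j = D := by
      unfold labelExp; split_ifs <;> omega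
    by_cases hlt : C < D
    · rw [hz D hl (by unfold labelSlope; rw [hl, if_neg (by omega), if_pos hlt])]
      ring
    · rw [mul_assoc (_ * _) _ (y - algebraMap F F[ε] (q ^ D)),
        mul_eq_zero_of_fst (hf C (by omega)) (hf D hl)]
      ring
  have hl : labelExp n B C D (j - 1) = labelExp n B C D j + 1 := by
    unfold labelExp; split_ifs <;> omega
  have hs' := hs (by omega)
  have hfst : (labelValue q n A B C D c (j - 1) - algebraMap F F[ε] q * y).fst = 0 := by
    simp [hy, fst_value, hl, TrivSqZeroExt.algebraMap_eq_inl, zpow_add₀ hq0, mul_comm]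
  by_cases hsl : labelSlope n A B C D c (j - 1) = labelSlope n A B C D c j
  · have : labelValue q n A B C D c (j - 1) - algebraMap F F[ε] q * y = 0 := by
      ext
      · exact hfst
      · simp only [hy, TrivSqZeroExt.snd_sub, snd_value, hl, TrivSqZeroExt.algebraMap_eq_inl,
          TrivSqZeroExt.snd_mul, hsl, zpow_add₀ hq0]
        simp
        ring
    rw [this, zero_dvd_iff] at hs'
    rw [hs', mul_zero]
  · obtain ⟨t, rfl⟩ := hs'
    have hAC : labelExp n B C D j = A ∨ labelExp n B C D j = C := by
      by_contra! h
      apply hsl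
      unfold labelSlope
      rw [hl]
      congr 1
      · apply propext; omega
      · congr 1
        apply propext; omega
      · congr 1
        apply propext; omega
    refine mul_eq_zero_of_fst ?_ (by rw [TrivSqZeroExt.fst_mul, hfst, zero_mul])
    rcases hAC with h | h <;> simp [hf _ h]

/-- The weight datum with variables `labelValue`, for the parameters `q ^ A, q ^ B, q ^ C, q ^ D`. -/
def chainDatum (e : ℕ) (A B C D : ℤ) (hpos : 0 < n) (hq : IsPrimitiveRoot q e) (hq0 : q ≠ 0)
    (hAB : A ≤ B) (hBC : B + 2 ≤ C) (hCD : C ≤ D)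
    (hDA : D + 2 ≤ A + e) (hn : B - A + 1 + (D - C + 1) ≤ n) (hne : n + (C - B) ≤ e + 1)
    (hQ : ∀ y : F[ε], ∏ j, (y - algebraMap F F[ε] (Q j)) =
      (y - algebraMap F F[ε] (q ^ A)) * (y - algebraMap F F[ε] (q ^ B)) *
      (y - algebraMap F F[ε] (q ^ C)) * (y - algebraMap F F[ε] (q ^ D))) (c : F) :
    WeightDatum F n r q Q where
  x j := labelValue q n A B C D c j.val
  pos := hpos
  q_ne := hq0
  inj := by
    have key : ∀ a b : Fin n, a < b → q ^ labelExp n B C D a.val ≠ q ^ labelExp n B C D b.val := by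
      intro a b hab h
      have hab' := Fin.lt_def.1 hab
      rcases label_cases hAB hBC hCD hDA hne (a := a.val) (b := b.val) (by omega) (by omega)
        (by omega) with h' | h'
      · have := (hq.zpow_eq_one_iff_dvd _).1 (by
          rw [zpow_sub₀ hq0, h, div_self (zpow_ne_zero _ hq0)] :
            q ^ (labelExp n B C D a.val - labelExp n B C D b.val) = 1)
        have := Int.le_of_dvd (by omega) this
        omega
      · have := (hq.zpow_eq_one_iff_dvd _).1 (by
          rw [zpow_sub₀ hq0, h, div_self (zpow_ne_zero _ hq0)] :
            q ^ (labelExp n B C D b.val - labelExp n B C D a.val) = 1)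
        have := Int.le_of_dvd (by omega) this
        omega
    intro a b h
    simp only [fst_value] at h
    rcases lt_trichotomy a b with hab | hab | hab
    · exact absurd h (key a b hab)
    · exact hab
    · exact absurd h.symm (key b a hab)
  no_flip := by
    intro a b hab h
    have hab' := Fin.lt_def.1 hab
    simp only [fst_value] at h
    rcases label_cases hAB hBC hCD hDA hne (a := a.val) (b := b.val) (by omega) (by omega)
      (by omega) with h' | h'
    · have := (hq.zpow_eq_one_iff_dvd (labelExp n B C D a.val - labelExp n B C D b.val + 1)).1 (by
        rw [zpow_add₀ hq0, zpow_sub₀ hq0, h, zpow_one]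
        field_simp)
      have := Int.le_of_dvd (by omega) this
      omega
    · have := (hq.zpow_eq_one_iff_dvd (labelExp n B C D b.val - labelExp n B C D a.val - 1)).1 (by
        rw [zpow_sub₀ hq0, zpow_sub₀ hq0, h, zpow_one]
        field_simp)
      have := Int.le_of_dvd (by omega) this
      omega
  cyclotomic := by
    intro w s hs
    rw [hQ]
    refine value_cyclotomic hq0 hAB hCD hn c _ (by omega) s fun hj => ?_
    set j := w ⟨0, hpos⟩ with hjw
    have hwj : w⁻¹ j = ⟨0, hpos⟩ := by rw [hjw, ← Perm.mul_apply, inv_mul_cancel, Perm.one_apply]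
    have := hs ⟨j.val - 1, by omega⟩ j (by rw [Fin.lt_def]; simp; omega) ?_
    · simpa only [Nat.cast_sub (show 1 ≤ j.val by omega), Nat.cast_one] using this
    · rw [hwj, Fin.lt_def]
      simp only
      rw [Nat.pos_iff_ne_zero]
      intro h0
      have h1 : w⁻¹ ⟨j.val - 1, by omega⟩ = w⁻¹ j := by rw [hwj]; exact Fin.ext h0
      have := congrArg Fin.val (w⁻¹.injective h1)
      simp at this
      omega

/-- The modules of `chainDatum` for varying `c` are indecomposable and pairwise nonisomorphic: the
label `k = B - A` has exponent `A` and slope `c`, the last label `l` has exponent `C` and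
slope `1`, so `c` is recovered from the ratio of nilpotent parts. -/
theorem not_finiteRepType_of_chains [IsAlgClosed F] (e : ℕ) (A B C D : ℤ) (hpos : 0 < n)
    (hq : IsPrimitiveRoot q e) (hq0 : q ≠ 0)
    (hAB : A ≤ B) (hBC : B + 2 ≤ C) (hCD : C ≤ D)
    (hDA : D + 2 ≤ A + e) (hn : B - A + 1 + (D - C + 1) ≤ n) (hne : n + (C - B) ≤ e + 1)
    (hQ : ∀ y : F[ε], ∏ j, (y - algebraMap F F[ε] (Q j)) =
      (y - algebraMap F F[ε] (q ^ A)) * (y - algebraMap F F[ε] (q ^ B)) *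
      (y - algebraMap F F[ε] (q ^ C)) * (y - algebraMap F F[ε] (q ^ D))) :
    ¬ FiniteRepType (ArikiKoike F n r q Q) := by
  rintro ⟨m, M, hM⟩
  let W : F → WeightDatum F n r q Q :=
    chainDatum e A B C D hpos hq hq0 hAB hBC hCD hDA hn hne hQ
  let k : Fin n := ⟨(B - A).toNat, by omega⟩
  let l : Fin n := ⟨n - 1, by omega⟩
  have hkv : ((k : ℕ) : ℤ) = B - A := by simp [k, hAB]
  have hlv : ((l : ℕ) : ℤ) = n - 1 := by simp only [l]; omega
  have hk : ∀ c : F, ((W c).x k).snd = q ^ A * c := by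
    intro c
    change (labelValue q n A B C D c (k : ℕ)).snd = _
    have h1 : labelExp n B C D (k : ℕ) = A := by
      unfold labelExp; split_ifs <;> omega
    rw [snd_value, labelSlope, h1, if_pos (by omega), if_neg (by omega)]
  have hl : ∀ c : F, ((W c).x l).snd = q ^ C := by
    intro c
    change (labelValue q n A B C D c (l : ℕ)).snd = _
    have h1 : labelExp n B C D (l : ℕ) = C := by
      unfold labelExp; split_ifs <;> omega
    rw [snd_value, labelSlope, h1, if_neg (by omega), if_neg (by omega), mul_one]
  have hl0 : ∀ c : F, ((W c).x l).snd ≠ 0 := fun c => by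
    rw [hl]
    exact zpow_ne_zero _ hq0
  choose f hf using fun c => hM (W c).carrier (W c).finite ((W c).indecomposable l (hl0 c))
  have : Infinite F := IsAlgClosed.instInfinite
  obtain ⟨c, c', hcc, hfc⟩ := Finite.exists_ne_map_eq_of_infinite f
  obtain ⟨E⟩ := hf c
  obtain ⟨E'⟩ := hf c'
  rw [← hfc] at E'
  have h := (W c).snd_eq_of_equiv (W c') (fun j => by
    change (labelValue q n A B C D c' (j : ℕ)).fst = (labelValue q n A B C D c (j : ℕ)).fst
    rw [fst_value, fst_value]) (E.trans E'.symm) k l (q ^ A * c / q ^ C) (hl0 c)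
    (by rw [hk, hl, div_mul_cancel₀ _ (zpow_ne_zero _ hq0)])
  rw [hk, hl, div_mul_cancel₀ _ (zpow_ne_zero _ hq0)] at h
  exact hcc (mul_left_cancel₀ (zpow_ne_zero _ hq0) h).symm

end Datum

/-- Under condition (CP) with `r = 4`: if
`n < min { 2 f⁺¹ + 4, f⁺² + 1 }` and `n ≥ g + 2`, then
`H_{n,4}(q, Q₁, Q₂, Q₃, Q₄)` is of infinite representation type. -/
theorem arikiKoike_infinite_four_params
    (F : Type) [Field F] [IsAlgClosed F] (n : ℕ) (hn : 1 ≤ n)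
    (e : ℕ) (he : 2 ≤ e) (q : F) (hq : IsPrimitiveRoot q e)
    (f : Fin 4 → ℕ) (hf : ∀ i, f i ≤ e - 1)
    (Q : Fin 4 → F) (hQ : ∀ i, Q i = q ^ f i)
    (f' : Fin 4 → ℕ) (σ : Equiv.Perm (Fin 4)) (hσ : ∀ i, f' i = f (σ i))
    (hmono : Monotone f')
    (hlt : n < min (2 * fPlusOne e 4 f' + 4) (fPlusTwo e 4 f' + 1))
    (hge : gMin e 4 f' + 2 ≤ n) :
    ¬ FiniteRepType (ArikiKoike F n 4 q Q) := by
  have hq0 : q ≠ 0 := hq.ne_zero (by omega)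
  have h01 : f' 0 ≤ f' 1 := hmono (by decide)
  have h12 : f' 1 ≤ f' 2 := hmono (by decide)
  have h23 : f' 2 ≤ f' 3 := hmono (by decide)
  have h3 : f' 3 ≤ e - 1 := hσ 3 ▸ hf _
  have E0 : extSeq e 4 f' 0 = f' 0 := by simp [extSeq]
  have E1 : extSeq e 4 f' 1 = f' 1 := by simp [extSeq]
  have E2 : extSeq e 4 f' 2 = f' 2 := by simp [extSeq]
  have E3 : extSeq e 4 f' 3 = f' 3 := by simp [extSeq]
  have E4 : extSeq e 4 f' 4 = e + f' 0 := by simp [extSeq]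
  have E5 : extSeq e 4 f' 5 = e + f' 1 := by simp [extSeq]
  have hle : ∀ i < 4, n ≤ extSeq e 4 f' (i + 2) - extSeq e 4 f' i := by
    intro i hi
    have : fPlusTwo e 4 f' ≤ extSeq e 4 f' (i + 2) - extSeq e 4 f' i :=
      Nat.sInf_le ⟨i, hi, rfl⟩
    omega
  have L0 := hle 0 (by omega)
  have L1 := hle 1 (by omega)
  have L2 := hle 2 (by omega)
  have L3 := hle 3 (by omega)
  have hg : gMin e 4 f' ∈ {d | ∃ i < 4, ∃ j < 4, i ≠ j ∧
      d = (extSeq e 4 f' (i + 1) - extSeq e 4 f' i)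
        + (extSeq e 4 f' (j + 1) - extSeq e 4 f' j)} :=
    Nat.sInf_mem ⟨_, 0, by omega, 1, by omega, by omega, rfl⟩
  have hprod : ∀ y : F[ε], ∏ j, (y - algebraMap F F[ε] (Q j)) =
      (y - algebraMap F F[ε] (q ^ f' 0)) * (y - algebraMap F F[ε] (q ^ f' 1)) *
      (y - algebraMap F F[ε] (q ^ f' 2)) * (y - algebraMap F F[ε] (q ^ f' 3)) := by
    intro y
    rw [← Equiv.prod_comp σ, Fin.prod_univ_four]
    simp only [hQ, ← hσ]
  -- the two small gaps are `[f'_1, f'_2]` and `[f'_3, f'_4]`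
  have case02 : (f' 1 - f' 0) + (f' 3 - f' 2) + 2 ≤ n →
      ¬ FiniteRepType (ArikiKoike F n 4 q Q) := by
    intro h
    simp only [zero_add, Nat.reduceAdd, E0, E1, E2, E3, E4, E5] at L0 L1 L2 L3
    refine not_finiteRepType_of_chains e (f' 0) (f' 1) (f' 2) (f' 3) hn hq hq0
      (by omega) (by omega) (by omega) (by omega) (by omega) (by omega) ?_
    intro y
    simpa only [zpow_natCast] using hprod y
  -- the two small gaps are `[f'_2, f'_3]` and `[f'_4, e + f'_1]`; here `q ^ e = 1` is used
  have case13 : (f' 2 - f' 1) + (e + f' 0 - f' 3) + 2 ≤ n →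
      ¬ FiniteRepType (ArikiKoike F n 4 q Q) := by
    intro h
    simp only [zero_add, Nat.reduceAdd, E0, E1, E2, E3, E4, E5] at L0 L1 L2 L3
    refine not_finiteRepType_of_chains e (f' 1) (f' 2) (f' 3) ((e + f' 0 : ℕ)) hn hq hq0
      (by omega) (by omega) (by omega) (by omega) (by omega) (by omega) ?_
    intro y
    rw [hprod y]
    simp only [zpow_natCast, pow_add, hq.pow_eq_one, one_mul]
    ring
  -- the sum of two adjacent gaps is at least `f⁺² ≥ n`, so the minimum is attained by opposite gaps
  obtain ⟨i, hi, j, hj, hij, hgij⟩ := hg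
  rw [hgij] at hge
  interval_cases i <;> interval_cases j <;>
    simp only [zero_add, Nat.reduceAdd, E0, E1, E2, E3, E4, E5] at hge L0 L1 L2 L3 <;>
    first
    | exact absurd rfl hij
    | exact case02 (by omega)
    | exact case13 (by omega)
end

section
/- Let F be an algebraically closed field, let q ∈ F be a primitive e-th root of unity for some integer e ≥ 2 (so q ≠ 1), let Q_1 ∈ F, and let n ≥ 1. The Ariki–Koike algebra H_{n,1}(q, Q_1), i.e. the Iwahori–Hecke algebra of type A_{n−1}, is a semisimple ring if and only if n < e. -/
/-!
Write `T_1, …, T_{n-1}` for the Hecke generators; at level one `T_0` is the scalar `Q₁`.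

If `e ≤ n`, consider `x = ∑_w T_w` (`symmetrizer`). It satisfies `T_i x = q x`, hence
`h x = χ(h) x` for the character `χ` with `χ(T_i) = q`, and `χ(x) = ∏_{k ≤ n} (1 + ⋯ + q^{k-1})`
vanishes because of the factor `k = e`. So the left ideal generated by `x` squares to zero. It is
nonzero, as is seen by letting `x` act on functions on the permutations (`permOp`,
`symmetrizer_permOp_ne_zero`). In a semisimple ring every left ideal is generated by an
idempotent, a contradiction.

If `n < e`, every subspace `W` of a finite dimensional representation stable under the generators
is the image of an equivariant projection (`HeckeRel.exists_projection`); applied to the regular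
representation, which is finite dimensional (`arikiKoike_finite`), this is semisimplicity. The
projection comes from a relative Maschke argument, by induction on the number of generators. Let
`U` be a minimal stable subspace and `p` a projection onto `U` which is equivariant for all
generators but the last. Let `L_k` be the Jucys-Murphy elements and `r = (L - u)⁻¹` the resolvent
of the last one. The relative trace turns `p r` into an equivariant map with image in `U`, which
on `U` is the relative trace `B` of `r`. A recursion for `B` (`HeckeRel.relTrace_resolvent`) shows
that on a joint eigenvector of the `L_k` with eigenvalues `a_k`, `B` is a nonzero multiple of
`1 - ∏_k (a_k - q u)(a_k - q⁻¹ u) / (a_k - u)²`. There are only `n < e` eigenvalues, so this is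
not identically zero in `u` (`content_poly_ne`). For generic `u` the map `B` is therefore a nonzero
scalar on the minimal subspace `U`, and dividing by it gives the projection. A complement is then
found by induction on the dimension of `W`.
-/

open scoped TensorProduct

/-! ### Jucys-Murphy elements and the relative trace -/

section HeckeElements

variable {F A : Type*} [Field F] [Ring A] [Algebra F A]

/-- The elements `s 0, …, s (m - 1)` of an `F`-algebra satisfy the relations of the Hecke
algebra of type `A_m` (so of `S_{m+1}`) with parameter `q`. The values `s i` with `m ≤ i` are
irrelevant. -/
structure HeckeRel (q : F) (m : ℕ) (s : ℕ → A) : Prop where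
  quad : ∀ i, i < m → s i * s i = (q - 1) • s i + q • (1 : A)
  braid : ∀ i, i + 1 < m → s i * s (i + 1) * s i = s (i + 1) * s i * s (i + 1)
  comm : ∀ i j, i + 2 ≤ j → j < m → s i * s j = s j * s i

theorem HeckeRel.mono {q : F} {m k : ℕ} {s : ℕ → A} (h : HeckeRel q m s) (hk : k ≤ m) :
    HeckeRel q k s :=
  ⟨fun i hi => h.quad i (by omega), fun i hi => h.braid i (by omega),
    fun i j hij hj => h.comm i j hij (by omega)⟩

/-- The multiplicative Jucys-Murphy elements `L_0 = 1`, `L_{k+1} = q⁻¹ s_k L_k s_k`. -/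
def jucysMurphy (q : F) (s : ℕ → A) : ℕ → A
  | 0 => 1
  | k + 1 => q⁻¹ • (s k * jucysMurphy q s k * s k)

/-- The relative trace
`∑_{j ≤ k} q^{-(k-j)} s_j ⋯ s_{k-1} a s_{k-1} ⋯ s_j`, a sum over the distinguished coset
representatives of the parabolic generated by `s_0, …, s_{k-2}` in the one generated by
`s_0, …, s_{k-1}`. -/
def relTrace (q : F) (s : ℕ → A) : ℕ → A → A
  | 0, a => a
  | k + 1, a => a + q⁻¹ • relTrace q s k (s k * a * s k)

variable {q : F} {m : ℕ} {s : ℕ → A}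

theorem jm_commute_of_commute {a : A} :
    ∀ k, (∀ i, i < k → Commute a (s i)) → Commute a (jucysMurphy q s k)
  | 0, _ => Commute.one_right a
  | k + 1, h => by
    have ih := jm_commute_of_commute k (fun i hi => h i (by omega))
    have hk := h k (by omega)
    exact ((hk.mul_right ih).mul_right hk).smul_right _

theorem HeckeRel.jm_commute_of_lt (h : HeckeRel q m s) {k i : ℕ} (hk : k < i) (hi : i < m) :
    Commute (s i) (jucysMurphy q s k) :=
  jm_commute_of_commute k fun j hj => (h.comm j i (by omega) hi).symm

theorem HeckeRel.jm_commute (h : HeckeRel q m s) :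
    ∀ {k i : ℕ}, i + 1 < k → k ≤ m → Commute (s i) (jucysMurphy q s k)
  | 0, i, hi, _ => by omega
  | 1, i, hi, _ => by omega
  | k + 2, i, hi, hk => by
    rcases Nat.lt_or_ge i k with hik | hik
    · have ih := h.jm_commute (k := k + 1) (i := i) (by omega) (by omega)
      have hc : Commute (s i) (s (k + 1)) := h.comm i (k + 1) (by omega) (by omega)
      exact ((hc.mul_right ih).mul_right hc).smul_right _
    · obtain rfl : i = k := by omega
      have hb := h.braid i (by omega)
      have hc : s (i + 1) * jucysMurphy q s i = jucysMurphy q s i * s (i + 1) :=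
        h.jm_commute_of_lt (by omega) (by omega)
      simp only [jucysMurphy]
      refine Commute.smul_right ?_ _
      rw [mul_smul_comm, smul_mul_assoc]
      refine Commute.smul_right ?_ _
      show _ = _
      set a := s i
      set b := s (i + 1)
      set L := jucysMurphy q s i
      calc a * (b * (a * L * a) * b) = (a * b * a) * L * a * b := by simp only [mul_assoc]
        _ = b * a * (b * L) * a * b := by rw [hb]; simp only [mul_assoc]
        _ = b * a * L * (b * a * b) := by rw [hc]; simp only [mul_assoc]
        _ = _ := by rw [← hb]; simp only [mul_assoc]

theorem HeckeRel.jm_jm_commute (h : HeckeRel q m s) {j k : ℕ} (hj : j ≤ m) (hk : k ≤ m) :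
    Commute (jucysMurphy q s j) (jucysMurphy q s k) := by
  wlog hjk : j ≤ k generalizing j k
  · exact (this hk hj (by omega)).symm
  rcases hjk.eq_or_lt with rfl | hlt
  · exact Commute.refl _
  · exact (jm_commute_of_commute j fun i hi => (h.jm_commute (by omega) hk).symm).symm

theorem relTrace_add : ∀ (k : ℕ) (a b : A),
    relTrace q s k (a + b) = relTrace q s k a + relTrace q s k b
  | 0, a, b => rfl
  | k + 1, a, b => by
    simp only [relTrace, mul_add, add_mul, relTrace_add k, smul_add]; abel

theorem relTrace_smul (c : F) : ∀ (k : ℕ) (a : A),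
    relTrace q s k (c • a) = c • relTrace q s k a
  | 0, a => rfl
  | k + 1, a => by
    simp only [relTrace, mul_smul_comm, smul_mul_assoc, relTrace_smul c k, smul_add]
    rw [smul_comm]

theorem relTrace_mul {a c : A} (b : A) : ∀ (k : ℕ), (∀ i, i < k → Commute a (s i)) →
    (∀ i, i < k → Commute c (s i)) → relTrace q s k (a * b * c) = a * relTrace q s k b * c
  | 0, _, _ => rfl
  | k + 1, ha, hc => by
    have e : s k * (a * b * c) * s k = a * (s k * b * s k) * c := by
      have h1 : a * s k = s k * a := ha k (by omega)
      have h2 : c * s k = s k * c := hc k (by omega)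
      calc _ = (s k * a) * b * (c * s k) := by simp only [mul_assoc]
        _ = _ := by rw [← h1, h2]; simp only [mul_assoc]
    simp only [relTrace]
    rw [e, relTrace_mul _ k (fun i hi => ha i (by omega)) (fun i hi => hc i (by omega))]
    simp only [mul_add, add_mul, mul_smul_comm, smul_mul_assoc]

theorem relTrace_mul_left {a : A} (b : A) (k : ℕ) (ha : ∀ i, i < k → Commute a (s i)) :
    relTrace q s k (a * b) = a * relTrace q s k b := by
  simpa using relTrace_mul (q := q) (c := 1) b k ha (fun i _ => Commute.one_left _)

theorem relTrace_mul_right {c : A} (b : A) (k : ℕ) (hc : ∀ i, i < k → Commute c (s i)) :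
    relTrace q s k (b * c) = relTrace q s k b * c := by
  simpa using relTrace_mul (q := q) (a := 1) b k (fun i _ => Commute.one_left _) hc

/-- The relative trace of an element that commutes with `s_0, …, s_{k-2}` commutes with
`s_0, …, s_{k-1}`. -/
theorem HeckeRel.relTrace_commute (h : HeckeRel q m s) (hq : q ≠ 0) :
    ∀ (k : ℕ) (a : A), k ≤ m → (∀ i, i + 1 < k → Commute (s i) a) →
      ∀ i, i < k → Commute (s i) (relTrace q s k a)
  | 0, _, _, _, i, hi => by omega
  | k + 1, a, hk, ha, i, hi => by
    rcases Nat.lt_or_ge i k with hik | hik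
    · have hca := ha i (by omega)
      refine hca.add_right (Commute.smul_right ?_ _)
      refine h.relTrace_commute hq k _ (by omega) (fun j hj => ?_) i hik
      have hc : Commute (s j) (s k) := h.comm j k (by omega) (by omega)
      exact (hc.mul_right (ha j (by omega))).mul_right hc
    · obtain rfl : i = k := by omega
      have hquad := h.quad i (by omega)
      have h12 : Commute (s i) (a + q⁻¹ • (s i * a * s i)) := by
        show _ = _
        have e1 : s i * (s i * a * s i) = (q - 1) • (s i * a * s i) + q • (a * s i) := by
          rw [← mul_assoc, ← mul_assoc, hquad]; simp [add_mul]
        have e2 : (s i * a * s i) * s i = (q - 1) • (s i * a * s i) + q • (s i * a) := by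
          rw [mul_assoc, hquad]; simp [mul_add]
        simp only [mul_add, add_mul, mul_smul_comm, smul_mul_assoc, e1, e2, smul_add,
          inv_smul_smul₀ hq]
        abel
      cases i with
      | zero => exact h12
      | succ k =>
        simp only [relTrace, smul_add]
        rw [← add_assoc]
        refine h12.add_right (Commute.smul_right (Commute.smul_right ?_ _) _)
        set b := s k * (s (k + 1) * a * s (k + 1)) * s k with hb
        have hcomm : ∀ i, i < k → Commute (s (k + 1)) (s i) := fun i hi =>
          (h.comm i (k + 1) (by omega) (by omega)).symm
        show _ = _
        rw [← relTrace_mul_left _ _ hcomm, ← relTrace_mul_right _ _ hcomm]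
        congr 1
        have hbr := h.braid k (by omega)
        have hak : s k * a = a * s k := ha k (by omega)
        calc s (k + 1) * b = (s (k + 1) * s k * s (k + 1)) * a * s (k + 1) * s k := by
              simp only [hb, mul_assoc]
          _ = s k * s (k + 1) * (s k * a) * s (k + 1) * s k := by
              rw [← hbr]; simp only [mul_assoc]
          _ = s k * s (k + 1) * a * (s k * s (k + 1) * s k) := by
              rw [hak]; simp only [mul_assoc]
          _ = b * s (k + 1) := by rw [hbr]; simp only [hb, mul_assoc]

/-- The additive description of the Jucys-Murphy elements, since the relative trace of `s_k` is a
sum of powers of `q` times the elements `T_{(j, k+1)}` attached to transpositions. -/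
theorem HeckeRel.relTrace_self (h : HeckeRel q m s) (hq : q ≠ 0) :
    ∀ k, k < m → (q⁻¹ * (q - 1)) • relTrace q s k (s k) = jucysMurphy q s (k + 1) - 1
  | 0, hk => by
    simp only [relTrace, jucysMurphy, mul_one, h.quad 0 hk, smul_add, smul_smul,
      inv_mul_cancel₀ hq, one_smul]
    abel
  | k + 1, hk => by
    have ih := h.relTrace_self hq k (by omega)
    have hcomm : ∀ i, i < k → Commute (s (k + 1)) (s i) := fun i hi =>
      (h.comm i (k + 1) (by omega) (by omega)).symm
    have hL : jucysMurphy q s (k + 1) = (q⁻¹ * (q - 1)) • relTrace q s k (s k) + 1 := by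
      rw [ih]; abel
    have hs := h.quad (k + 1) hk
    rw [relTrace, h.braid k hk, relTrace_mul _ _ hcomm hcomm, jucysMurphy.eq_2 q s (k + 1), hL]
    simp only [mul_add, add_mul, mul_smul_comm, smul_mul_assoc, smul_add, mul_one, hs, smul_smul,
      inv_mul_cancel₀ hq, one_smul]
    rw [show q⁻¹ * (q - 1) * q⁻¹ = q⁻¹ * (q⁻¹ * (q - 1)) by ring]
    abel

theorem commute_of_resolvent {L r x : A} {u : F} (h1 : r * (L - u • (1 : A)) = 1)
    (h2 : (L - u • (1 : A)) * r = 1) (hx : Commute L x) : Commute r x := by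
  have hx' : Commute (L - u • (1 : A)) x := hx.sub_left ((Commute.one_left x).smul_left u)
  show r * x = x * r
  calc r * x = r * (x * ((L - u • (1 : A)) * r)) := by rw [h2, mul_one]
    _ = r * (L - u • (1 : A)) * x * r := by
        rw [← mul_assoc x, ← hx'.eq]; simp only [mul_assoc]
    _ = x * r := by rw [h1, one_mul]

/-- Recursion for the relative traces `B_k` of the resolvents `r_k = (L_k - u)⁻¹` of the
Jucys-Murphy elements: with `L = L_{k+1}` and `r = r_{k+1}`,
`B_{k+1} = B_k (1 - θ L r²) + (1 - u) L r²` where `θ = q⁻¹ (q - 1)² u`. -/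
theorem HeckeRel.relTrace_resolvent (h : HeckeRel q m s) (hq : q ≠ 0) {u : F} {k : ℕ}
    (hk : k < m) {r r' : A}
    (hr0 : r * (jucysMurphy q s k - u • (1 : A)) = 1)
    (hr : (jucysMurphy q s k - u • (1 : A)) * r = 1)
    (hr1 : r' * (jucysMurphy q s (k + 1) - u • (1 : A)) = 1)
    (hr2 : (jucysMurphy q s (k + 1) - u • (1 : A)) * r' = 1) :
    relTrace q s (k + 1) r' =
      relTrace q s k r * (1 - (q⁻¹ * (q - 1) ^ 2 * u) • (jucysMurphy q s (k + 1) * (r' * r')))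
        + (1 - u) • (jucysMurphy q s (k + 1) * (r' * r')) := by
  have hself := h.relTrace_self hq k hk
  have hquad := h.quad k hk
  have hLcomm : ∀ i, i < k → Commute (jucysMurphy q s (k + 1)) (s i) := fun i hi =>
    (h.jm_commute (by omega) (by omega)).symm
  have hLdef : jucysMurphy q s (k + 1) = q⁻¹ • (s k * jucysMurphy q s k * s k) := rfl
  set T := s k
  set L := jucysMurphy q s k
  set L' := jucysMurphy q s (k + 1)
  -- the Bernstein relation `T L = M T - (q - 1) M` with `M = L_{k+1}`, and its consequence for the resolvents
  have hTinv : (T * (q⁻¹ • (T - (q - 1) • (1 : A)))) = 1 := by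
    rw [mul_smul_comm, mul_sub, hquad, mul_smul_comm, mul_one, add_sub_cancel_left, smul_smul,
      inv_mul_cancel₀ hq, one_smul]
  have hbern : T * L = L' * T - (q - 1) • L' := by
    have : T * L * (T * (q⁻¹ • (T - (q - 1) • (1 : A)))) = L' * (T - (q - 1) • (1 : A)) := by
      rw [hLdef]; simp only [mul_smul_comm, smul_mul_assoc, mul_assoc]
    rw [hTinv, mul_one] at this
    rw [this, mul_sub, mul_smul_comm, mul_one]
  have hrL' : Commute r' L' := by
    have h1 : r' * L' = 1 + u • r' := by
      have := hr1; rw [mul_sub, sub_eq_iff_eq_add, mul_smul_comm, mul_one] at this; exact this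
    have h2 : L' * r' = 1 + u • r' := by
      have := hr2; rw [sub_mul, sub_eq_iff_eq_add, smul_mul_assoc, one_mul] at this; exact this
    exact h1.trans h2.symm
  have hrcomm : ∀ {x : A}, Commute L' x → Commute r' x := fun hx =>
    commute_of_resolvent hr1 hr2 hx
  have hLL' : Commute L L' := h.jm_jm_commute (by omega) (by omega)
  have hrL : Commute r L' := commute_of_resolvent hr0 hr hLL'
  have hrr : Commute r r' := (hrcomm hrL.symm).symm
  have hLr : L' * r' = 1 + u • r' := by
    have := hr2; rw [sub_mul, sub_eq_iff_eq_add, smul_mul_assoc, one_mul] at this; exact this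
  have hTr : T * r = r' * T + (q - 1) • (L' * r' * r) := by
    have h1 : (L' - u • (1 : A)) * T = T * (L - u • (1 : A)) + (q - 1) • L' := by
      simp only [sub_mul, mul_sub, hbern, smul_mul_assoc, mul_smul_comm, one_mul, mul_one]; abel
    calc T * r = r' * ((L' - u • (1 : A)) * T) * r := by
          rw [← mul_assoc r', hr1, one_mul]
      _ = r' * T * ((L - u • (1 : A)) * r) + (q - 1) • (r' * L' * r) := by
          rw [h1]; simp only [mul_add, add_mul, mul_smul_comm, smul_mul_assoc, mul_assoc]
      _ = _ := by rw [hr, mul_one, hrL'.eq]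
  have hTrT : T * r' * T = q • r - ((q - 1) * u) • (r' * T * r')
      - ((q - 1) ^ 2 * u) • (r * (L' * (r' * r'))) := by
    have h1 : r' * T = T * r - (q - 1) • (r * (L' * r')) := by
      rw [hTr, ((hrL.mul_right hrr).eq : r * (L' * r') = _)]; abel
    have h2 : T * r' * T = q • r - ((q - 1) * u) • (T * r * r') := by
      rw [mul_assoc, h1, hLr, mul_sub, ← mul_assoc T T r, hquad]
      simp only [mul_add, add_mul, mul_smul_comm, smul_mul_assoc, mul_one, one_mul, mul_assoc]
      module
    rw [h2, hTr, ← ((hrL.mul_right hrr).eq : r * (L' * r') = _)]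
    simp only [add_mul, smul_mul_assoc, mul_assoc]
    module
  have hr'comm : ∀ i, i < k → Commute r' (s i) := fun i hi => hrcomm (hLcomm i hi)
  have hT1 : relTrace q s k (r' * T * r') = r' * relTrace q s k T * r' :=
    relTrace_mul _ _ hr'comm hr'comm
  have hT2 : relTrace q s k (r * (L' * (r' * r'))) = relTrace q s k r * (L' * (r' * r')) :=
    relTrace_mul_right _ _ fun i hi =>
      (hLcomm i hi).mul_left ((hr'comm i hi).mul_left (hr'comm i hi))
  have hT3 : q⁻¹ • ((q - 1) * u) • (r' * relTrace q s k T * r') = u • (r' * (L' - 1) * r') := by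
    rw [← hself]; simp only [mul_smul_comm, smul_mul_assoc, smul_smul]; congr 1; ring
  have hr'' : r' = L' * (r' * r') - u • (r' * r') := by
    rw [← mul_assoc, hLr, add_mul, smul_mul_assoc, one_mul]; abel
  have hfin : u • (r' * (L' - 1) * r') = u • (L' * (r' * r')) - u • (r' * r') := by
    rw [mul_sub, mul_one, sub_mul, hrL'.eq, mul_assoc, smul_sub]
  have hsum : r' = u • (r' * (L' - 1) * r') + (1 - u) • (L' * (r' * r')) := by
    rw [hfin]
    conv_lhs => rw [hr'']
    module
  rw [relTrace, show s k = T from rfl, hTrT, sub_eq_add_neg, sub_eq_add_neg, ← neg_smul,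
    ← neg_smul, relTrace_add, relTrace_add, relTrace_smul, relTrace_smul, relTrace_smul, hT1, hT2,
    smul_add, smul_add, inv_smul_smul₀ hq, neg_smul, smul_neg, hT3, mul_sub (relTrace q s k r), mul_one,
    mul_smul_comm]
  nth_rewrite 1 [hsum]
  module

end HeckeElements

/-! ### The spectral parameter -/

open Polynomial in
/-- The polynomials `∏ (a_k - q X)(a_k - q⁻¹ X)` and `∏ (a_k - X)²` differ when there are fewer
than `e` scalars `a_k`. If they were equal, the multiplicity function `f` of the family would
satisfy `f (q b) + f (q⁻¹ b) = 2 f b`; by the maximum principle it would be constant on the orbit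
under `q` of a point of maximal multiplicity, which has `e` elements. -/
theorem content_poly_ne {F : Type*} [Field F] {q : F} {e n : ℕ} (hq : IsPrimitiveRoot q e)
    (hn : 0 < n) (hne : n < e) (a : ℕ → F) (ha : ∀ k ∈ Finset.range n, a k ≠ 0) :
    (∏ k ∈ Finset.range n, ((C (a k) - C q * X) * (C (a k) - C q⁻¹ * X)) : F[X])
      - ∏ k ∈ Finset.range n, (C (a k) - X) ^ 2 ≠ 0 := by
  classical
  have hq0 : q ≠ 0 := hq.ne_zero (by omega)
  intro h0
  rw [sub_eq_zero] at h0
  let f : F → ℕ := fun b => ((Finset.range n).filter fun k => a k = b).card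
  have hlin : ∀ c d : F, d ≠ 0 → (C c - C d * X : F[X]) = C (-d) * (X - C (d⁻¹ * c)) := by
    intro c d hd
    rw [mul_sub, ← C_mul, show -d * (d⁻¹ * c) = -c by field_simp]
    simp only [C_neg]; ring
  have hroots : ∀ c d : F, d ≠ 0 → (C c - C d * X : F[X]).roots = {d⁻¹ * c} := by
    intro c d hd
    rw [hlin c d hd, roots_C_mul _ (neg_ne_zero.mpr hd), roots_X_sub_C]
  have hne0 : ∀ c d : F, d ≠ 0 → (C c - C d * X : F[X]) ≠ 0 := by
    intro c d hd h
    rw [hlin c d hd] at h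
    exact mul_ne_zero (C_ne_zero.mpr (neg_ne_zero.mpr hd)) (X_sub_C_ne_zero _) h
  have hcount : ∀ (b c : F), c ≠ 0 →
      (∑ k ∈ Finset.range n, Multiset.count b {c⁻¹ * a k}) = f (c * b) := by
    intro b c hc
    simp only [f, Finset.card_filter, Multiset.count_singleton]
    refine Finset.sum_congr rfl fun k _ => ?_
    have : b = c⁻¹ * a k ↔ a k = c * b := by
      constructor
      · rintro rfl; field_simp
      · intro h; rw [h]; field_simp
    simp only [this]
  have hharm : ∀ b : F, f (q * b) + f (q⁻¹ * b) = 2 * f b := by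
    intro b
    have h1 := congrArg (fun p : F[X] => Multiset.count b p.roots) h0
    have hX : ∀ k, (C (a k) - X : F[X]) = C (a k) - C 1 * X := by intro k; simp
    simp only [hX] at h1
    have hqi : q⁻¹ ≠ 0 := inv_ne_zero hq0
    rw [roots_prod _ _ (Finset.prod_ne_zero_iff.mpr fun k _ => mul_ne_zero (hne0 _ _ hq0) (hne0 _ _ hqi)),
      roots_prod _ _ (Finset.prod_ne_zero_iff.mpr fun k _ => pow_ne_zero 2 (hne0 _ _ one_ne_zero))] at h1
    simp only [Multiset.count_bind, roots_mul (mul_ne_zero (hne0 _ _ hq0) (hne0 _ _ hqi)), roots_pow,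
      hroots _ _ hq0, hroots _ _ hqi, hroots _ _ one_ne_zero, Multiset.count_add, Multiset.count_nsmul] at h1
    change ∑ k ∈ Finset.range n, _ = ∑ k ∈ Finset.range n, _ at h1
    rw [Finset.sum_add_distrib, ← Finset.mul_sum, hcount _ _ hq0, hcount _ _ hqi,
      hcount _ _ one_ne_zero, one_mul] at h1
    exact h1
  obtain ⟨k₀, hk₀, hmax⟩ := Finset.exists_max_image (Finset.range n) (fun k => f (a k))
    ⟨0, by simpa using hn⟩
  have hpos : 0 < f (a k₀) := Finset.card_pos.mpr ⟨k₀, by simpa using hk₀⟩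
  have hle : ∀ b, f b ≤ f (a k₀) := by
    intro b
    rcases Nat.eq_zero_or_pos (f b) with h | h
    · omega
    · obtain ⟨k, hk⟩ := Finset.card_pos.mp h
      rw [Finset.mem_filter] at hk
      rw [← hk.2]; exact hmax k hk.1
  have horbit : ∀ i : ℕ, f (q ^ i * a k₀) = f (a k₀) := by
    intro i
    induction i with
    | zero => simp
    | succ i ih =>
      have h1 := hharm (q ^ i * a k₀)
      have h2 := hle (q⁻¹ * (q ^ i * a k₀))
      have h3 := hle (q * (q ^ i * a k₀))
      rw [pow_succ', mul_assoc]
      omega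
  have hsub : (Finset.range e).image (fun i => q ^ i * a k₀) ⊆ (Finset.range n).image a := by
    intro b hb
    obtain ⟨i, -, rfl⟩ := Finset.mem_image.mp hb
    have : 0 < f (q ^ i * a k₀) := by rw [horbit]; exact hpos
    obtain ⟨k, hk⟩ := Finset.card_pos.mp this
    rw [Finset.mem_filter] at hk
    exact Finset.mem_image.mpr ⟨k, hk.1, hk.2⟩
  have hcard := (Finset.card_le_card hsub).trans Finset.card_image_le
  rw [Finset.card_image_of_injOn, Finset.card_range, Finset.card_range] at hcard
  · omega
  · intro i hi j hj hij
    simp only [Finset.coe_range, Set.mem_Iio] at hi hj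
    exact hq.pow_inj hi hj (mul_right_cancel₀ (ha k₀ hk₀) hij)

/-! ### Equivariant projections for `n < e` -/

section Projections

open Module

variable {F V : Type*} [Field F] [AddCommGroup V] [Module F V]

theorem HeckeRel.injective {q : F} {m : ℕ} {s : ℕ → End F V} (h : HeckeRel q m s) (hq : q ≠ 0)
    {i : ℕ} (hi : i < m) {v : V} (hv : s i v = 0) : v = 0 := by
  have := congrArg (fun f : End F V => f v) (h.quad i hi)
  simpa [hv, hq] using this.symm

theorem HeckeRel.jm_injective {q : F} {m : ℕ} {s : ℕ → End F V} (h : HeckeRel q m s)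
    (hq : q ≠ 0) : ∀ {k : ℕ}, k ≤ m → ∀ {v : V}, jucysMurphy q s k v = 0 → v = 0
  | 0, _, v, hv => by simpa [jucysMurphy] using hv
  | k + 1, hk, v, hv => by
    have hv' : s k (jucysMurphy q s k (s k v)) = 0 := by
      simpa [jucysMurphy, hq] using hv
    exact h.injective hq (by omega) (h.jm_injective hq (by omega) (h.injective hq (by omega) hv'))

theorem jm_mem {q : F} {s : ℕ → End F V} {U : Submodule F V} :
    ∀ {k : ℕ}, (∀ i, i < k → ∀ v ∈ U, s i v ∈ U) → ∀ v ∈ U, jucysMurphy q s k v ∈ U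
  | 0, _, v, hv => by simpa [jucysMurphy] using hv
  | k + 1, h, v, hv => by
    have := h k (by omega) _ (jm_mem (q := q) (k := k) (fun i hi => h i (by omega)) _ (h k (by omega) v hv))
    simpa [jucysMurphy] using U.smul_mem q⁻¹ this

theorem exists_common_eigenvector [IsAlgClosed F] [FiniteDimensional F V] (f : ℕ → End F V) :
    ∀ (n : ℕ), (∀ j < n, ∀ k < n, Commute (f j) (f k)) →
      ∀ (U : Submodule F V), U ≠ ⊥ → (∀ k < n, ∀ v ∈ U, f k v ∈ U) →
        ∃ v ∈ U, v ≠ 0 ∧ ∃ a : ℕ → F, ∀ k < n, f k v = a k • v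
  | 0, _, U, hU, _ => by
    obtain ⟨v, hv, hv0⟩ := U.ne_bot_iff.mp hU
    exact ⟨v, hv, hv0, 0, by simp⟩
  | n + 1, hc, U, hU, hs => by
    have : Nontrivial U := U.nontrivial_iff_ne_bot.mpr hU
    obtain ⟨c, hcv⟩ := Module.End.exists_eigenvalue ((f n).restrict (hs n (by omega)))
    obtain ⟨w, hw⟩ := hcv.exists_hasEigenvector
    have hw1 : f n (w : V) = c • (w : V) := by
      simpa using congrArg Subtype.val hw.apply_eq_smul
    have hw0 : (w : V) ≠ 0 := by simpa using hw.2
    obtain ⟨v, hv, hv0, a, ha⟩ := exists_common_eigenvector f n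
      (fun j hj k hk => hc j (by omega) k (by omega))
      (U ⊓ LinearMap.ker (f n - c • (1 : End F V)))
      ((Submodule.ne_bot_iff _).mpr ⟨w, ⟨w.2, by simp [hw1]⟩, hw0⟩)
      (by
        rintro k hk v ⟨hv, hv'⟩
        refine ⟨hs k (by omega) v hv, ?_⟩
        have h1 : f n v = c • v := by simpa [sub_eq_zero] using hv'
        have h2 : f n (f k v) = f k (f n v) :=
          congrArg (fun g : End F V => g v) (hc n (by omega) k (by omega)).eq
        simp [h2, h1])
    refine ⟨v, hv.1, hv0, fun k => if k = n then c else a k, fun k hk => ?_⟩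
    rcases eq_or_ne k n with rfl | hkn
    · have h1 : f k v = c • v := by simpa [sub_eq_zero] using hv.2
      simpa using h1
    · simpa [hkn] using ha k (by omega)

/-- The relative trace of the resolvent evaluated on a joint eigenvector of the Jucys-Murphy
elements. Each factor of the product equals `(a_j - q u)(a_j - q⁻¹ u) / (a_j - u)²`. -/
theorem HeckeRel.relTrace_eigenvector {q u : F} {m : ℕ} {s : ℕ → End F V} (h : HeckeRel q m s)
    (hq : q ≠ 0) (hu : u ≠ 1) {r : ℕ → End F V}
    (hr1 : ∀ k ≤ m, r k * (jucysMurphy q s k - u • (1 : End F V)) = 1)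
    (hr2 : ∀ k ≤ m, (jucysMurphy q s k - u • (1 : End F V)) * r k = 1)
    {v : V} {a : ℕ → F} (ha : ∀ k ≤ m, jucysMurphy q s k v = a k • v)
    (hau : ∀ k ≤ m, a k ≠ u) (hv : v ≠ 0) :
    ∀ k ≤ m, (q⁻¹ * (q - 1) ^ 2 * u) • relTrace q s k (r k) v =
      ((1 - u) * (1 - ∏ j ∈ Finset.range (k + 1),
        (1 - (q⁻¹ * (q - 1) ^ 2 * u) * (a j * ((a j - u)⁻¹) ^ 2)))) • v := by
  have hrv : ∀ k ≤ m, r k v = (a k - u)⁻¹ • v := by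
    intro k hk
    have h1 := congrArg (fun g : End F V => g v) (hr1 k hk)
    simp only [Module.End.mul_apply, LinearMap.sub_apply, ha k hk, LinearMap.smul_apply,
      Module.End.one_apply, ← sub_smul, map_smul] at h1
    conv_rhs => rw [← h1]
    rw [inv_smul_smul₀ (sub_ne_zero.mpr (hau k hk))]
  have hLrr : ∀ k ≤ m, (jucysMurphy q s k * (r k * r k)) v = (a k * ((a k - u)⁻¹) ^ 2) • v := by
    intro k hk
    simp only [Module.End.mul_apply, hrv k hk, map_smul, ha k hk, smul_smul]
    congr 1; ring
  intro k
  induction k with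
  | zero =>
    intro _
    have ha0 : a 0 = 1 := by
      have := ha 0 (by omega)
      simp only [jucysMurphy, Module.End.one_apply] at this
      have h2 : (a 0 - 1) • v = 0 := by rw [sub_smul, ← this, one_smul, sub_self]
      exact sub_eq_zero.mp ((smul_eq_zero.mp h2).resolve_right hv)
    have : (1 : F) - u ≠ 0 := sub_ne_zero.mpr (Ne.symm hu)
    simp only [relTrace, hrv 0 (by omega), ha0, smul_smul, zero_add, Finset.prod_range_one]
    congr 1
    field_simp
    ring
  | succ k ih =>
    intro hk
    rw [h.relTrace_resolvent hq (by omega) (hr1 k (by omega)) (hr2 k (by omega)) (hr1 _ hk)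
      (hr2 _ hk), Finset.prod_range_succ]
    have e := ih (by omega)
    set θ := q⁻¹ * (q - 1) ^ 2 * u
    simp only [LinearMap.add_apply, Module.End.mul_apply, LinearMap.sub_apply,
      Module.End.one_apply, LinearMap.smul_apply]
    simp only [← Module.End.mul_apply]
    rw [hLrr _ hk, smul_smul, ← one_smul F v, smul_smul, ← sub_smul, one_smul, map_smul, smul_add,
      smul_comm θ, e]
    module

theorem relTrace_range {q : F} {s : ℕ → End F V} {U : Submodule F V} :
    ∀ {k : ℕ} {a : End F V}, (∀ i, i < k → ∀ v ∈ U, s i v ∈ U) → (∀ v, a v ∈ U) →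
      ∀ v, relTrace q s k a v ∈ U
  | 0, a, _, ha, v => ha v
  | k + 1, a, hs, ha, v => by
    refine U.add_mem (ha v) (U.smul_mem _ ?_)
    exact relTrace_range (k := k) (a := s k * a * s k) (fun i hi => hs i (by omega))
      (fun w => hs k (by omega) _ (ha _)) v

theorem relTrace_congr {q : F} {s : ℕ → End F V} {U : Submodule F V} :
    ∀ {k : ℕ} {a b : End F V}, (∀ i, i < k → ∀ v ∈ U, s i v ∈ U) → (∀ v ∈ U, a v = b v) →
      ∀ v ∈ U, relTrace q s k a v = relTrace q s k b v
  | 0, a, b, _, hab, v, hv => hab v hv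
  | k + 1, a, b, hs, hab, v, hv => by
    have h1 := relTrace_congr (q := q) (k := k) (a := s k * a * s k) (b := s k * b * s k)
      (fun i hi => hs i (by omega))
      (fun w hw => by simp [hab _ (hs k (by omega) w hw)]) v hv
    simp only [relTrace, LinearMap.add_apply, LinearMap.smul_apply, hab v hv, h1]

/-- Relative Maschke theorem: a projection `p` onto a minimal stable subspace `U`, equivariant for
the generators `s_0, …, s_{m-2}`, is improved to one equivariant for `s_0, …, s_{m-1}`. The new
projection is a multiple of the relative trace of `p (L_m - u)⁻¹` for a generic scalar `u`. -/
theorem HeckeRel.exists_projection_of_minimal [IsAlgClosed F] [FiniteDimensional F V] {q : F}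
    {e m : ℕ} (hq : IsPrimitiveRoot q e) (he : 2 ≤ e) (hm : m + 1 < e) {s : ℕ → End F V}
    (h : HeckeRel q m s) {U : Submodule F V} (hs : ∀ i, i < m → ∀ v ∈ U, s i v ∈ U)
    (hU : U ≠ ⊥)
    (hmin : ∀ U' ≤ U, U' ≠ ⊥ → (∀ i, i < m → ∀ v ∈ U', s i v ∈ U') → U' = U)
    {p : End F V} (hpU : ∀ v, p v ∈ U) (hp1 : ∀ v ∈ U, p v = v)
    (hps : ∀ i, i + 1 < m → Commute (s i) p) :
    ∃ π : End F V, (∀ v, π v ∈ U) ∧ (∀ v ∈ U, π v = v) ∧ ∀ i, i < m → Commute (s i) π := by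
  have hq0 : q ≠ 0 := hq.ne_zero (by omega)
  have hq1 : q ≠ 1 := hq.ne_one (by omega)
  have hLs : ∀ k ≤ m, ∀ v ∈ U, jucysMurphy q s k v ∈ U := fun k hk =>
    jm_mem fun i hi => hs i (by omega)
  obtain ⟨v, hvU, hv0, a, ha⟩ := exists_common_eigenvector (jucysMurphy q s) (m + 1)
    (fun j hj k hk => h.jm_jm_commute (by omega) (by omega)) U hU
    (fun k hk => hLs k (by omega))
  have ha0 : ∀ k ∈ Finset.range (m + 1), a k ≠ 0 := by
    intro k hk h0
    rw [Finset.mem_range] at hk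
    exact hv0 (h.jm_injective hq0 (k := k) (by omega) (by rw [ha k hk, h0, zero_smul]))
  have hpoly := content_poly_ne hq (Nat.succ_pos m) hm a ha0
  set P := (∏ k ∈ Finset.range (m + 1), ((Polynomial.C (a k) - Polynomial.C q * Polynomial.X) *
      (Polynomial.C (a k) - Polynomial.C q⁻¹ * Polynomial.X)))
      - ∏ k ∈ Finset.range (m + 1), (Polynomial.C (a k) - Polynomial.X) ^ 2 with hP
  -- a generic `u`: the resolvents exist, and the scalar `c` below is nonzero
  obtain ⟨u, hu⟩ : ∃ u : F, u ∉ ({0, 1} ∪ {x | P.IsRoot x}) ∪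
      ⋃ k ∈ Finset.range (m + 1), {x | (jucysMurphy q s k).HasEigenvalue x} := by
    have hfin : (({0, 1} ∪ {x | P.IsRoot x}) ∪
        ⋃ k ∈ Finset.range (m + 1), {x | (jucysMurphy q s k).HasEigenvalue x} : Set F).Finite := by
      refine ((Set.toFinite _).union (Polynomial.finite_setOfPred_isRoot hpoly)).union ?_
      refine Set.Finite.biUnion (Finset.finite_toSet _) fun k _ => ?_
      exact Module.End.finite_hasEigenvalue _
    exact hfin.exists_notMem
  simp only [Set.mem_union, Set.mem_insert_iff, Set.mem_singleton_iff, Set.mem_ofPred_eq,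
    Set.mem_iUnion, not_or, not_exists, Finset.mem_range] at hu
  obtain ⟨⟨⟨hu0, hu1⟩, huP⟩, huL⟩ := hu
  have hau : ∀ k ≤ m, a k ≠ u := by
    rintro k hk rfl
    exact huL k (by omega) (Module.End.hasEigenvalue_of_hasEigenvector
      (Module.End.hasEigenvector_iff.mpr
        ⟨Module.End.mem_eigenspace_iff.mpr (ha k (by omega)), hv0⟩))
  have hunit : ∀ k, ∃ r : End F V, k ≤ m →
      r * (jucysMurphy q s k - u • (1 : End F V)) = 1 ∧
      (jucysMurphy q s k - u • (1 : End F V)) * r = 1 := by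
    intro k
    by_cases hk : k ≤ m
    · have : IsUnit (jucysMurphy q s k - u • (1 : End F V)) := by
        rw [LinearMap.isUnit_iff_ker_eq_bot]
        by_contra hne
        refine huL k (by omega) ?_
        intro hbot
        apply hne
        rw [← hbot]
        exact (Module.End.eigenspace_def (f := jucysMurphy q s k) (μ := u)).symm
      obtain ⟨w, hw⟩ := this
      exact ⟨↑w⁻¹, fun _ => by rw [← hw]; exact ⟨w.inv_mul, w.mul_inv⟩⟩
    · exact ⟨0, fun h => absurd h hk⟩
  choose r hr using hunit
  set θ := q⁻¹ * (q - 1) ^ 2 * u with hθ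
  have hθ0 : θ ≠ 0 :=
    mul_ne_zero (mul_ne_zero (inv_ne_zero hq0) (pow_ne_zero 2 (sub_ne_zero.mpr hq1))) hu0
  set B := relTrace q s m (r m) with hB
  have hBv := h.relTrace_eigenvector hq0 hu1 (fun k hk => (hr k hk).1) (fun k hk => (hr k hk).2)
    (fun k hk => ha k (by omega)) hau hv0 m le_rfl
  set c := θ⁻¹ * ((1 - u) * (1 - ∏ j ∈ Finset.range (m + 1),
        (1 - θ * (a j * ((a j - u)⁻¹) ^ 2)))) with hc
  have hBv' : B v = c • v := by
    rw [hc, ← smul_smul, ← hBv, inv_smul_smul₀ hθ0]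
  have hc0 : c ≠ 0 := by
    refine mul_ne_zero (inv_ne_zero hθ0) (mul_ne_zero (sub_ne_zero.mpr (Ne.symm hu1)) ?_)
    intro h1
    apply huP
    have hfac : ∀ j ∈ Finset.range (m + 1), (a j - q * u) * (a j - q⁻¹ * u) =
        (1 - θ * (a j * ((a j - u)⁻¹) ^ 2)) * (a j - u) ^ 2 := by
      intro j hj
      rw [Finset.mem_range] at hj
      have : a j - u ≠ 0 := sub_ne_zero.mpr (hau j (by omega))
      rw [hθ]
      field_simp
      ring
    rw [hP, Polynomial.IsRoot, Polynomial.eval_sub, Polynomial.eval_prod, Polynomial.eval_prod]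
    simp only [Polynomial.eval_mul, Polynomial.eval_sub, Polynomial.eval_C, Polynomial.eval_X,
      Polynomial.eval_pow]
    rw [Finset.prod_congr rfl hfac, Finset.prod_mul_distrib, ← sub_eq_zero.mp h1, one_mul, sub_self]
  -- `r m` commutes with the smaller parabolic and preserves `U`
  have hrs : ∀ i, i + 1 < m → Commute (s i) (r m) := fun i hi =>
    (commute_of_resolvent (hr m le_rfl).1 (hr m le_rfl).2
      (h.jm_commute hi le_rfl).symm).symm
  have hBs : ∀ i, i < m → Commute (s i) B := h.relTrace_commute hq0 m _ le_rfl hrs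
  have hrU : ∀ w ∈ U, r m w ∈ U := by
    intro w hw
    set D := jucysMurphy q s m - u • (1 : End F V) with hD
    have hDU : ∀ w ∈ U, D w ∈ U := fun w hw =>
      U.sub_mem (hLs m le_rfl w hw) (U.smul_mem _ hw)
    have hinj : Function.Injective (D.restrict hDU) := by
      intro x y hxy
      have h1 : D x = D y := congrArg Subtype.val hxy
      have h2 := congrArg (r m) h1
      have h3 : ∀ z, r m (D z) = z := fun z => congrArg (fun g : End F V => g z) (hr m le_rfl).1
      rw [h3, h3] at h2
      exact Subtype.ext h2
    obtain ⟨y, hy⟩ := LinearMap.surjective_of_injective hinj ⟨w, hw⟩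
    have hy' : D y = w := congrArg Subtype.val hy
    have h3 : r m (D y) = y := congrArg (fun g : End F V => g y) (hr m le_rfl).1
    rw [← hy', h3]
    exact y.2
  -- by minimality of `U`, the equivariant operator `B` is the scalar `c` on `U`
  have hBU : ∀ w ∈ U, B w = c • w := by
    have hle : U ⊓ LinearMap.ker (B - c • (1 : End F V)) = U := by
      refine hmin _ inf_le_left ((Submodule.ne_bot_iff _).mpr ⟨v, ⟨hvU, by simp [hBv']⟩, hv0⟩) ?_
      rintro i hi w ⟨hw, hw'⟩
      refine ⟨hs i hi w hw, ?_⟩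
      have h1 : B w = c • w := by simpa [sub_eq_zero] using hw'
      have h2 : s i (B w) = B (s i w) := congrArg (fun g : End F V => g w) (hBs i hi).eq
      simp [← h2, h1]
    intro w hw
    rw [← hle] at hw
    simpa [sub_eq_zero] using hw.2
  refine ⟨c⁻¹ • relTrace q s m (p * r m), fun w => ?_, fun w hw => ?_, fun i hi => ?_⟩
  · exact U.smul_mem _ (relTrace_range (a := p * r m) hs (fun x => hpU _) w)
  · have h1 : relTrace q s m (p * r m) w = B w :=
      relTrace_congr hs (fun x hx => hp1 _ (hrU x hx)) w hw
    rw [LinearMap.smul_apply, h1, hBU w hw, inv_smul_smul₀ hc0]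
  · exact (h.relTrace_commute hq0 m _ le_rfl
      (fun j hj => (hps j hj).mul_right (hrs j hj)) i hi).smul_right _

/-- Stable subspaces are images of equivariant projections when `m + 1 < e`; induction on the
number of generators, then on the dimension of the subspace. -/
theorem HeckeRel.exists_projection [IsAlgClosed F] [FiniteDimensional F V] {q : F}
    {e : ℕ} (hq : IsPrimitiveRoot q e) (he : 2 ≤ e) {s : ℕ → End F V} :
    ∀ m : ℕ, m + 1 < e → HeckeRel q m s → ∀ W : Submodule F V,
      (∀ i, i < m → ∀ v ∈ W, s i v ∈ W) →
      ∃ π : End F V, (∀ v, π v ∈ W) ∧ (∀ v ∈ W, π v = v) ∧ ∀ i, i < m → Commute (s i) π := by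
  intro m
  induction m with
  | zero =>
    intro _ _ W _
    obtain ⟨f, hf⟩ := W.subtype.exists_leftInverse_of_injective W.ker_subtype
    refine ⟨W.subtype ∘ₗ f, fun v => (f v).2, fun v hv => ?_, fun i hi => by omega⟩
    exact congrArg Subtype.val (congrArg (fun g => g (⟨v, hv⟩ : W)) hf)
  | succ m ihm =>
    intro hm h W
    induction hd : Module.finrank F W using Nat.strong_induction_on generalizing W with
    | _ d ih =>
    intro hW
    by_cases hbot : W = ⊥
    · exact ⟨0, fun v => W.zero_mem, fun v hv => by subst hbot; simpa using hv.symm,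
        fun i _ => Commute.zero_right _⟩
    -- a minimal nonzero stable subspace of `W`
    let S : Set (Submodule F V) := {U | U ≤ W ∧ U ≠ ⊥ ∧ ∀ i, i < m + 1 → ∀ v ∈ U, s i v ∈ U}
    obtain ⟨U, ⟨hUW, hU0, hUs⟩, hUmin⟩ := WellFounded.has_min
      (IsWellFounded.wf : WellFounded ((· < ·) : Submodule F V → Submodule F V → Prop)) S
      ⟨W, le_rfl, hbot, hW⟩
    obtain ⟨p, hpU, hp1, hps⟩ := ihm (by omega) (h.mono (by omega)) U
      (fun i hi => hUs i (by omega))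
    obtain ⟨π₁, h1U, h11, h1s⟩ := h.exists_projection_of_minimal hq he hm hUs hU0
      (fun U' hle hne hst => by
        by_contra hcon
        exact hUmin U' ⟨hle.trans hUW, hne, hst⟩ (lt_of_le_of_ne hle hcon))
      hpU hp1 (fun i hi => hps i (by omega))
    have hcomm : ∀ i, i < m + 1 → ∀ v, s i (π₁ v) = π₁ (s i v) := fun i hi v =>
      congrArg (fun g : End F V => g v) (h1s i hi).eq
    have hlt : W ⊓ LinearMap.ker π₁ < W := by
      refine lt_of_le_of_ne inf_le_left fun heq => ?_
      obtain ⟨x, hx, hx0⟩ := U.ne_bot_iff.mp hU0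
      have : x ∈ W ⊓ LinearMap.ker π₁ := by rw [heq]; exact hUW hx
      exact hx0 ((h11 x hx).symm.trans this.2)
    obtain ⟨π₂, h2W, h21, h2s⟩ := ih _ (hd ▸ Submodule.finrank_lt_finrank_of_lt hlt)
      (W ⊓ LinearMap.ker π₁) rfl (by
        rintro i hi v ⟨hv, hv'⟩
        refine ⟨hW i hi v hv, ?_⟩
        have : π₁ v = 0 := hv'
        simp [← hcomm i hi, this])
    refine ⟨π₁ + π₂ * (1 - π₁), fun v => W.add_mem (hUW (h1U v)) (h2W _).1, fun v hv => ?_,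
      fun i hi => (h1s i hi).add_right
        ((h2s i hi).mul_right ((Commute.one_right _).sub_right (h1s i hi)))⟩
    have hker : v - π₁ v ∈ W ⊓ LinearMap.ker π₁ := by
      refine ⟨W.sub_mem hv (hUW (h1U v)), ?_⟩
      simp [h11 _ (h1U v)]
    have := h21 _ hker
    simp only [LinearMap.add_apply, Module.End.mul_apply, LinearMap.sub_apply,
      Module.End.one_apply, this]
    abel

end Projections

/-! ### The symmetrizer -/

section Symmetrizer

variable {F A : Type*} [Field F] [Ring A] [Algebra F A] {q : F} {m : ℕ} {s : ℕ → A}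

/-- The sum `∑_{j ≤ k} s_j s_{j+1} ⋯ s_{k-1} a`. -/
def cosetSum (s : ℕ → A) : ℕ → A → A
  | 0, a => a
  | k + 1, a => a + cosetSum s k (s k * a)

/-- The element `∑_w T_w` of the Hecke algebra generated by `s_0, …, s_{k-1}`, built up along the
chain of parabolic subalgebras. -/
def symmetrizer (s : ℕ → A) : ℕ → A
  | 0 => 1
  | k + 1 => cosetSum s (k + 1) (symmetrizer s k)

theorem mul_cosetSum {c : A} : ∀ (k : ℕ) (a : A), (∀ i, i < k → c * s i = s i * c) →
    c * cosetSum s k a = cosetSum s k (c * a)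
  | 0, _, _ => rfl
  | k + 1, a, hc => by
    rw [cosetSum, cosetSum, mul_add, mul_cosetSum k _ fun i hi => hc i (by omega), ← mul_assoc,
      hc k (by omega), mul_assoc]

theorem cosetSum_smul (c : F) : ∀ (k : ℕ) (a : A), cosetSum s k (c • a) = c • cosetSum s k a
  | 0, _ => rfl
  | k + 1, a => by rw [cosetSum, cosetSum, mul_smul_comm, cosetSum_smul c k, smul_add]

theorem HeckeRel.mul_cosetSum_eq (h : HeckeRel q m s) :
    ∀ (k : ℕ) (a : A), k ≤ m → (∀ i, i + 1 < k → s i * a = q • a) →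
      ∀ i, i < k → s i * cosetSum s k a = q • cosetSum s k a
  | 0, _, _, _, i, hi => by omega
  | k + 1, a, hk, ha, i, hi => by
    rcases Nat.lt_or_ge i k with hik | hik
    · rw [cosetSum, mul_add, ha i (by omega),
        h.mul_cosetSum_eq k (s k * a) (by omega) (fun j hj => ?_) i hik, smul_add]
      rw [← mul_assoc, h.comm j k (by omega) (by omega), mul_assoc, ha j (by omega),
        mul_smul_comm]
    · obtain rfl : i = k := by omega
      have h12 : s i * (a + s i * a) = q • (a + s i * a) := by
        rw [mul_add, ← mul_assoc, h.quad i (by omega), add_mul, smul_mul_assoc, smul_mul_assoc,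
          one_mul]
        module
      cases i with
      | zero => exact h12
      | succ k =>
        rw [cosetSum, cosetSum, ← add_assoc, mul_add, h12, mul_cosetSum k _ fun i hi =>
          (h.comm i (k + 1) (by omega) (by omega)).symm, smul_add q (a + s (k + 1) * a), ← cosetSum_smul]
        congr 2
        rw [← mul_assoc, ← mul_assoc, ← h.braid k (by omega), mul_assoc, ha k (by omega),
          mul_smul_comm, mul_assoc]

theorem HeckeRel.mul_symmetrizer (h : HeckeRel q m s) :
    ∀ (k : ℕ), k ≤ m → ∀ i, i < k → s i * symmetrizer s k = q • symmetrizer s k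
  | 0, _, i, hi => by omega
  | k + 1, hk, i, hi =>
    h.mul_cosetSum_eq (k + 1) _ hk (fun j hj => h.mul_symmetrizer k (by omega) j (by omega)) i hi

theorem cosetSum_map {B : Type*} [Ring B] (f : A →+* B) (s : ℕ → A) : ∀ (k : ℕ) (a : A),
    f (cosetSum s k a) = cosetSum (fun i => f (s i)) k (f a)
  | 0, _ => rfl
  | k + 1, a => by rw [cosetSum, cosetSum, map_add, cosetSum_map f s k, map_mul]

theorem symmetrizer_map {B : Type*} [Ring B] (f : A →+* B) (s : ℕ → A) : ∀ k : ℕ,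
    f (symmetrizer s k) = symmetrizer (fun i => f (s i)) k
  | 0 => map_one f
  | k + 1 => by rw [symmetrizer, cosetSum_map, symmetrizer_map f s k, symmetrizer]

theorem cosetSum_congr {t : ℕ → A} : ∀ (k : ℕ) (a : A), (∀ i, i < k → s i = t i) →
    cosetSum s k a = cosetSum t k a
  | 0, _, _ => rfl
  | k + 1, a, h => by
    rw [cosetSum, cosetSum, cosetSum_congr k _ fun i hi => h i (by omega), h k (by omega)]

theorem symmetrizer_congr {t : ℕ → A} : ∀ (k : ℕ), (∀ i, i < k → s i = t i) →
    symmetrizer s k = symmetrizer t k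
  | 0, _ => rfl
  | k + 1, h => by
    rw [symmetrizer, symmetrizer, symmetrizer_congr k fun i hi => h i (by omega),
      cosetSum_congr (k + 1) _ h]

theorem cosetSum_const (q : F) : ∀ (k : ℕ) (a : F),
    cosetSum (fun _ => q) k a = (∑ i ∈ Finset.range (k + 1), q ^ i) * a
  | 0, a => by simp [cosetSum]
  | k + 1, a => by
    rw [cosetSum, cosetSum_const q k, Finset.sum_range_succ' _ (k + 1)]
    simp only [pow_succ, ← Finset.sum_mul]
    ring

/-- The value of the symmetrizer at the character `T_i ↦ q` is `∏_{j ≤ k+1} (1 + q + ⋯ + q^{j-1})`,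
and the factor `j = e` vanishes. -/
theorem symmetrizer_const_eq_zero {e : ℕ} (hq : IsPrimitiveRoot q e) (he : 2 ≤ e) :
    ∀ k : ℕ, e ≤ k + 1 → symmetrizer (fun _ => q) k = 0
  | 0, h => by omega
  | k + 1, h => by
    rw [symmetrizer, cosetSum_const]
    rcases Nat.lt_or_ge e (k + 2) with h1 | h1
    · rw [symmetrizer_const_eq_zero hq he k (by omega), mul_zero]
    · obtain rfl : e = k + 2 := by omega
      rw [hq.geom_sum_eq_zero (by omega), zero_mul]

end Symmetrizer

/-! ### The action on functions on permutations -/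

section PermutationModule

open Equiv Module

variable {F : Type*} [Field F]

/-- The Hecke generator `T_i` acting on functions on the permutations of `ℕ`; on indicator
functions this is the regular representation: `w` goes to `w s_i` if `w i < w (i + 1)`, and to
`q (w s_i) + (q - 1) w` otherwise. -/
def permOp (q : F) (i : ℕ) : End F (Perm ℕ → F) where
  toFun f w := if w i < w (i + 1) then q * f (w * swap i (i + 1))
    else f (w * swap i (i + 1)) + (q - 1) * f w
  map_add' f g := by
    funext w; simp only [Pi.add_apply]; split_ifs <;> ring
  map_smul' c f := by
    funext w; simp only [Pi.smul_apply, smul_eq_mul, RingHom.id_apply]; split_ifs <;> ring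

theorem permOp_apply (q : F) (i : ℕ) (f : Perm ℕ → F) (w : Perm ℕ) :
    permOp q i f w = if w i < w (i + 1) then q * f (w * swap i (i + 1))
    else f (w * swap i (i + 1)) + (q - 1) * f w := rfl

theorem permOp_quad (q : F) (i : ℕ) :
    permOp q i * permOp q i = (q - 1) • permOp q i + q • (1 : End F (Perm ℕ → F)) := by
  ext f w
  have hne : w i ≠ w (i + 1) := fun h => by simpa using w.injective h
  have h2 : w * swap i (i + 1) * swap i (i + 1) = w := by simp [mul_assoc]
  simp only [Module.End.mul_apply, permOp_apply, LinearMap.add_apply, LinearMap.smul_apply,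
    Pi.add_apply, Pi.smul_apply, Module.End.one_apply, smul_eq_mul, h2, Perm.mul_apply,
    swap_apply_left, swap_apply_right]
  rcases hne.lt_or_gt with h | h
  · simp only [h, h.not_gt, if_true, if_false]; ring
  · simp only [h, h.not_gt, if_true, if_false]; ring

theorem permOp_braid (q : F) (i : ℕ) :
    permOp q i * permOp q (i + 1) * permOp q i =
      permOp q (i + 1) * permOp q i * permOp q (i + 1) := by
  ext f w
  set a := swap i (i + 1) with ha
  set b := swap (i + 1) (i + 1 + 1) with hb
  have a0 : a i = i + 1 := swap_apply_left _ _
  have a1 : a (i + 1) = i := swap_apply_right _ _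
  have a2 : a (i + 1 + 1) = i + 1 + 1 := swap_apply_of_ne_of_ne (by omega) (by omega)
  have b0 : b i = i := swap_apply_of_ne_of_ne (by omega) (by omega)
  have b1 : b (i + 1) = i + 1 + 1 := swap_apply_left _ _
  have b2 : b (i + 1 + 1) = i + 1 := swap_apply_right _ _
  have hab : w * a * b * a = w * b * a * b := by
    have : a * b * a = b * a * b := by
      conv_lhs => rw [ha, mul_swap_eq_swap_mul, ← ha, Perm.mul_apply, Perm.mul_apply, b0, b1, a0, a2]
      rw [mul_assoc]
    simp only [mul_assoc] at this ⊢
    rw [this]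
  have haa : ∀ v : Perm ℕ, v * a * a = v := fun v => by simp [ha, mul_assoc]
  have hbb : ∀ v : Perm ℕ, v * b * b = v := fun v => by simp [hb, mul_assoc]
  have n01 : w i ≠ w (i + 1) := fun h => by simpa using w.injective h
  have n12 : w (i + 1) ≠ w (i + 1 + 1) := fun h => by simpa using w.injective h
  have n02 : w i ≠ w (i + 1 + 1) := fun h => by have := w.injective h; omega
  simp only [Module.End.mul_apply, permOp_apply, ← ha, ← hb, Perm.mul_apply, a0, a1, a2, b0, b1,
    b2, haa, hbb, hab]
  rcases n01.lt_or_gt with h1 | h1 <;> rcases n12.lt_or_gt with h2 | h2 <;>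
    rcases n02.lt_or_gt with h3 | h3 <;>
    first
    | omega
    | (simp only [h1, h2, h3, h1.not_gt, h2.not_gt, h3.not_gt, if_true, if_false] <;> ring)

theorem permOp_comm (q : F) {i j : ℕ} (hij : i + 2 ≤ j) :
    permOp q i * permOp q j = permOp q j * permOp q i := by
  ext f w
  set a := swap i (i + 1) with ha
  set b := swap j (j + 1) with hb
  have a0 : a j = j := swap_apply_of_ne_of_ne (by omega) (by omega)
  have a1 : a (j + 1) = j + 1 := swap_apply_of_ne_of_ne (by omega) (by omega)
  have hab : w * a * b = w * b * a := by
    rw [mul_assoc, hb, mul_swap_eq_swap_mul, a0, a1, mul_assoc]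
  have b0 : b i = i := swap_apply_of_ne_of_ne (by omega) (by omega)
  have b1 : b (i + 1) = i + 1 := swap_apply_of_ne_of_ne (by omega) (by omega)
  simp only [Module.End.mul_apply, permOp_apply, ← ha, ← hb, Perm.mul_apply, a0, a1, b0, b1, hab]
  split_ifs <;> ring

theorem permOp_hecke (q : F) (m : ℕ) : HeckeRel q m (permOp q) :=
  ⟨fun i _ => permOp_quad q i, fun i _ => permOp_braid q i, fun _ _ hij _ => permOp_comm q hij⟩

/-- The function `f` is supported on permutations that fix every `j ≥ k`. -/
def SuppLow (k : ℕ) (f : Perm ℕ → F) : Prop := ∀ w, f w ≠ 0 → ∀ j, k ≤ j → w j = j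

theorem SuppLow.mono {k l : ℕ} {f : Perm ℕ → F} (h : SuppLow k f) (hkl : k ≤ l) : SuppLow l f :=
  fun w hw j hj => h w hw j (hkl.trans hj)

theorem SuppLow.permOp {q : F} {k i : ℕ} {f : Perm ℕ → F} (h : SuppLow k f) (hi : i + 1 < k) :
    SuppLow k (permOp q i f) := by
  intro w hw j hj
  rw [permOp_apply] at hw
  by_cases h1 : f (w * swap i (i + 1)) = 0
  · by_cases h2 : f w = 0
    · simp [h1, h2] at hw
    · exact h w h2 j hj
  · have := h _ h1 j hj
    rwa [Perm.mul_apply, swap_apply_of_ne_of_ne (by omega) (by omega)] at this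

theorem SuppLow.cosetSum {q : F} {l : ℕ} : ∀ {k : ℕ} {a : End F (Perm ℕ → F)} {f : Perm ℕ → F},
    SuppLow l (a f) → k < l → SuppLow l (cosetSum (_root_.permOp q) k a f)
  | 0, _, _, h, _ => h
  | k + 1, a, f, h, hk => by
    have h2 := SuppLow.cosetSum (q := q) (k := k) (a := _root_.permOp q k * a) (f := f)
      (h.permOp hk) (by omega)
    intro w hw j hj
    by_cases h1 : a f w = 0
    · refine h2 w (fun h3 => hw ?_) j hj
      simp [_root_.cosetSum, h1, h3]
    · exact h w h1 j hj

theorem suppLow_symmetrizer {q : F} {f : Perm ℕ → F} (hf : SuppLow 0 f) :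
    ∀ k, SuppLow (k + 1) (symmetrizer (permOp q) k f)
  | 0 => hf.mono (by omega)
  | k + 1 => ((suppLow_symmetrizer hf k).mono (by omega)).cosetSum (by omega)

/-- If `a f` is supported on permutations that send the position `k` to the value `N`, larger than
the values at earlier positions, then each later generator moves `N` one position to the left, so
the identity never enters the support as long as `k < N`. -/
theorem cosetSum_apply_one_eq_zero {q : F} {N : ℕ} : ∀ {k : ℕ} {a : End F (Perm ℕ → F)}
    {f : Perm ℕ → F}, k < N → (∀ w, a f w ≠ 0 → w k = N ∧ ∀ j < k, w j < N) →
      cosetSum (permOp q) k a f 1 = 0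
  | 0, a, f, hk, h => by
    by_contra hne
    have := (h 1 hne).1
    simp at this; omega
  | k + 1, a, f, hk, h => by
    have h1 : a f 1 = 0 := by
      by_contra hne
      have := (h 1 hne).1
      simp at this; omega
    have h2 := cosetSum_apply_one_eq_zero (q := q) (N := N) (k := k) (a := permOp q k * a) (f := f)
      (by omega) (by
        intro w hw
        rw [Module.End.mul_apply, permOp_apply] at hw
        by_cases h3 : a f (w * swap k (k + 1)) = 0
        · by_cases h4 : a f w = 0
          · simp [h3, h4] at hw
          · obtain ⟨h5, h6⟩ := h w h4
            have := h6 k (by omega)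
            simp [h3, h5, this] at hw
        · obtain ⟨h5, h6⟩ := h _ h3
          refine ⟨by simpa using h5, fun j hj => ?_⟩
          have := h6 j (by omega)
          rwa [Perm.mul_apply, swap_apply_of_ne_of_ne (by omega) (by omega)] at this)
    simp [cosetSum, h1, h2]

/-- The coefficient at the identity is left unchanged: the only term of `∑_w T_w` that
contributes to it is `T_1`. -/
theorem symmetrizer_apply_one {q : F} {f : Perm ℕ → F} (hf : SuppLow 0 f) :
    ∀ k, symmetrizer (permOp q) k f 1 = f 1
  | 0 => rfl
  | k + 1 => by
    have hS := suppLow_symmetrizer (q := q) hf k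
    have key : ∀ w, symmetrizer (permOp q) k f w ≠ 0 →
        w (k + 1) = k + 1 ∧ ∀ j < k + 1, w j < k + 1 := by
      intro w hw
      refine ⟨hS w hw _ le_rfl, fun j hj => ?_⟩
      by_contra hcon
      have h1 := hS w hw (w j) (by omega)
      have := w.injective h1
      omega
    have h0 : cosetSum (permOp q) k (permOp q k * symmetrizer (permOp q) k) f 1 = 0 := by
      refine cosetSum_apply_one_eq_zero (N := k + 1) (by omega) fun w hw => ?_
      rw [Module.End.mul_apply, permOp_apply] at hw
      by_cases h3 : symmetrizer (permOp q) k f (w * swap k (k + 1)) = 0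
      · by_cases h4 : symmetrizer (permOp q) k f w = 0
        · simp [h3, h4] at hw
        · obtain ⟨h5, h6⟩ := key w h4
          have := h6 k (by omega)
          simp [h3, h5, this] at hw
      · obtain ⟨h5, h6⟩ := key _ h3
        refine ⟨by simpa using h5, fun j hj => ?_⟩
        have := h6 j (by omega)
        rwa [Perm.mul_apply, swap_apply_of_ne_of_ne (by omega) (by omega)] at this
    rw [symmetrizer, cosetSum, LinearMap.add_apply, Pi.add_apply, h0, add_zero,
      symmetrizer_apply_one hf k]

theorem symmetrizer_permOp_ne_zero (q : F) (k : ℕ) : symmetrizer (permOp q) k ≠ 0 := by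
  classical
  intro h
  have hf : SuppLow 0 (Pi.single 1 1 : Perm ℕ → F) := by
    intro w hw j _
    obtain rfl : w = 1 := by
      by_contra hne
      exact hw (Pi.single_eq_of_ne hne 1)
    rfl
  have := symmetrizer_apply_one (q := q) hf k
  rw [h] at this
  simp at this

end PermutationModule

/-! ### Finite dimensionality -/

section Finiteness

open Module

variable {F A : Type*} [Field F] [Ring A] [Algebra F A] {q : F} {m : ℕ} {s : ℕ → A}

/-- The subspace analogue of `cosetSum`: the sum of the subspaces `s_j ⋯ s_{k-1} P`, `j ≤ k`. -/
def cosetSpan (F : Type*) {A : Type*} [Field F] [Ring A] [Algebra F A] (s : ℕ → A) :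
    ℕ → Submodule F A → Submodule F A
  | 0, P => P
  | k + 1, P => P ⊔ cosetSpan F s k (P.map (LinearMap.mulLeft F (s k)))

/-- The span of the products of coset representatives, i.e. of the standard basis elements `T_w` of
the parabolic subalgebra generated by `s_0, …, s_{k-1}`. -/
def parabolicSpan (F : Type*) {A : Type*} [Field F] [Ring A] [Algebra F A] (s : ℕ → A) :
    ℕ → Submodule F A
  | 0 => Submodule.span F {1}
  | k + 1 => cosetSpan F s (k + 1) (parabolicSpan F s k)

theorem cosetSpan_finite : ∀ (k : ℕ) (P : Submodule F A) [FiniteDimensional F P],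
    FiniteDimensional F (cosetSpan F s k P)
  | 0, P, h => h
  | k + 1, P, h => by
    have := cosetSpan_finite k (P.map (LinearMap.mulLeft F (s k)))
    exact Submodule.finiteDimensional_sup _ _

theorem parabolicSpan_finite : ∀ k : ℕ, FiniteDimensional F (parabolicSpan F s k)
  | 0 => FiniteDimensional.span_singleton F _
  | k + 1 => by
    have := parabolicSpan_finite k
    exact cosetSpan_finite _ _

theorem le_cosetSpan : ∀ (k : ℕ) (P : Submodule F A), P ≤ cosetSpan F s k P
  | 0, _ => le_rfl
  | _ + 1, _ => le_sup_left

theorem one_mem_parabolicSpan : ∀ k : ℕ, (1 : A) ∈ parabolicSpan F s k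
  | 0 => Submodule.mem_span_singleton_self _
  | k + 1 => le_cosetSpan _ _ (one_mem_parabolicSpan k)

theorem cosetSpan_mono : ∀ (k : ℕ) {P P' : Submodule F A}, P ≤ P' →
    cosetSpan F s k P ≤ cosetSpan F s k P'
  | 0, _, _, h => h
  | k + 1, _, _, h => sup_le_sup h (cosetSpan_mono k (Submodule.map_mono h))

theorem map_cosetSpan {c : A} : ∀ (k : ℕ) (P : Submodule F A),
    (∀ i, i < k → c * s i = s i * c) → (cosetSpan F s k P).map (LinearMap.mulLeft F c) =
      cosetSpan F s k (P.map (LinearMap.mulLeft F c))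
  | 0, _, _ => rfl
  | k + 1, P, hc => by
    rw [cosetSpan, cosetSpan, Submodule.map_sup, map_cosetSpan k _ fun i hi => hc i (by omega),
      ← Submodule.map_comp, ← Submodule.map_comp, ← LinearMap.mulLeft_mul, ← LinearMap.mulLeft_mul,
      hc k (by omega)]

theorem HeckeRel.map_cosetSpan_le (h : HeckeRel q m s) :
    ∀ (k : ℕ) (P : Submodule F A), k ≤ m →
      (∀ i, i + 1 < k → P.map (LinearMap.mulLeft F (s i)) ≤ P) →
      ∀ i, i < k → (cosetSpan F s k P).map (LinearMap.mulLeft F (s i)) ≤ cosetSpan F s k P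
  | 0, _, _, _, i, hi => by omega
  | k + 1, P, hk, hP, i, hi => by
    rcases Nat.lt_or_ge i k with hik | hik
    · rw [cosetSpan, Submodule.map_sup]
      refine sup_le_sup (hP i (by omega)) (h.map_cosetSpan_le k _ (by omega) (fun j hj => ?_) i hik)
      rw [← Submodule.map_comp, ← LinearMap.mulLeft_mul, h.comm j k (by omega) (by omega),
        LinearMap.mulLeft_mul, Submodule.map_comp]
      exact Submodule.map_mono (hP j (by omega))
    · obtain rfl : i = k := by omega
      have h12 : (P ⊔ P.map (LinearMap.mulLeft F (s i))).map (LinearMap.mulLeft F (s i)) ≤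
          P ⊔ P.map (LinearMap.mulLeft F (s i)) := by
        rw [Submodule.map_sup]
        refine sup_le le_sup_right ?_
        rw [← Submodule.map_comp, ← LinearMap.mulLeft_mul, h.quad i (by omega)]
        rintro _ ⟨x, hx, rfl⟩
        rw [LinearMap.mulLeft_apply, add_mul, smul_mul_assoc, smul_mul_assoc, one_mul]
        exact Submodule.add_mem _
          (Submodule.smul_mem _ _ (Submodule.mem_sup_right ⟨x, hx, rfl⟩))
          (Submodule.smul_mem _ _ (Submodule.mem_sup_left hx))
      cases i with
      | zero => exact h12
      | succ k =>
        rw [cosetSpan, cosetSpan, ← sup_assoc, Submodule.map_sup]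
        refine sup_le_sup h12 ?_
        rw [map_cosetSpan k _ fun i hi => (h.comm i (k + 1) (by omega) (by omega)).symm]
        refine cosetSpan_mono _ ?_
        rw [← Submodule.map_comp, ← Submodule.map_comp, ← LinearMap.mulLeft_mul,
          ← LinearMap.mulLeft_mul, ← h.braid k (by omega), mul_assoc, ← mul_assoc,
          LinearMap.mulLeft_mul, LinearMap.mulLeft_mul, Submodule.map_comp, Submodule.map_comp]
        exact Submodule.map_mono (Submodule.map_mono (hP k (by omega)))

theorem HeckeRel.map_parabolicSpan_le (h : HeckeRel q m s) : ∀ k : ℕ, k ≤ m → ∀ i, i < k →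
    (parabolicSpan F s k).map (LinearMap.mulLeft F (s i)) ≤ parabolicSpan F s k
  | 0, _, i, hi => by omega
  | k + 1, hk, i, hi =>
    h.map_cosetSpan_le (k + 1) _ hk
      (fun j hj => h.map_parabolicSpan_le k (by omega) j (by omega)) i hi

end Finiteness

/-! ### Ariki-Koike algebras of level one -/

section ArikiKoikeLevelOne

variable {F : Type} [Field F] {n : ℕ} {q Q₁ : F}

/-- The generator `T_{i+1}` of the level one Ariki-Koike algebra; it is `0` when `n ≤ i + 1`. -/
noncomputable def heckeGen (n : ℕ) (q Q₁ : F) (i : ℕ) : ArikiKoike F n 1 q (fun _ => Q₁) :=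
  if h : i + 1 < n then RingQuot.mkAlgHom F _ (FreeAlgebra.ι F (⟨i + 1, h⟩ : Fin n)) else 0

theorem heckeGen_of_lt {i : ℕ} (h : i + 1 < n) : heckeGen n q Q₁ i =
    RingQuot.mkAlgHom F (AKRel F n 1 q fun _ => Q₁) (FreeAlgebra.ι F (⟨i + 1, h⟩ : Fin n)) :=
  dif_pos h

theorem quad_of_factored {A : Type*} [Ring A] [Algebra F A] {g : A}
    (h : (g + 1) * (g - algebraMap F A q) = 0) : g * g = (q - 1) • g + q • (1 : A) := by
  rw [Algebra.algebraMap_eq_smul_one, mul_sub, add_mul, mul_smul_comm, mul_one, one_mul,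
    sub_eq_zero] at h
  rw [eq_sub_of_add_eq h]
  module

theorem heckeGen_rel (n : ℕ) (q Q₁ : F) : HeckeRel q (n - 1) (heckeGen n q Q₁) where
  quad i hi := by
    have h := RingQuot.mkAlgHom_rel F
      (AKRel.quadratic (F := F) (r := 1) (q := q) (Q := fun _ => Q₁) (i + 1) (by omega)
        (show i + 1 < n by omega))
    rw [map_mul, map_add, map_sub, map_one, map_zero, AlgHom.commutes,
      ← heckeGen_of_lt (by omega)] at h
    exact quad_of_factored h
  braid i hi := by
    have h := RingQuot.mkAlgHom_rel F
      (AKRel.braid (F := F) (r := 1) (q := q) (Q := fun _ => Q₁) (i + 1) (by omega)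
        (show i + 1 + 1 < n by omega))
    simpa only [map_mul, ← heckeGen_of_lt] using h
  comm i j hij hj := by
    have h := RingQuot.mkAlgHom_rel F
      (AKRel.comm (F := F) (r := 1) (q := q) (Q := fun _ => Q₁) (i + 1) (j + 1) (by omega)
        (show j + 1 < n by omega))
    rw [map_mul, map_mul, ← heckeGen_of_lt, ← heckeGen_of_lt] at h
    exact h

theorem heckeGen_subalgebra_eq_top (S : Subalgebra F (ArikiKoike F n 1 q (fun _ => Q₁)))
    (hS : ∀ i, i < n - 1 → heckeGen n q Q₁ i ∈ S) : S = ⊤ := by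
  let φ := RingQuot.mkAlgHom F (AKRel F n 1 q fun _ => Q₁)
  have hcomap : S.comap φ = ⊤ := by
    rw [eq_top_iff, ← FreeAlgebra.adjoin_range_ι, Algebra.adjoin_le_iff]
    rintro _ ⟨⟨i, hi⟩, rfl⟩
    show φ _ ∈ S
    cases i with
    | zero =>
      have h := RingQuot.mkAlgHom_rel F
        (AKRel.cyclotomic (F := F) (r := 1) (q := q) (Q := fun _ => Q₁) hi)
      have h' : φ (FreeAlgebra.ι F (⟨0, hi⟩ : Fin n)) - algebraMap F _ Q₁ = 0 := by
        simpa [List.finRange_succ] using h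
      rw [sub_eq_zero.mp h']
      exact S.algebraMap_mem _
    | succ i =>
      have := hS i (by omega)
      rwa [heckeGen_of_lt hi] at this
  rw [eq_top_iff]
  intro x _
  obtain ⟨y, rfl⟩ := RingQuot.mkAlgHom_surjective F (AKRel F n 1 q fun _ => Q₁) x
  have : y ∈ S.comap φ := by rw [hcomap]; trivial
  exact this

/-- Elements of an algebra that satisfy the Hecke relations define a representation of the level
one Ariki-Koike algebra, in which `T_0` acts by the scalar `Q₁`. -/
theorem exists_heckeLift (n : ℕ) (Q₁ : F) {A : Type*} [Ring A] [Algebra F A] {t : ℕ → A}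
    (h : HeckeRel q (n - 1) t) : ∃ ρ : ArikiKoike F n 1 q (fun _ => Q₁) →ₐ[F] A,
      ∀ i, i < n - 1 → ρ (heckeGen n q Q₁ i) = t i := by
  let g : Fin n → A := fun i => if (i : ℕ) = 0 then algebraMap F A Q₁ else t (i - 1)
  have hg : ∀ (i : ℕ) (hi : i + 1 < n), g ⟨i + 1, hi⟩ = t i := fun i hi => by simp [g]
  have hg0 : ∀ hi : 0 < n, g ⟨0, hi⟩ = algebraMap F A Q₁ := fun hi => by simp [g]
  have hrel : ∀ ⦃x y⦄, AKRel F n 1 q (fun _ => Q₁) x y →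
      FreeAlgebra.lift F g x = FreeAlgebra.lift F g y := by
    intro x y hxy
    cases hxy with
    | cyclotomic h0 => simp [List.finRange_succ, hg0 h0]
    | braid01 h1 =>
      simp only [map_mul, FreeAlgebra.lift_ι_apply, hg0]
      rw [Algebra.commutes Q₁ (g ⟨1, h1⟩), mul_assoc, Algebra.commutes Q₁ (g ⟨1, h1⟩),
        ← mul_assoc]
    | quadratic i h1 h2 =>
      obtain ⟨i, rfl⟩ : ∃ j, i = j + 1 := ⟨i - 1, by omega⟩
      simp only [map_mul, map_add, map_sub, map_one, map_zero, AlgHom.commutes,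
        FreeAlgebra.lift_ι_apply, hg]
      rw [Algebra.algebraMap_eq_smul_one, mul_sub, add_mul, h.quad i (by omega), mul_smul_comm,
        mul_one, one_mul]
      module
    | braid i h1 h2 =>
      obtain ⟨i, rfl⟩ : ∃ j, i = j + 1 := ⟨i - 1, by omega⟩
      simp only [map_mul, FreeAlgebra.lift_ι_apply, hg]
      exact h.braid i (by omega)
    | comm i j hij hj =>
      obtain ⟨j, rfl⟩ : ∃ k, j = k + 1 := ⟨j - 1, by omega⟩
      cases i with
      | zero =>
        simp only [map_mul, FreeAlgebra.lift_ι_apply, hg0]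
        exact Algebra.commutes _ _
      | succ i =>
        simp only [map_mul, FreeAlgebra.lift_ι_apply, hg]
        exact h.comm i j (by omega) (by omega)
  refine ⟨RingQuot.liftAlgHom F ⟨FreeAlgebra.lift F g, hrel⟩, fun i hi => ?_⟩
  rw [heckeGen_of_lt (show i + 1 < n by omega), RingQuot.liftAlgHom_mkAlgHom_apply,
    FreeAlgebra.lift_ι_apply, hg]

theorem arikiKoike_finite (n : ℕ) (q Q₁ : F) :
    FiniteDimensional F (ArikiKoike F n 1 q (fun _ => Q₁)) := by
  let K := parabolicSpan F (heckeGen n q Q₁) (n - 1)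
  have hK : FiniteDimensional F K := parabolicSpan_finite _
  let S : Subalgebra F (ArikiKoike F n 1 q (fun _ => Q₁)) :=
    { carrier := {h | ∀ x ∈ K, h * x ∈ K}
      mul_mem' := fun {a b} ha hb x hx => by rw [mul_assoc]; exact ha _ (hb _ hx)
      add_mem' := fun {a b} ha hb x hx => by rw [add_mul]; exact K.add_mem (ha _ hx) (hb _ hx)
      algebraMap_mem' := fun c x hx => by
        rw [Algebra.algebraMap_eq_smul_one, smul_mul_assoc, one_mul]; exact K.smul_mem _ hx }
  have hS : S = ⊤ := heckeGen_subalgebra_eq_top S fun i hi x hx =>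
    (heckeGen_rel n q Q₁).map_parabolicSpan_le (n - 1) le_rfl i hi ⟨x, hx, rfl⟩
  have hK' : K = ⊤ := by
    rw [eq_top_iff]
    intro h _
    have h1 : h ∈ S := by rw [hS]; trivial
    simpa using h1 1 (one_mem_parabolicSpan _)
  rw [hK'] at hK
  exact Module.Finite.equiv Submodule.topEquiv

theorem arikiKoike_isSemisimpleRing [IsAlgClosed F] {e : ℕ} (he : 2 ≤ e)
    (hq : IsPrimitiveRoot q e) (hn : 1 ≤ n) (hne : n < e) :
    IsSemisimpleRing (ArikiKoike F n 1 q (fun _ => Q₁)) := by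
  have := arikiKoike_finite n q Q₁
  set H := ArikiKoike F n 1 q (fun _ => Q₁)
  have hrel := heckeGen_rel n q Q₁
  have hrel' : HeckeRel q (n - 1) (fun i => LinearMap.mulLeft F (heckeGen n q Q₁ i)) := by
    refine ⟨fun i hi => ?_, fun i hi => ?_, fun i j hij hj => ?_⟩
    · ext x
      simp only [Module.End.mul_apply, LinearMap.mulLeft_apply, LinearMap.add_apply,
        LinearMap.smul_apply, Module.End.one_apply]
      rw [← mul_assoc, hrel.quad i hi, add_mul, smul_mul_assoc, smul_mul_assoc, one_mul]
    · ext x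
      simp only [Module.End.mul_apply, LinearMap.mulLeft_apply]
      simp only [← mul_assoc]
      rw [hrel.braid i hi]
    · ext x
      simp only [Module.End.mul_apply, LinearMap.mulLeft_apply]
      simp only [← mul_assoc]
      rw [hrel.comm i j hij hj]
  refine (isSemisimpleModule_iff H H).mpr ⟨fun W => ?_⟩
  obtain ⟨π, hπW, hπ1, hπs⟩ := HeckeRel.exists_projection hq he (n - 1) (by omega) hrel'
    (W.restrictScalars F) (fun i _ v hv => W.smul_mem (heckeGen n q Q₁ i) hv)
  let S : Subalgebra F H :=
    { carrier := {h | ∀ x : H, π (h * x) = h * π x}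
      mul_mem' := fun {a b} ha hb x => by rw [mul_assoc, ha, hb, mul_assoc]
      add_mem' := fun {a b} ha hb x => by rw [add_mul, map_add, ha, hb, add_mul]
      algebraMap_mem' := fun c x => by
        rw [Algebra.algebraMap_eq_smul_one, smul_mul_assoc, one_mul, map_smul, smul_mul_assoc,
          one_mul] }
  have hS : S = ⊤ := heckeGen_subalgebra_eq_top S fun i hi x =>
    (congrArg (fun g : Module.End F H => g x) (hπs i hi).eq).symm
  have hπH : ∀ h x : H, π (h * x) = h * π x := fun h x => by
    have : h ∈ S := by rw [hS]; trivial
    exact this x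
  let πH : H →ₗ[H] W :=
    { toFun := fun x => ⟨π x, hπW x⟩
      map_add' := fun x y => Subtype.ext (map_add π x y)
      map_smul' := fun h x => Subtype.ext (hπH h x) }
  exact ⟨LinearMap.ker πH, LinearMap.isCompl_of_proj (f := πH)
    fun x => Subtype.ext (hπ1 x x.2)⟩

/-- For `e ≤ n` the symmetrizer `x` is nonzero and the left ideal it generates squares to zero, so
this ideal is not generated by an idempotent. -/
theorem arikiKoike_lt_of_isSemisimpleRing {e : ℕ} (he : 2 ≤ e) (hq : IsPrimitiveRoot q e)
    (hss : IsSemisimpleRing (ArikiKoike F n 1 q (fun _ => Q₁))) : n < e := by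
  by_contra hne
  set H := ArikiKoike F n 1 q (fun _ => Q₁)
  have hrel := heckeGen_rel n q Q₁
  obtain ⟨ρ, hρ⟩ := exists_heckeLift n Q₁ (permOp_hecke q (n - 1))
  obtain ⟨χ, hχ⟩ := exists_heckeLift (q := q) n Q₁ (A := F) (t := fun _ => q)
    ⟨fun i _ => by simp only [smul_eq_mul]; ring, fun _ _ => rfl, fun _ _ _ _ => rfl⟩
  let x : H := symmetrizer (heckeGen n q Q₁) (n - 1)
  have hx0 : x ≠ 0 := by
    intro h
    apply symmetrizer_permOp_ne_zero q (n - 1)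
    have h1 : ρ x = symmetrizer (fun i => ρ (heckeGen n q Q₁ i)) (n - 1) :=
      symmetrizer_map (ρ : H →+* Module.End F (Equiv.Perm ℕ → F)) _ _
    rw [← symmetrizer_congr (n - 1) hρ, ← h1, h, map_zero]
  have hχx : χ x = 0 := by
    rw [← symmetrizer_const_eq_zero hq he (n - 1) (by omega), ← symmetrizer_congr (n - 1) hχ]
    exact symmetrizer_map (χ : H →+* F) _ _
  let S : Subalgebra F H :=
    { carrier := {h | h * x = χ h • x}
      mul_mem' := fun {a b} ha hb => by
        simp only [Set.mem_ofPred_eq] at ha hb ⊢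
        rw [mul_assoc, hb, mul_smul_comm, ha, smul_smul, map_mul, mul_comm]
      add_mem' := fun {a b} ha hb => by
        simp only [Set.mem_ofPred_eq] at ha hb ⊢
        rw [add_mul, ha, hb, map_add, add_smul]
      algebraMap_mem' := fun c => by
        simp only [Set.mem_ofPred_eq]
        rw [AlgHom.commutes, Algebra.algebraMap_eq_smul_one, smul_mul_assoc, one_mul]
        rfl }
  have hS : S = ⊤ := heckeGen_subalgebra_eq_top S fun i hi => by
    show _ * x = _ • x
    rw [hχ i hi]
    exact hrel.mul_symmetrizer (n - 1) le_rfl i hi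
  have hmul : ∀ h : H, h * x = χ h • x := fun h => by
    have : h ∈ S := by rw [hS]; trivial
    exact this
  obtain ⟨f, hf, hspan⟩ := IsSemisimpleRing.ideal_eq_span_idempotent (Ideal.span {x})
  have hfx : f ∈ Ideal.span {x} := by rw [hspan]; exact Ideal.mem_span_singleton_self f
  obtain ⟨h, rfl⟩ := Ideal.mem_span_singleton'.mp hfx
  have hf0 : h * x = 0 := by
    rw [← hf.eq, hmul h, smul_mul_smul_comm, hmul x, hχx, zero_smul, smul_zero]
  rw [hf0] at hspan
  have : x ∈ Ideal.span {(0 : H)} := by rw [← hspan]; exact Ideal.mem_span_singleton_self x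
  exact hx0 (by simpa using this)

end ArikiKoikeLevelOne

/-- If `q` is a primitive `e`-th root of unity (`e ≥ 2`), the
Iwahori-Hecke algebra `H_{n,1}(q, Q₁)` of type `A_{n-1}` is semisimple iff `n < e`. -/
theorem heckeTypeA_isSemisimpleRing_iff
    (F : Type) [Field F] [IsAlgClosed F] (n : ℕ) (hn : 1 ≤ n)
    (e : ℕ) (he : 2 ≤ e) (q : F) (hq : IsPrimitiveRoot q e) (Q₁ : F) :
    IsSemisimpleRing (ArikiKoike F n 1 q (fun _ => Q₁)) ↔ n < e := by
  exact ⟨arikiKoike_lt_of_isSemisimpleRing he hq, arikiKoike_isSemisimpleRing he hq hn⟩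
end
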